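/- Let p, q, s be distinct primes with p ≡ 5 (mod 8), q ≡ 3 (mod 8), s ≡ 3 (mod 4), (p/q) = (p/s) = 1. Then the 2-Sylow subgroup of the ideal class group of the triquadratic field ℚ(√p, √q, √s) is cyclic of order (1/2)·h₂(pqs), where h₂(pqs) is the 2-class number of ℚ(√(pqs)). -/

import Mathlib

open NumberField

/-- The triquadratic field `ℚ(√p, √q, √s)`, realized inside `ℂ`. -/
noncomputable def triquad (p q s : ℕ) : IntermediateField ℚ ℂ :=
  IntermediateField.adjoin ℚ
    {((Real.sqrt p : ℝ) : ℂ), ((Real.sqrt q : ℝ) : ℂ), ((Real.sqrt s : ℝ) : ℂ)}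

/-- The real quadratic field `ℚ(√d)`, realized inside `ℂ`. -/
noncomputable def quadF (d : ℕ) : IntermediateField ℚ ℂ :=
  IntermediateField.adjoin ℚ {((Real.sqrt d : ℝ) : ℂ)}

/-!
Write `k = ℚ(√(pqs))`, `L = ℚ(√p, √(qs))` and `K = ℚ(√p, √q, √s)`, so that `k ⊂ L ⊂ K`. All fields
in sight are totally real, and for a quadratic extension `M/E` of totally real fields Chevalley's
ambiguous class number formula bounds the number of classes of `M` fixed by the conjugation, in
terms of the class number of `E`, the number of ramified primes and the index of the units of `E`
that are norms. If only one class of 2-power order is fixed, the class number of `M` is odd; this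
holds for `ℚ(√p)`, `ℚ(√q)`, `ℚ(√(qs))`, `ℚ(√q, √s)`, `ℚ(√p, √q)` and `ℚ(√p, √s)`. When the class
number of `E` is odd, the conjugation inverts `Cl₂(M)`, so its fixed classes are those of order at
most 2, and the formula bounds the rank: `Cl₂(k)` and `Cl₂(K)` are cyclic, over `ℚ` and over
`ℚ(√q, √s)` respectively. The units that are not norms are detected by `l`-adic completions.

Upper bound. The conjugation of `L/k` is a product of two involutions of `L`, with fixed fields
`ℚ(√p)` and `ℚ(√(qs))` of odd class number. Each inverts `Cl₂(L)`, so the conjugation acts trivially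
on it, every class is ambiguous, and as `L/k` is unramified the formula gives
`2 · #Cl₂(L) ∣ #Cl₂(k)`. For `K/L` the fixed fields are `ℚ(√p, √q)` and `ℚ(√p, √s)`; at most two
primes ramify, but a unit of `ℚ(√p)` of norm `-1` is not a norm from `K`, for otherwise `-1` would
be of the form `x² - q y²` in `ℚ₂`. Hence `#Cl₂(K) ∣ #Cl₂(L)`.

Lower bound. The kernel of `Cl₂(k) → Cl₂(K)` is killed by 4, hence of order dividing 4 as `Cl₂(k)`
is cyclic; so it suffices that the map is not surjective. Dirichlet's theorem provides a prime `l`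
that splits in `ℚ(√q)` and `k` and is not a square modulo `p`, and `K` has an ideal `I` whose norm
to `ℚ(√(qs))` is `(l)`. If the class of an odd power `Iⁿ` were extended from `k`, taking norms would
give `lⁿ = u r² (x² - p y²)` with `r` rational, `x` and `y` in `ℚ(√(qs))` and `u` a unit of this
field. As `ℚ(√(qs))` embeds in `ℚ_p` and all its units become squares there, `l` would be a square
modulo `p`. Therefore `#Cl₂(k) ∣ 2 · #Cl₂(K)`.
-/

namespace TwoClassGroup

open nonZeroDivisors
open NumberField.RingOfIntegers (mapRingHom)

section CommGroup

variable {G : Type*} [CommGroup G]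

lemma two_dvd_relIndex {N E : Subgroup G} {u : G} (hu : u ∈ E) (hu2 : u ^ 2 ∈ N) (huN : u ∉ N) :
    2 ∣ N.relIndex E := by
  have hord : orderOf ((⟨u, hu⟩ : E) : E ⧸ N.subgroupOf E) = 2 := by
    refine orderOf_eq_prime ?_ ?_
    · rw [← QuotientGroup.mk_pow, QuotientGroup.eq_one_iff]
      exact hu2
    · rwa [Ne, QuotientGroup.eq_one_iff]
  rw [← hord]
  exact orderOf_dvd_natCard _

lemma mem_or_mul_mem_of_mem_sup_zpowers {N : Subgroup G} {u v : G} (hu2 : u ^ 2 ∈ N)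
    (hv : v ∈ N ⊔ Subgroup.zpowers u) : v ∈ N ∨ u * v ∈ N := by
  obtain ⟨n, hn, _, ⟨k, rfl⟩, rfl⟩ := Subgroup.mem_sup.1 hv
  obtain ⟨m, rfl | rfl⟩ := Int.even_or_odd' k
  · left
    simpa [zpow_mul] using mul_mem hn (zpow_mem hu2 m)
  · right
    have hprod : u * (n * u ^ (2 * m + 1)) = n * (u ^ 2) ^ (m + 1) := by
      rw [mul_left_comm, ← zpow_one_add, ← zpow_natCast, ← zpow_mul]
      congr 2
      push_cast
      ring
    simpa only [hprod] using mul_mem hn (zpow_mem hu2 (m + 1))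

lemma four_dvd_relIndex {N E : Subgroup G} {u v : G} (hu : u ∈ E) (hv : v ∈ E) (hu2 : u ^ 2 ∈ N)
    (hv2 : v ^ 2 ∈ N) (huN : u ∉ N) (hvN : v ∉ N) (huvN : u * v ∉ N) : 4 ∣ N.relIndex E := by
  have hle : N ⊓ E ⊔ Subgroup.zpowers u ≤ E := sup_le inf_le_right (Subgroup.zpowers_le.2 hu)
  have hu2' : u ^ 2 ∈ N ⊓ E := ⟨hu2, pow_mem hu 2⟩
  have hv2' : v ^ 2 ∈ N ⊓ E := ⟨hv2, pow_mem hv 2⟩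
  have hvM : v ∉ N ⊓ E ⊔ Subgroup.zpowers u := fun h ↦
    (mem_or_mul_mem_of_mem_sup_zpowers hu2' h).elim (hvN ·.1) (huvN ·.1)
  rw [← Subgroup.inf_relIndex_right, ← Subgroup.relIndex_mul_relIndex _ _ _ le_sup_left hle]
  exact mul_dvd_mul (a := 2) (c := 2)
    (two_dvd_relIndex (Subgroup.mem_sup_right (Subgroup.mem_zpowers u)) hu2' (huN ·.1))
    (two_dvd_relIndex hv (Subgroup.mem_sup_left hv2') hvM)

lemma relIndex_dvd_pow_card_of_le_sup_closure {H L : Subgroup G} {n : ℕ} (S : Finset G)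
    (hS : ∀ g ∈ S, g ^ n ∈ H) (hHL : H ≤ L) (hL : L ≤ H ⊔ Subgroup.closure (S : Set G)) :
    H.relIndex L ∣ n ^ S.card := by
  set C := Subgroup.closure (S : Set G)
  have hquot : ∀ x : C ⧸ H.subgroupOf C, x ^ n = 1 := by
    rintro ⟨x, hx⟩
    refine (QuotientGroup.eq_one_iff (N := H.subgroupOf C) (⟨x, hx⟩ ^ n : C)).2 ?_
    exact (Subgroup.closure_le (H.comap (powMonoidHom n : G →* G))).2 hS hx
  have hrank : Group.rank (C ⧸ H.subgroupOf C) ≤ S.card :=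
    (Group.rank_le_of_surjective _ (QuotientGroup.mk'_surjective _)).trans
      (Subgroup.rank_closure_finset_le_card S)
  calc H.relIndex L ∣ H.relIndex (H ⊔ C) := by
        rw [← Subgroup.relIndex_mul_relIndex H L _ hHL hL]
        exact dvd_mul_right _ _
    _ = Nat.card (C ⧸ H.subgroupOf C) := Subgroup.relIndex_sup_left _ _
    _ ∣ n ^ Group.rank (C ⧸ H.subgroupOf C) := card_dvd_exponent_pow_rank' _ hquot
    _ ∣ n ^ S.card := pow_dvd_pow n hrank

lemma relIndex_map_range {H : Type*} [CommGroup H] (φ : G →* H) (A : Subgroup G) :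
    (A.map φ).relIndex φ.range = (A ⊔ φ.ker).index := by
  rw [MonoidHom.range_eq_map, Subgroup.relIndex_map_map, top_sup_eq, Subgroup.relIndex_top_right]

lemma relIndex_sup_sup_mul_card_inf {A A' B B' : Subgroup G} (hA : A' ≤ A) (hB : B' ≤ B)
    (hdisj : A ⊓ B' = ⊥) :
    (A' ⊔ B').relIndex (A ⊔ B) * Nat.card (A ⊓ B : Subgroup G) =
      A'.relIndex A * B'.relIndex B := by
  have hleft : (A' ⊔ B').relIndex (A ⊔ B') = A'.relIndex A := by
    rw [show A ⊔ B' = (A' ⊔ B') ⊔ A by rw [sup_right_comm, sup_eq_right.2 hA],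
      Subgroup.relIndex_sup_left, ← Subgroup.inf_relIndex_right, sup_inf_assoc_of_le _ hA,
      inf_comm, hdisj, sup_bot_eq]
  have hright : (A ⊔ B').relIndex (A ⊔ B) = (B' ⊔ A ⊓ B).relIndex B := by
    rw [show A ⊔ B = (A ⊔ B') ⊔ B by rw [sup_assoc, sup_eq_right.2 hB],
      Subgroup.relIndex_sup_left, ← Subgroup.inf_relIndex_right, sup_comm A,
      sup_inf_assoc_of_le _ hB]
  have hcard : B'.relIndex (B' ⊔ A ⊓ B) = Nat.card (A ⊓ B : Subgroup G) := by
    rw [Subgroup.relIndex_sup_left, ← Subgroup.inf_relIndex_right, ← Subgroup.relIndex_bot_left]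
    congr 1
    exact le_bot_iff.1 ((inf_le_inf_left _ inf_le_left).trans (inf_comm B' A ▸ hdisj.le))
  rw [← Subgroup.relIndex_mul_relIndex _ _ _ (sup_le_sup_right hA B') (sup_le_sup_left hB A), hleft,
    hright, mul_assoc, mul_comm (Subgroup.relIndex _ B), ← hcard,
    Subgroup.relIndex_mul_relIndex _ _ _ le_sup_left (sup_le hB inf_le_right)]

end CommGroup

section PrimaryComponent

open CommGroup (primaryComponent)

variable {G : Type*} [CommGroup G] {p : ℕ}

lemma sylow_eq_primaryComponent [Fact p.Prime] (P : Sylow p G) :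
    (P : Subgroup G) = primaryComponent G p := by
  refine (P.is_maximal' CommGroup.primaryComponent.isPGroup fun x hx ↦ ?_).symm
  obtain ⟨n, hn⟩ := P.isPGroup' ⟨x, hx⟩
  exact ⟨n, congrArg Subtype.val hn⟩

lemma pow_dvd_card_primaryComponent [Finite G] [Fact p.Prime] {n : ℕ} (h : p ^ n ∣ Nat.card G) :
    p ^ n ∣ Nat.card (primaryComponent G p) := by
  obtain ⟨P⟩ : Nonempty (Sylow p G) := inferInstance
  rw [← sylow_eq_primaryComponent P, Sylow.card_eq_multiplicity]
  exact pow_dvd_pow p ((Fact.out : p.Prime).pow_dvd_iff_le_factorization Nat.card_pos.ne' |>.1 h)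

lemma eq_one_of_mem_primaryComponent_of_pow_eq_one {c : G} (hc : c ∈ primaryComponent G p) {n : ℕ}
    (hn : p.Coprime n) (hcn : c ^ n = 1) : c = 1 := by
  obtain ⟨k, hk⟩ := hc
  have hgcd := Nat.dvd_gcd (orderOf_dvd_of_pow_eq_one hk) (orderOf_dvd_of_pow_eq_one hcn)
  rwa [(hn.pow_left k).gcd_eq_one, Nat.dvd_one, orderOf_eq_one_iff] at hgcd

lemma card_ker_pow_prime_pow_le [Finite G] (h : Nat.card (powMonoidHom p : G →* G).ker ≤ p)
    (k : ℕ) : Nat.card (powMonoidHom (p ^ k) : G →* G).ker ≤ p ^ k := by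
  induction k with
  | zero =>
    simp
  | succ k ih =>
    set H := (powMonoidHom (p ^ (k + 1)) : G →* G).ker
    have himage : H.map (powMonoidHom p) ≤ (powMonoidHom (p ^ k) : G →* G).ker := by
      rintro _ ⟨x, hx, rfl⟩
      simpa [← pow_mul, ← pow_succ'] using (show x ^ p ^ (k + 1) = 1 from hx)
    have hcard : Nat.card (H ⊓ (powMonoidHom p : G →* G).ker : Subgroup G) *
        Nat.card (H.map (powMonoidHom p)) = Nat.card H := by
      rw [← Subgroup.relIndex_ker, ← Subgroup.inf_relIndex_left, ← Subgroup.relIndex_bot_left,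
        ← Subgroup.relIndex_bot_left, Subgroup.relIndex_mul_relIndex _ _ _ bot_le inf_le_left]
    rw [← hcard, pow_succ']
    exact Nat.mul_le_mul ((Subgroup.card_le_of_le inf_le_right).trans h)
      ((Subgroup.card_le_of_le himage).trans ih)

lemma isCyclic_primaryComponent [Finite G] [Fact p.Prime]
    (h : Nat.card (powMonoidHom p : G →* G).ker ≤ p) : IsCyclic (primaryComponent G p) := by
  obtain ⟨g, hg⟩ := Monoid.exists_orderOf_eq_exponent
    (Monoid.ExponentExists.of_finite (G := primaryComponent G p))
  obtain ⟨k, hk⟩ := g.2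
  have hle : primaryComponent G p ≤ (powMonoidHom (orderOf g) : G →* G).ker := fun x hx ↦ by
    have := Monoid.pow_exponent_eq_one (⟨x, hx⟩ : primaryComponent G p)
    rw [← hg] at this
    exact congrArg Subtype.val this
  obtain ⟨m, -, hm⟩ := (Nat.dvd_prime_pow Fact.out).1
    (orderOf_dvd_of_pow_eq_one (Subtype.ext hk : g ^ p ^ k = 1))
  refine isCyclic_of_card_le_orderOf g ?_
  rw [hm] at hle ⊢
  exact (Subgroup.card_le_of_le hle).trans (card_ker_pow_prime_pow_le h m)

end PrimaryComponent

/-! ### Involutions of commutative groups -/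

section Involution

variable {X : Type*} [CommGroup X]

/-- The norm `x ↦ x * s x` attached to an endomorphism `s`, thought of as the generator of a group
of order two acting on `X`. -/
def normHom (s : X →* X) : X →* X := MonoidHom.id X * s

/-- The map `x ↦ s x / x`, which measures how far `s` is from fixing `x`. -/
def diffHom (s : X →* X) : X →* X := s / MonoidHom.id X

/-- The subgroup of elements fixed by `s`, as the kernel of `diffHom s`. -/
def fixedPoints (s : X →* X) : Subgroup X := (diffHom s).ker

variable {s : X →* X} {x : X}

@[simp] lemma normHom_apply (s : X →* X) (x : X) : normHom s x = x * s x := rfl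

@[simp] lemma diffHom_apply (s : X →* X) (x : X) : diffHom s x = s x / x := rfl

lemma mem_fixedPoints : x ∈ fixedPoints s ↔ s x = x := div_eq_one

lemma mem_ker_normHom : x ∈ (normHom s).ker ↔ s x = x⁻¹ := by
  rw [MonoidHom.mem_ker, normHom_apply, mul_eq_one_iff_inv_eq, eq_comm]

lemma normHom_mem_fixedPoints (hs : Function.Involutive s) (x : X) :
    normHom s x ∈ fixedPoints s := by
  rw [mem_fixedPoints, normHom_apply, map_mul, hs, mul_comm]

lemma diffHom_mem_ker_normHom (hs : Function.Involutive s) (x : X) :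
    diffHom s x ∈ (normHom s).ker := by
  rw [mem_ker_normHom, diffHom_apply, map_div, hs, inv_div]

lemma range_normHom_le (hs : Function.Involutive s) : (normHom s).range ≤ fixedPoints s := by
  rintro _ ⟨x, rfl⟩
  exact normHom_mem_fixedPoints hs x

lemma range_diffHom_le (hs : Function.Involutive s) : (diffHom s).range ≤ (normHom s).ker := by
  rintro _ ⟨x, rfl⟩
  exact diffHom_mem_ker_normHom hs x

lemma map_normHom_fixedPoints :
    (fixedPoints s).map (normHom s) = (fixedPoints s).map (powMonoidHom 2) :=
  SetLike.coe_injective <| Set.image_congr fun x hx ↦ by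
    rw [normHom_apply, mem_fixedPoints.1 hx, powMonoidHom_apply, pow_two]

lemma map_diffHom_ker_normHom :
    (normHom s).ker.map (diffHom s) = (normHom s).ker.map (powMonoidHom 2) := by
  ext y
  constructor <;>
  · rintro ⟨x, hx, rfl⟩
    exact ⟨x⁻¹, inv_mem hx, by simp [mem_ker_normHom.1 hx, pow_two, div_eq_mul_inv]⟩

lemma range_powMonoidHom_two_le (hs : Function.Involutive s) :
    (powMonoidHom 2 : X →* X).range ≤ fixedPoints s ⊔ (normHom s).ker := by
  rintro _ ⟨x, rfl⟩
  have hx : powMonoidHom 2 x = normHom s x * (diffHom s x)⁻¹ := by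
    rw [normHom_apply, diffHom_apply, inv_div, mul_mul_div_cancel, powMonoidHom_apply, pow_two]
  rw [hx]
  exact Subgroup.mul_mem_sup (normHom_mem_fixedPoints hs x)
    (inv_mem (diffHom_mem_ker_normHom hs x))

lemma fixedPoints_inf_ker_normHom :
    fixedPoints s ⊓ (normHom s).ker = (powMonoidHom 2 : X →* X).ker ⊓ fixedPoints s := by
  ext x
  simp only [Subgroup.mem_inf, and_comm (a := x ∈ fixedPoints s)]
  refine and_congr_left fun hx ↦ ?_
  rw [MonoidHom.mem_ker, MonoidHom.mem_ker, normHom_apply, mem_fixedPoints.1 hx,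
    powMonoidHom_apply, pow_two]

lemma odd_card_of_odd_card_fixedPoints [Finite X] (hs : Function.Involutive s)
    (h : Odd (Nat.card (fixedPoints s))) : Odd (Nat.card X) := by
  classical
  have : Fintype X := Fintype.ofFinite X
  have hmod := Equiv.Perm.card_fixedPoints_modEq (f := (s : X → X)) (p := 2) (n := 1)
    (funext hs)
  rw [← Nat.card_eq_fintype_card, ← Nat.card_eq_fintype_card] at hmod
  rw [Nat.odd_iff] at h ⊢
  rw [← h]
  refine hmod.trans (congrArg (· % 2) (Nat.card_congr (Equiv.subtypeEquivRight fun x ↦ ?_)))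
  exact mem_fixedPoints.symm

lemma relIndex_map_self {φ : X →* X} {H : Subgroup X} (hker : φ.ker ≤ H) (hrange : φ.range ≤ H)
    (hH : H.index ≠ 0) : (H.map φ).relIndex H = φ.range.index := by
  have hle : H.map φ ≤ φ.range := Subgroup.map_le_range _ _
  have hindex := (Subgroup.relIndex_mul_index (hle.trans hrange)).trans
    (Subgroup.relIndex_mul_index hle).symm
  rw [relIndex_map_range, sup_eq_left.2 hker, mul_comm] at hindex
  exact Nat.eq_of_mul_eq_mul_left hH.bot_lt hindex

lemma relIndex_range_normHom_mul_index (hs : Function.Involutive s) :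
    (normHom s).range.relIndex (fixedPoints s) * (fixedPoints s ⊔ (normHom s).ker).index =
      ((fixedPoints s).map (powMonoidHom 2)).relIndex (fixedPoints s) := by
  rw [← relIndex_map_range, ← map_normHom_fixedPoints, mul_comm,
    Subgroup.relIndex_mul_relIndex _ _ _ (Subgroup.map_le_range _ _) (range_normHom_le hs)]

lemma relIndex_range_diffHom_mul_index (hs : Function.Involutive s) :
    (diffHom s).range.relIndex (normHom s).ker * (fixedPoints s ⊔ (normHom s).ker).index =
      ((normHom s).ker.map (powMonoidHom 2)).relIndex (normHom s).ker := by
  rw [sup_comm, fixedPoints, ← relIndex_map_range, ← map_diffHom_ker_normHom, mul_comm,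
    Subgroup.relIndex_mul_relIndex _ _ _ (Subgroup.map_le_range _ _) (range_diffHom_le hs)]

lemma card_ker_mul_index_range_powMonoidHom_two (hs : Function.Involutive s)
    (hfix : (powMonoidHom 2 : X →* X).ker ≤ fixedPoints s)
    (hdisj : Disjoint (powMonoidHom 2 : X →* X).range (powMonoidHom 2 : X →* X).ker)
    (hindex : (powMonoidHom 2 : X →* X).range.index ≠ 0) :
    (powMonoidHom 2 : X →* X).range.index * Nat.card (powMonoidHom 2 : X →* X).ker =
      ((fixedPoints s).map (powMonoidHom 2)).relIndex (fixedPoints s) *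
        ((normHom s).ker.map (powMonoidHom 2)).relIndex (normHom s).ker := by
  have hpow_le (H : Subgroup X) : H.map (powMonoidHom 2) ≤ H := by
    rintro _ ⟨x, hx, rfl⟩
    exact pow_mem hx 2
  have hinf : fixedPoints s ⊓ (normHom s).ker = (powMonoidHom 2 : X →* X).ker :=
    fixedPoints_inf_ker_normHom.trans (inf_eq_left.2 hfix)
  have hdisj' : fixedPoints s ⊓ (normHom s).ker.map (powMonoidHom 2) = ⊥ := by
    rw [← inf_eq_right.2 (hpow_le (normHom s).ker), ← inf_assoc, hinf, inf_comm]
    exact (hdisj.mono_left (Subgroup.map_le_range _ _)).eq_bot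
  have hsup := range_powMonoidHom_two_le hs
  have hmap := relIndex_map_self (hfix.trans le_sup_left) hsup
    (ne_zero_of_dvd_ne_zero hindex (Subgroup.index_dvd_of_le hsup))
  rw [← hmap, Subgroup.map_sup, ← hinf,
    relIndex_sup_sup_mul_card_inf (hpow_le _) (hpow_le _) hdisj']

/-- The Herbrand quotient of an involution, computed from the indices of the squares. -/
theorem card_ker_powMonoidHom_two_mul_relIndex (hs : Function.Involutive s)
    (hfix : (powMonoidHom 2 : X →* X).ker ≤ fixedPoints s)
    (hdisj : Disjoint (powMonoidHom 2 : X →* X).range (powMonoidHom 2 : X →* X).ker)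
    (hindex : (powMonoidHom 2 : X →* X).range.index ≠ 0)
    (hsq : ((fixedPoints s).map (powMonoidHom 2)).relIndex (fixedPoints s) ^ 2 =
      (powMonoidHom 2 : X →* X).range.index) :
    Nat.card (powMonoidHom 2 : X →* X).ker * (normHom s).range.relIndex (fixedPoints s) =
      (diffHom s).range.relIndex (normHom s).ker := by
  have hprod := card_ker_mul_index_range_powMonoidHom_two hs hfix hdisj hindex
  rw [← hsq] at hindex
  rw [← hsq, pow_two, mul_assoc] at hprod
  have hfixed := relIndex_range_normHom_mul_index hs
  have hker := Nat.eq_of_mul_eq_mul_left (pow_ne_zero_iff two_ne_zero |>.1 hindex).bot_lt hprod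
  rw [← relIndex_range_diffHom_mul_index hs, ← hfixed] at hker
  rw [← hfixed] at hindex
  refine Nat.eq_of_mul_eq_mul_right
    (right_ne_zero_of_mul (pow_ne_zero_iff two_ne_zero |>.1 hindex)).bot_lt ?_
  rw [← hker]
  ring

end Involution

section Transfer

variable {X Y : Type*} [CommGroup X] [CommGroup Y] {φ : Y →* X} {s : X →* X} {s' : Y →* Y}

lemma normHom_comp (hφ : ∀ y, s (φ y) = φ (s' y)) :
    (normHom s).comp φ = φ.comp (normHom s') := by
  ext y
  simp [hφ]

lemma diffHom_comp (hφ : ∀ y, s (φ y) = φ (s' y)) :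
    (diffHom s).comp φ = φ.comp (diffHom s') := by
  ext y
  simp [hφ]

lemma relIndex_map_range_inf_ker (hinj : Function.Injective φ) {g h : X →* X} {g' h' : Y →* Y}
    (hg : g.comp φ = φ.comp g') (hh : h.comp φ = φ.comp h') :
    (φ.range.map g).relIndex (φ.range ⊓ h.ker) = g'.range.relIndex h'.ker := by
  rw [MonoidHom.map_range, hg, MonoidHom.range_comp, ← Subgroup.map_comap_eq,
    MonoidHom.comap_ker, hh, MonoidHom.ker_comp_of_injective _ _ hinj,
    Subgroup.relIndex_map_map_of_injective _ _ hinj]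

end Transfer

/-! ### The ambiguous class number formula for an involution -/

section Ambiguous

variable {X I : Type*} [CommGroup X] [CommGroup I] {s : X →* X} {S : I →* I} {δ : X →* I}

lemma map_diffHom_range (hδ : ∀ x, S (δ x) = δ (s x)) :
    δ.range.map (diffHom S) = (diffHom s).range.map δ := by
  rw [← MonoidHom.range_comp, ← MonoidHom.range_comp, diffHom_comp hδ]

lemma comap_fixedPoints (hδ : ∀ x, S (δ x) = δ (s x)) :
    (fixedPoints S).comap δ = δ.ker.comap (diffHom s) := by
  rw [fixedPoints, MonoidHom.comap_ker, MonoidHom.comap_ker, diffHom_comp hδ]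

lemma relIndex_comap_diffHom (hδ : ∀ x, S (δ x) = δ (s x)) :
    (fixedPoints S ⊔ δ.range).relIndex (δ.range.comap (diffHom S)) =
      ((diffHom s).range ⊔ δ.ker).relIndex ((diffHom S).range.comap δ) :=
  calc (fixedPoints S ⊔ δ.range).relIndex (δ.range.comap (diffHom S))
      = (δ.range.map (diffHom S)).relIndex (δ.range ⊓ (diffHom S).range) := by
        rw [inf_comm, ← Subgroup.map_comap_eq, Subgroup.relIndex_map_map, sup_comm]
        congr 1
        exact (sup_eq_left.2 (Subgroup.ker_le_comap _ _)).symm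
    _ = ((diffHom s).range.map δ).relIndex (((diffHom S).range.comap δ).map δ) := by
        rw [Subgroup.map_comap_eq, map_diffHom_range hδ]
    _ = _ := by rw [Subgroup.relIndex_map_map, sup_eq_left.2 (Subgroup.ker_le_comap _ _)]

lemma relIndex_comap_diffHom_dvd (hs : Function.Involutive s) (hS : Function.Involutive S)
    (hδ : ∀ x, S (δ x) = δ (s x)) (hilbert90 : (normHom s).ker ≤ (diffHom s).range) :
    (fixedPoints S ⊔ δ.range).relIndex (δ.range.comap (diffHom S)) ∣
      (δ.ker.map (normHom s)).relIndex (δ.ker ⊓ fixedPoints s ⊓ (normHom s).range) := by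
  set W := (diffHom S).range.comap δ
  have hker : (normHom s).ker = (diffHom s).range := hilbert90.antisymm (range_diffHom_le hs)
  have hkerW : (normHom s).ker ≤ W := by
    rw [hker, ← Subgroup.map_le_iff_le_comap, ← map_diffHom_range hδ]
    exact Subgroup.map_le_range _ _
  have hEW : δ.ker.map (normHom s) ≤ W.map (normHom s) :=
    Subgroup.map_mono (Subgroup.ker_le_comap _ _)
  have hW : W.map (normHom s) ≤ δ.ker ⊓ fixedPoints s ⊓ (normHom s).range := by
    rintro _ ⟨x, hx, rfl⟩
    refine ⟨⟨?_, normHom_mem_fixedPoints hs x⟩, x, rfl⟩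
    have hnorm : normHom S (δ x) = 1 := range_diffHom_le hS hx
    rwa [normHom_apply, hδ, ← map_mul] at hnorm
  calc (fixedPoints S ⊔ δ.range).relIndex (δ.range.comap (diffHom S))
      = (δ.ker.map (normHom s)).relIndex (W.map (normHom s)) := by
        rw [relIndex_comap_diffHom hδ, Subgroup.relIndex_map_map, hker, sup_comm, ← hker,
          sup_eq_left.2 hkerW]
    _ ∣ _ := by
        rw [← Subgroup.relIndex_mul_relIndex _ _ _ hEW hW]
        exact dvd_mul_right _ _

lemma relIndex_map_fixedPoints (hs : Function.Involutive s) (hδ : ∀ x, S (δ x) = δ (s x))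
    (hilbert90 : (normHom s).ker ≤ (diffHom s).range) :
    ((fixedPoints s).map δ).relIndex (δ.range ⊓ fixedPoints S) =
      (δ.ker.map (diffHom s)).relIndex (δ.ker ⊓ (normHom s).ker) := by
  have hker : (normHom s).ker = (diffHom s).range := hilbert90.antisymm (range_diffHom_le hs)
  have hδker : δ.ker ≤ δ.ker.comap (diffHom s) :=
    (Subgroup.ker_le_comap δ (fixedPoints S)).trans_eq (comap_fixedPoints hδ)
  rw [← Subgroup.map_comap_eq, comap_fixedPoints hδ, Subgroup.relIndex_map_map, hker, inf_comm,
    ← Subgroup.map_comap_eq, Subgroup.relIndex_map_map, sup_eq_left.2 hδker,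
    sup_eq_left.2 (Subgroup.ker_le_comap _ _), sup_comm, fixedPoints]

theorem ambiguous_dvd (hs : Function.Involutive s) (hS : Function.Involutive S)
    (hδ : ∀ x, S (δ x) = δ (s x)) (hilbert90 : (normHom s).ker ≤ (diffHom s).range)
    {J : Subgroup I} (hJ : J ≤ fixedPoints S) (hle : (fixedPoints s).map δ ≤ J) {c : ℕ}
    (herbrand : c * (δ.ker.map (normHom s)).relIndex (δ.ker ⊓ fixedPoints s) =
      (δ.ker.map (diffHom s)).relIndex (δ.ker ⊓ (normHom s).ker)) :
    c * δ.range.relIndex (δ.range.comap (diffHom S)) *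
        (normHom s).range.relIndex (δ.ker ⊓ fixedPoints s) ∣
      ((fixedPoints s).map δ).relIndex J * J.relIndex (fixedPoints S) := by
  have hrange : δ.range ≤ δ.range.comap (diffHom S) := by
    rw [← Subgroup.map_le_iff_le_comap, map_diffHom_range hδ]
    exact Subgroup.map_le_range _ _
  have hnorm : δ.ker.map (normHom s) ≤ δ.ker ⊓ fixedPoints s ⊓ (normHom s).range := by
    rintro _ ⟨x, hx, rfl⟩
    refine ⟨⟨?_, normHom_mem_fixedPoints hs x⟩, x, rfl⟩
    have hx' : δ x = 1 := hx
    exact MonoidHom.mem_ker.2 (by rw [normHom_apply, map_mul, ← hδ, hx', map_one, one_mul])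
  have hrangeIndex : δ.range.relIndex (δ.range.comap (diffHom S)) = δ.range.relIndex
      (fixedPoints S) * (fixedPoints S ⊔ δ.range).relIndex (δ.range.comap (diffHom S)) := by
    rw [← Subgroup.relIndex_mul_relIndex _ _ _ le_sup_right
      (sup_le (Subgroup.ker_le_comap _ _) hrange), Subgroup.relIndex_sup_right]
    rfl
  have hfixed : ((fixedPoints s).map δ).relIndex J * J.relIndex (fixedPoints S) =
      (δ.ker.map (diffHom s)).relIndex (δ.ker ⊓ (normHom s).ker) *
        δ.range.relIndex (fixedPoints S) := by
    rw [← relIndex_map_fixedPoints hs hδ hilbert90, ← Subgroup.inf_relIndex_right δ.range,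
      Subgroup.relIndex_mul_relIndex _ _ _ hle hJ, Subgroup.relIndex_mul_relIndex _ _ _
        (le_inf (Subgroup.map_le_range _ _) (hle.trans hJ)) inf_le_right]
  have hunits : (δ.ker.map (normHom s)).relIndex (δ.ker ⊓ fixedPoints s ⊓ (normHom s).range) *
      (normHom s).range.relIndex (δ.ker ⊓ fixedPoints s) =
      (δ.ker.map (normHom s)).relIndex (δ.ker ⊓ fixedPoints s) := by
    rw [← Subgroup.inf_relIndex_left (δ.ker ⊓ fixedPoints s),
      Subgroup.relIndex_mul_relIndex _ _ _ hnorm inf_le_left]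
  obtain ⟨d, hd⟩ := relIndex_comap_diffHom_dvd hs hS hδ hilbert90
  rw [hfixed, ← herbrand, ← hunits, hrangeIndex, hd]
  exact ⟨d, by ring⟩

end Ambiguous

/-! ### Functoriality of ideals and classes -/

section RingHom

variable {F K : Type*} [Field F] [Field K] (f : F →+* K)

lemma mapRingHom_injective : Function.Injective (mapRingHom f) := fun _ _ h ↦
  RingOfIntegers.ext (f.injective (congrArg ((↑) : 𝓞 K → K) h))

lemma nonZeroDivisors_le_comap_mapRingHom : (𝓞 F)⁰ ≤ (𝓞 K)⁰.comap (mapRingHom f) :=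
  nonZeroDivisors_le_comap_nonZeroDivisors_of_injective _ (mapRingHom_injective f)

lemma map_mapRingHom_ne_bot {I : Ideal (𝓞 F)} (hI : I ≠ ⊥) : I.map (mapRingHom f) ≠ ⊥ :=
  (Ideal.map_eq_bot_iff_of_injective (mapRingHom_injective f)).not.2 hI

end RingHom

section IdealMap

/-- The group of invertible fractional ideals of a number field. -/
abbrev IdealGroup (K : Type*) [Field K] : Type _ := (FractionalIdeal (𝓞 K)⁰ K)ˣ

variable {F K M : Type*} [Field F] [NumberField F] [Field K] [NumberField K]
  [Field M] [NumberField M]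

lemma isLocalization_map_mapRingHom (f : F →+* K) :
    IsLocalization.map K (mapRingHom f) (nonZeroDivisors_le_comap_mapRingHom f) = f :=
  IsLocalization.ringHom_ext (𝓞 F)⁰ (by ext x; simp)

/-- Extension of fractional ideals along a homomorphism of number fields. The homomorphism is
explicit, so that field automorphisms and several embeddings of one field are covered. -/
noncomputable def idealMap (f : F →+* K) : IdealGroup F →* IdealGroup K :=
  Units.map (FractionalIdeal.extendedHom' K (nonZeroDivisors_le_comap_mapRingHom f)).toMonoidHom

lemma coe_idealMap (f : F →+* K) (a : IdealGroup F) :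
    (idealMap f a : FractionalIdeal (𝓞 K)⁰ K) =
      (a : FractionalIdeal (𝓞 F)⁰ F).extended K (nonZeroDivisors_le_comap_mapRingHom f) := rfl

lemma idealMap_toPrincipalIdeal (f : F →+* K) (x : Fˣ) :
    idealMap f (toPrincipalIdeal (𝓞 F) F x) =
      toPrincipalIdeal (𝓞 K) K (Units.map (f : F →* K) x) := by
  apply Units.ext
  rw [coe_idealMap, coe_toPrincipalIdeal, coe_toPrincipalIdeal,
    FractionalIdeal.extended_spanSingleton, isLocalization_map_mapRingHom]
  rfl

lemma idealMap_idealMap (f : F →+* K) (g : K →+* M) (a : IdealGroup F) :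
    idealMap g (idealMap f a) = idealMap (g.comp f) a := by
  apply Units.ext
  rw [coe_idealMap, coe_idealMap, coe_idealMap, FractionalIdeal.extended_extended]
  rfl

lemma idealMap_id (a : IdealGroup F) : idealMap (RingHom.id F) a = a := by
  apply Units.ext
  ext x
  rw [coe_idealMap, FractionalIdeal.mem_extended_iff, isLocalization_map_mapRingHom,
    RingHom.coe_id, Set.image_id]
  exact SetLike.ext_iff.1 (Submodule.span_eq (a : Submodule (𝓞 F) F)) x

lemma idealMap_injective (f : F →+* K) : Function.Injective (idealMap f) := by
  let _ := f.toAlgebra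
  exact fun a b h ↦ Units.ext <|
    FractionalIdeal.extendedHom_injective (𝓞 F) F K (𝓞 K) (congrArg Units.val h)

/-- The class of an invertible fractional ideal. -/
noncomputable abbrev idealClass (K : Type*) [Field K] [NumberField K] :
    IdealGroup K →* ClassGroup (𝓞 K) :=
  ClassGroup.mk K

lemma idealClass_surjective : Function.Surjective (idealClass K) := fun c ↦ by
  obtain ⟨I, rfl⟩ := ClassGroup.mk0_surjective c
  exact ⟨FractionalIdeal.mk0 K I, ClassGroup.mk_mk0 K I⟩

lemma ker_idealClass : (idealClass K).ker = (toPrincipalIdeal (𝓞 K) K).range := by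
  ext I
  rw [MonoidHom.mem_ker, ClassGroup.mk_eq_one_iff, mem_principal_ideals_iff]
  simp only [FractionalIdeal.isPrincipal_iff, eq_comm]

lemma ker_idealClass_le (f : F →+* K) :
    (idealClass F).ker ≤ ((idealClass K).comp (idealMap f)).ker := by
  rw [ker_idealClass]
  rintro _ ⟨x, rfl⟩
  rw [MonoidHom.mem_ker, MonoidHom.comp_apply, idealMap_toPrincipalIdeal, ← MonoidHom.mem_ker,
    ker_idealClass]
  exact ⟨_, rfl⟩

/-- The homomorphism of class groups induced by extension of ideals. -/
noncomputable def classMap (f : F →+* K) : ClassGroup (𝓞 F) →* ClassGroup (𝓞 K) :=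
  (idealClass F).liftOfSurjective idealClass_surjective
    ⟨(idealClass K).comp (idealMap f), ker_idealClass_le f⟩

lemma classMap_idealClass (f : F →+* K) (a : IdealGroup F) :
    classMap f (idealClass F a) = idealClass K (idealMap f a) :=
  (idealClass F).liftOfRightInverse_comp_apply _ _
    ⟨(idealClass K).comp (idealMap f), ker_idealClass_le f⟩ a

lemma classMap_classMap (f : F →+* K) (g : K →+* M) (c : ClassGroup (𝓞 F)) :
    classMap g (classMap f c) = classMap (g.comp f) c := by
  obtain ⟨a, rfl⟩ := idealClass_surjective c
  simp only [classMap_idealClass, idealMap_idealMap]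

lemma classMap_id (c : ClassGroup (𝓞 F)) : classMap (RingHom.id F) c = c := by
  obtain ⟨a, rfl⟩ := idealClass_surjective c
  rw [classMap_idealClass, idealMap_id]

lemma map_mapRingHom_injective (f : F →+* K) :
    Function.Injective (Ideal.map (mapRingHom f)) := by
  let _ := f.toAlgebra
  intro I I' h
  refine FractionalIdeal.coeIdeal_injective (K := F)
    (FractionalIdeal.extendedHom_injective (𝓞 F) F K (𝓞 K) ?_)
  beta_reduce
  rw [FractionalIdeal.extendedHom_coeIdeal_eq_map, FractionalIdeal.extendedHom_coeIdeal_eq_map]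
  exact congrArg _ h

lemma map_mapRingHom_le_iff (f : F →+* K) {I I' : Ideal (𝓞 F)} :
    I.map (mapRingHom f) ≤ I'.map (mapRingHom f) ↔ I ≤ I' := by
  rw [← sup_eq_right, ← sup_eq_right (a := I), ← Ideal.map_sup]
  exact (map_mapRingHom_injective f).eq_iff

/-- A nonzero integral ideal, as an invertible fractional ideal. -/
noncomputable def integralIdeal (I : Ideal (𝓞 K)) (hI : I ≠ ⊥) : IdealGroup K :=
  FractionalIdeal.mk0 K ⟨I, mem_nonZeroDivisors_iff_ne_zero.2 hI⟩

lemma coe_integralIdeal (I : Ideal (𝓞 K)) (hI : I ≠ ⊥) :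
    (integralIdeal I hI : FractionalIdeal (𝓞 K)⁰ K) = I := rfl

lemma integralIdeal_injective {I I' : Ideal (𝓞 K)} {hI : I ≠ ⊥} {hI' : I' ≠ ⊥}
    (h : integralIdeal I hI = integralIdeal I' hI') : I = I' :=
  FractionalIdeal.coeIdeal_injective (congrArg Units.val h)

lemma integralIdeal_mul {I I' : Ideal (𝓞 K)} (hI : I ≠ ⊥) (hI' : I' ≠ ⊥) :
    integralIdeal (I * I') (mul_ne_zero hI hI') = integralIdeal I hI * integralIdeal I' hI' :=
  Units.ext (by simp [coe_integralIdeal])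

lemma idealMap_integralIdeal (f : F →+* K) (I : Ideal (𝓞 F)) (hI : I ≠ ⊥) :
    idealMap f (integralIdeal I hI) =
      integralIdeal (I.map (mapRingHom f)) (map_mapRingHom_ne_bot f hI) := by
  apply Units.ext
  rw [coe_idealMap, coe_integralIdeal, coe_integralIdeal, FractionalIdeal.extended_coeIdeal_eq_map]

lemma exists_mul_toPrincipalIdeal_eq_integralIdeal (a : IdealGroup K) :
    ∃ (x : Kˣ) (I : Ideal (𝓞 K)) (hI : I ≠ ⊥), IsIntegral ℤ (x : K) ∧
      a * toPrincipalIdeal (𝓞 K) K x = integralIdeal I hI := by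
  obtain ⟨d, I, hd, ha⟩ :=
    FractionalIdeal.exists_eq_spanSingleton_mul (a : FractionalIdeal (𝓞 K)⁰ K)
  have hI : I ≠ ⊥ := by
    rintro rfl
    exact a.ne_zero (by rw [ha]; simp)
  have hd' : (d : K) ≠ 0 := by simpa using hd
  refine ⟨Units.mk0 (d : K) hd', I, hI, d.2, Units.ext ?_⟩
  rw [Units.val_mul, ha, coe_toPrincipalIdeal, coe_integralIdeal, mul_right_comm,
    FractionalIdeal.spanSingleton_mul_spanSingleton]
  simp [hd']

end IdealMap

section Gauss

variable {R : Type*} [CommRing R]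

lemma span_pair_mul_span_pair_eq_sup (α β γ δ : R) :
    Ideal.span {α, β} * Ideal.span {γ, δ} =
      Ideal.span {α * γ, α * δ + β * γ, β * δ} ⊔ Ideal.span {α * δ} := by
  rw [Ideal.span_pair_mul_span_pair, ← Ideal.span_union]
  apply le_antisymm <;> rw [Ideal.span_le]
  · rintro x (rfl | rfl | rfl | rfl)
    · exact Ideal.subset_span (by simp)
    · exact Ideal.subset_span (by simp)
    · rw [← add_sub_cancel_left (α * δ) (β * γ)]
      exact sub_mem (Ideal.subset_span (by simp)) (Ideal.subset_span (by simp))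
    · exact Ideal.subset_span (by simp)
  · rintro x ((rfl | rfl | rfl) | rfl)
    · exact Ideal.subset_span (by simp)
    · exact add_mem (Ideal.subset_span (by simp)) (Ideal.subset_span (by simp))
    · exact Ideal.subset_span (by simp)
    · exact Ideal.subset_span (by simp)

/-- Gauss's lemma for the product of two linear polynomials. -/
theorem span_pair_mul_span_pair_eq_span_coeffs [IsDedekindDomain R] (α β γ δ : R) :
    Ideal.span {α, β} * Ideal.span {γ, δ} = Ideal.span {α * γ, α * δ + β * γ, β * δ} := by
  have hsup := span_pair_mul_span_pair_eq_sup α β γ δ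
  set I := Ideal.span {α, β} * Ideal.span {γ, δ}
  set Q := Ideal.span {α * γ, α * δ + β * γ, β * δ}
  have hQI : Q ≤ I := hsup ▸ le_sup_left
  rcases eq_or_ne I ⊥ with hI | hI
  · exact hI.trans (le_bot_iff.1 (hQI.trans hI.le)).symm
  have hu : α * δ ∈ I := hsup ▸ Ideal.mem_sup_right (Ideal.mem_span_singleton_self _)
  -- `αδ` is a root of the monic polynomial `T² - (αδ + βγ)T + (αγ)(βδ)`.
  have husq : α * δ * (α * δ) ∈ Q * I := by
    rw [show α * δ * (α * δ) = (α * δ + β * γ) * (α * δ) - α * γ * (β * δ) by ring]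
    exact sub_mem (Ideal.mul_mem_mul (Ideal.subset_span (by simp)) hu)
      (Ideal.mul_mem_mul (Ideal.subset_span (by simp)) (hQI (Ideal.subset_span (by simp))))
  have huI : Ideal.span {α * δ} * I ≤ Q * I := by
    rw [hsup, Ideal.mul_sup, ← hsup, Ideal.span_singleton_mul_span_singleton]
    refine sup_le (mul_comm Q _ ▸ Ideal.mul_mono_right ?_) ?_
    · exact (Ideal.span_singleton_le_iff_mem I).2 hu
    · exact (Ideal.span_singleton_le_iff_mem _).2 husq
  refine mul_right_cancel₀ hI (le_antisymm ?_ (Ideal.mul_mono_left hQI))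
  nth_rw 1 [hsup]
  rw [Ideal.sup_mul]
  exact sup_le le_rfl huI

end Gauss

/-! ### Quadratic extensions of number fields -/

section QuadraticExtension

variable {F K : Type*} [Field F] [Field K]

/-- `σ` is the conjugation of a quadratic extension `f : F →+* K`: a nontrivial involution of `K`
whose fixed field is the image of `F`. Quadratic extensions are encoded by such pairs `(f, σ)`
rather than by algebra instances, because the same two fields occur with several embeddings. -/
structure QuadraticConj (f : F →+* K) (σ : K →+* K) : Prop where
  involutive : Function.Involutive σ
  apply_eq_self_iff : ∀ x, σ x = x ↔ ∃ a, f a = x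
  exists_apply_ne : ∃ θ, σ θ ≠ θ

/-- The nonzero primes of `K` lying in the inertia locus of `σ`, that is, modulo which `σ` acts
trivially. For the conjugation of a quadratic extension these are the ramified primes. -/
def ramifiedPrimes (σ : K →+* K) : Set (Ideal (𝓞 K)) :=
  {P | P.IsPrime ∧ P ≠ ⊥ ∧ ∀ x, mapRingHom σ x - x ∈ P}

namespace QuadraticConj

variable {f : F →+* K} {σ : K →+* K} (h : QuadraticConj f σ)

include h

lemma apply_map (a : F) : σ (f a) = f a := (h.apply_eq_self_iff _).2 ⟨a, rfl⟩

lemma apply_apply (x : K) : σ (σ x) = x := h.involutive x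

lemma comp_self : σ.comp σ = RingHom.id K := RingHom.ext h.involutive

lemma comp_map : σ.comp f = f := RingHom.ext h.apply_map

lemma exists_mapRingHom_eq (x : 𝓞 K) (hx : σ x = x) : ∃ a : 𝓞 F, mapRingHom f a = x := by
  obtain ⟨a, ha⟩ := (h.apply_eq_self_iff _).1 hx
  have hint : IsIntegral ℤ a :=
    (isIntegral_algHom_iff f.toIntAlgHom f.injective).1 (show IsIntegral ℤ (f a) from ha ▸ x.2)
  exact ⟨⟨a, hint⟩, RingOfIntegers.ext ha⟩

lemma mapRingHom_mapRingHom (x : 𝓞 K) : mapRingHom σ (mapRingHom σ x) = x :=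
  RingOfIntegers.ext (h.involutive x)

lemma map_map (I : Ideal (𝓞 K)) : (I.map (mapRingHom σ)).map (mapRingHom σ) = I := by
  rw [Ideal.map_map, show (mapRingHom σ).comp (mapRingHom σ) = RingHom.id _ from
    RingHom.ext h.mapRingHom_mapRingHom, Ideal.map_id]

lemma map_eq_comap (I : Ideal (𝓞 K)) : I.map (mapRingHom σ) = I.comap (mapRingHom σ) := by
  refine le_antisymm (Ideal.map_le_iff_le_comap.2 fun x hx ↦ ?_) fun x hx ↦ ?_
  · rwa [Ideal.mem_comap, Ideal.mem_comap, h.mapRingHom_mapRingHom]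
  · rw [← h.mapRingHom_mapRingHom x]
    exact Ideal.mem_map_of_mem _ hx

lemma map_isPrime (P : Ideal (𝓞 K)) [P.IsPrime] : (P.map (mapRingHom σ)).IsPrime :=
  h.map_eq_comap P ▸ Ideal.comap_isPrime _ _

lemma map_eq_of_mem_ramifiedPrimes {P : Ideal (𝓞 K)} (hP : P ∈ ramifiedPrimes σ) :
    P.map (mapRingHom σ) = P := by
  have hle : P.map (mapRingHom σ) ≤ P := Ideal.map_le_iff_le_comap.2 fun x hx ↦ by
    rw [Ideal.mem_comap, ← sub_add_cancel (mapRingHom σ x) x]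
    exact add_mem (hP.2.2 x) hx
  refine le_antisymm hle ?_
  conv_lhs => rw [← h.map_map P]
  exact Ideal.map_mono hle

lemma exists_mul_map_eq_unitsMap (x : Kˣ) :
    ∃ y : Fˣ, x * Units.map (σ : K →* K) x = Units.map (f : F →* K) y := by
  obtain ⟨a, ha⟩ := (h.apply_eq_self_iff (x * σ x)).1 (by simp [h.apply_apply, mul_comm])
  have ha0 : a ≠ 0 := by
    rintro rfl
    exact mul_ne_zero x.ne_zero ((map_ne_zero σ).2 x.ne_zero) (by simp [← ha])
  exact ⟨Units.mk0 a ha0, Units.ext ha.symm⟩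

lemma exists_apply_eq_neg : ∃ δ : K, σ δ = -δ ∧ δ ≠ 0 := by
  obtain ⟨θ, hθ⟩ := h.exists_apply_ne
  exact ⟨θ - σ θ, by rw [map_sub, h.apply_apply, neg_sub], (sub_ne_zero.2 hθ.symm)⟩

lemma exists_eq_div_of_mul_map_eq_one (x : Kˣ) (hx : x * Units.map (σ : K →* K) x = 1) :
    ∃ y : Kˣ, x = Units.map (σ : K →* K) y / y := by
  have hx' : (x : K) * σ x = 1 := congrArg Units.val hx
  have of_ne_zero (w : K) (hw : w + σ x * σ w ≠ 0) :
      ∃ y : Kˣ, x = Units.map (σ : K →* K) y / y := by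
    refine ⟨Units.mk0 _ hw, eq_div_of_mul_eq' (Units.ext ?_)⟩
    simp only [Units.val_mul, Units.val_mk0, Units.coe_map, MonoidHom.coe_coe, map_add, map_mul,
      h.apply_apply]
    linear_combination (σ w) * hx'
  by_cases hone : (1 : K) + σ x * σ 1 = 0
  · obtain ⟨θ, hθ⟩ := h.exists_apply_ne
    refine of_ne_zero θ fun hzero ↦ hθ ?_
    rw [map_one, mul_one] at hone
    linear_combination σ θ * hone - hzero
  · exact of_ne_zero 1 hone

end QuadraticConj

namespace QuadraticConj

variable [NumberField K] {f : F →+* K} {σ : K →+* K} (h : QuadraticConj f σ)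

include h

lemma exists_mul_map_eq_map (I : Ideal (𝓞 K)) :
    ∃ b : Ideal (𝓞 F), I * I.map (mapRingHom σ) = b.map (mapRingHom f) := by
  rcases eq_or_ne I ⊥ with rfl | hI
  · exact ⟨⊥, by simp⟩
  obtain ⟨x, hx, hx0⟩ := Submodule.exists_mem_ne_zero_of_ne_bot hI
  obtain ⟨y, rfl⟩ := IsDedekindDomain.exists_eq_span_pair hx hx0
  obtain ⟨a, ha⟩ := h.exists_mapRingHom_eq (x * mapRingHom σ x) (by simp [h.apply_apply, mul_comm])
  obtain ⟨b, hb⟩ := h.exists_mapRingHom_eq (y * mapRingHom σ y) (by simp [h.apply_apply, mul_comm])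
  obtain ⟨c, hc⟩ := h.exists_mapRingHom_eq (x * mapRingHom σ y + y * mapRingHom σ x)
    (by simp [h.apply_apply]; ring)
  refine ⟨Ideal.span {a, c, b}, ?_⟩
  rw [Ideal.map_span, Ideal.map_span, Set.image_pair, span_pair_mul_span_pair_eq_span_coeffs,
    Set.image_insert_eq, Set.image_pair, ha, hb, hc]

lemma idealMap_idealMap_self (a : IdealGroup K) : idealMap σ (idealMap σ a) = a := by
  rw [idealMap_idealMap, h.comp_self, idealMap_id]

lemma classMap_classMap_self (c : ClassGroup (𝓞 K)) : classMap σ (classMap σ c) = c := by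
  rw [classMap_classMap, h.comp_self, classMap_id]

variable [NumberField F]

lemma idealMap_idealMap_base (a : IdealGroup F) : idealMap σ (idealMap f a) = idealMap f a := by
  rw [idealMap_idealMap, h.comp_map]

lemma finrank_eq_two : letI := f.toAlgebra; Module.finrank F K = 2 := by
  let _ := f.toAlgebra
  obtain ⟨δ, hδ, hδ0⟩ := h.exists_apply_eq_neg
  let φ : (F × F) →ₗ[F] K :=
    (LinearMap.toSpanSingleton F K 1).coprod (LinearMap.toSpanSingleton F K δ)
  have hφ (a b : F) : φ (a, b) = f a + f b * δ := by
    simp [φ, Algebra.smul_def, RingHom.algebraMap_toAlgebra]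
  have hinj : Function.Injective φ := by
    refine LinearMap.ker_eq_bot.1 (LinearMap.ker_eq_bot'.2 ?_)
    rintro ⟨a, b⟩ hab
    rw [hφ] at hab
    have hconj : f a - f b * δ = 0 := by
      simpa [h.apply_map, hδ, sub_eq_add_neg] using congrArg σ hab
    have ha : f a = 0 := by linear_combination (hab + hconj) / 2
    have hb : f b * δ = 0 := by linear_combination (hab - hconj) / 2
    simp_all
  have hsurj : Function.Surjective φ := fun x ↦ by
    obtain ⟨a, ha⟩ := (h.apply_eq_self_iff ((x + σ x) / 2)).1 (by
      rw [map_div₀, map_add, h.apply_apply, map_ofNat, add_comm])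
    obtain ⟨b, hb⟩ := (h.apply_eq_self_iff ((x - σ x) / (2 * δ))).1 (by
      rw [map_div₀, map_sub, map_mul, h.apply_apply, hδ, map_ofNat]; field_simp; ring)
    refine ⟨(a, b), ?_⟩
    rw [hφ, ha, hb]
    field_simp
    ring
  rw [← (LinearEquiv.ofBijective φ ⟨hinj, hsurj⟩).finrank_eq]
  simp

lemma finrank_rat : Module.finrank ℚ K = 2 * Module.finrank ℚ F := by
  let _ := f.toAlgebra
  rw [← Module.finrank_mul_finrank ℚ F K, h.finrank_eq_two, mul_comm]

lemma absNorm_map (I : Ideal (𝓞 F)) :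
    Ideal.absNorm (I.map (mapRingHom f)) = Ideal.absNorm I ^ 2 := by
  let _ := f.toAlgebra
  rw [← h.finrank_eq_two, IsFractionRing.finrank_eq (𝓞 F) F (𝓞 K) K]
  exact Ideal.absNorm_algebraMap (𝓞 F) (𝓞 K) I

lemma exists_mul_idealMap_eq_idealMap (a : IdealGroup K) :
    ∃ b : IdealGroup F, a * idealMap σ a = idealMap f b := by
  obtain ⟨x, I, hI, -, ha⟩ := exists_mul_toPrincipalIdeal_eq_integralIdeal a
  obtain ⟨b, hb⟩ := h.exists_mul_map_eq_map I
  obtain ⟨y, hy⟩ := h.exists_mul_map_eq_unitsMap x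
  have hb0 : b ≠ ⊥ := by
    rintro rfl
    exact mul_ne_zero hI (map_mapRingHom_ne_bot σ hI) (by simpa using hb)
  have hnorm : integralIdeal I hI * idealMap σ (integralIdeal I hI) =
      idealMap f (integralIdeal b hb0) := by
    simp only [idealMap_integralIdeal, ← integralIdeal_mul, hb]
  refine ⟨integralIdeal b hb0 / toPrincipalIdeal (𝓞 F) F y, ?_⟩
  rw [eq_div_of_mul_eq' ha, map_div, map_div, ← hnorm, idealMap_toPrincipalIdeal,
    idealMap_toPrincipalIdeal, ← hy, map_mul, div_mul_div_comm]

end QuadraticConj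

/-! ### Ambiguous ideals -/

namespace QuadraticConj

variable [NumberField F] [NumberField K] {f : F →+* K} {σ : K →+* K} (h : QuadraticConj f σ)

include h

lemma mem_ramifiedPrimes_of_mul_self {P : Ideal (𝓞 K)} (hP : P.IsPrime) (hP0 : P ≠ ⊥)
    (hσ : P.map (mapRingHom σ) = P)
    (hmul : P * P = (P.comap (mapRingHom f)).map (mapRingHom f)) : P ∈ ramifiedPrimes σ := by
  set p := P.comap (mapRingHom f)
  have hnorm : Ideal.absNorm P = Ideal.absNorm p := by
    have := congrArg Ideal.absNorm hmul
    rw [map_mul, h.absNorm_map, ← pow_two] at this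
    exact Nat.pow_left_injective two_ne_zero this
  let φ : 𝓞 F ⧸ p →+* 𝓞 K ⧸ P := Ideal.quotientMap P (mapRingHom f) le_rfl
  have : Finite (𝓞 K ⧸ P) := Ideal.finiteQuotientOfFreeOfNeBot P hP0
  have hφ : Function.Bijective φ := (Nat.bijective_iff_injective_and_card φ).2
    ⟨Ideal.quotientMap_injective, by
      rwa [Ideal.absNorm_apply, Ideal.absNorm_apply, eq_comm] at hnorm⟩
  refine ⟨hP, hP0, fun x ↦ ?_⟩
  obtain ⟨y, hy⟩ := hφ.2 (Ideal.Quotient.mk P x)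
  obtain ⟨a, rfl⟩ := Ideal.Quotient.mk_surjective y
  have ha : mapRingHom f a - x ∈ P := Ideal.Quotient.eq.1 hy
  have hσa : mapRingHom σ (mapRingHom f a - x) ∈ P := hσ ▸ Ideal.mem_map_of_mem _ ha
  rw [map_sub, show mapRingHom σ (mapRingHom f a) = mapRingHom f a from
    RingOfIntegers.ext (h.apply_map a)] at hσa
  simpa using sub_mem ha hσa

lemma exists_eq_map_or_mem_ramifiedPrimes {P : Ideal (𝓞 K)} (hP : P.IsPrime) (hP0 : P ≠ ⊥)
    (hσ : P.map (mapRingHom σ) = P) :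
    (∃ p : Ideal (𝓞 F), P = p.map (mapRingHom f)) ∨ P ∈ ramifiedPrimes σ := by
  obtain ⟨b, hb⟩ := h.exists_mul_map_eq_map P
  rw [hσ] at hb
  set p := P.comap (mapRingHom f)
  have hpP : p.map (mapRingHom f) ≤ P := Ideal.map_comap_le
  have hbp : b ≤ p := Ideal.map_le_iff_le_comap.1 (hb ▸ Ideal.mul_le_left)
  have hb0 : b ≠ ⊥ := by
    rintro rfl
    exact mul_ne_zero hP0 hP0 (by simpa using hb)
  have hp0 : p ≠ ⊥ := fun hbot ↦ hb0 (le_bot_iff.1 (hbot ▸ hbp))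
  have hpb : b ∣ p ^ 2 := by
    rw [Ideal.dvd_iff_le, ← map_mapRingHom_le_iff f, ← hb, Ideal.map_pow, pow_two]
    exact Ideal.mul_mono hpP hpP
  obtain ⟨i, hi, hbi⟩ := (dvd_prime_pow (Ideal.prime_of_isPrime hp0 (Ideal.comap_isPrime _ _)) 2).1
    hpb
  rw [associated_iff_eq] at hbi
  interval_cases i
  · rw [pow_zero, Ideal.one_eq_top] at hbi
    exact absurd (top_le_iff.1 (hbi ▸ hbp)) (Ideal.comap_ne_top _ hP.ne_top)
  · exact .inr (h.mem_ramifiedPrimes_of_mul_self hP hP0 hσ (by rw [hb, hbi, pow_one]))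
  · refine .inl ⟨p, ?_⟩
    rw [hbi, Ideal.map_pow, ← pow_two] at hb
    exact dvd_antisymm (UniqueFactorizationMonoid.pow_dvd_pow_iff_dvd two_ne_zero |>.1 hb.dvd)
      (UniqueFactorizationMonoid.pow_dvd_pow_iff_dvd two_ne_zero |>.1 hb.symm.dvd)

lemma exists_dvd_of_map_eq {I : Ideal (𝓞 K)} (hI0 : I ≠ ⊥) (hI : I ≠ ⊤)
    (hσ : I.map (mapRingHom σ) = I) : ∃ A, A ∣ I ∧ A ≠ ⊤ ∧ A.map (mapRingHom σ) = A ∧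
      ((∃ a : Ideal (𝓞 F), A = a.map (mapRingHom f)) ∨ A ∈ ramifiedPrimes σ) := by
  obtain ⟨P, hPmax, hIP⟩ := Ideal.exists_le_maximal I hI
  have hP := hPmax.isPrime
  have hP0 : P ≠ ⊥ := ne_bot_of_le_ne_bot hI0 hIP
  by_cases hPσ : P.map (mapRingHom σ) = P
  · exact ⟨P, Ideal.dvd_iff_le.2 hIP, hP.ne_top, hPσ,
      h.exists_eq_map_or_mem_ramifiedPrimes hP hP0 hPσ⟩
  have hcop : IsCoprime P (P.map (mapRingHom σ)) := by
    have := (h.map_isPrime P).isMaximal (map_mapRingHom_ne_bot σ hP0)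
    exact Ideal.isCoprime_of_isMaximal (Ne.symm hPσ)
  refine ⟨P * P.map (mapRingHom σ), hcop.mul_dvd (Ideal.dvd_iff_le.2 hIP)
    (Ideal.dvd_iff_le.2 ?_), fun htop ↦ hP.ne_top (top_le_iff.1 (htop ▸ Ideal.mul_le_left)), ?_,
    .inl (h.exists_mul_map_eq_map P)⟩
  · exact hσ.symm.le.trans (Ideal.map_mono hIP)
  · rw [Ideal.map_mul, h.map_map, mul_comm]

lemma integralIdeal_mem_of_map_eq {H : Subgroup (IdealGroup K)} (hH : (idealMap f).range ≤ H)
    (hram : ∀ P (hP : P ∈ ramifiedPrimes σ), integralIdeal P hP.2.1 ∈ H) (I : Ideal (𝓞 K))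
    (hI : I ≠ ⊥) (hσ : I.map (mapRingHom σ) = I) : integralIdeal I hI ∈ H := by
  induction I using WellFoundedGT.induction with
  | _ I ih
  by_cases htop : I = ⊤
  · subst htop
    rw [show integralIdeal ⊤ hI = 1 from Units.ext (by simp [coe_integralIdeal])]
    exact one_mem _
  obtain ⟨A, ⟨C, rfl⟩, hA, hAσ, hAmem⟩ := h.exists_dvd_of_map_eq hI htop hσ
  have hA0 : A ≠ ⊥ := left_ne_zero_of_mul hI
  have hC0 : C ≠ ⊥ := right_ne_zero_of_mul hI
  have hCσ : C.map (mapRingHom σ) = C := by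
    rw [Ideal.map_mul, hAσ] at hσ
    exact mul_left_cancel₀ hA0 hσ
  have hlt : A * C < C := lt_of_le_of_ne Ideal.mul_le_right fun heq ↦ by
    rw [mul_eq_right₀ hC0, Ideal.one_eq_top] at heq
    exact hA heq
  rw [integralIdeal_mul hA0 hC0]
  refine mul_mem ?_ (ih C hlt hC0 hCσ)
  rcases hAmem with ⟨a, rfl⟩ | hA'
  · have ha0 : a ≠ ⊥ := by
      rintro rfl
      exact hA0 Ideal.map_bot
    exact hH ⟨integralIdeal a ha0, idealMap_integralIdeal f a ha0⟩
  · exact hram A hA'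

lemma exists_mul_idealMap_eq_integralIdeal (a : IdealGroup K) :
    ∃ (b : IdealGroup F) (I : Ideal (𝓞 K)) (hI : I ≠ ⊥),
      a * idealMap f b = integralIdeal I hI := by
  obtain ⟨x, I, hI, hx, ha⟩ := exists_mul_toPrincipalIdeal_eq_integralIdeal a
  obtain ⟨y, hy⟩ := h.exists_mul_map_eq_unitsMap x
  let d : 𝓞 K := ⟨σ x, map_isIntegral_int σ hx⟩
  have hd : Ideal.span {d} ≠ ⊥ := by
    rw [Ne, Ideal.span_singleton_eq_bot]
    exact fun h0 ↦ (map_ne_zero σ).2 x.ne_zero (congrArg ((↑) : 𝓞 K → K) h0)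
  have hdx : toPrincipalIdeal (𝓞 K) K (Units.map (σ : K →* K) x) =
      integralIdeal (Ideal.span {d}) hd := by
    apply Units.ext
    rw [coe_toPrincipalIdeal, coe_integralIdeal, FractionalIdeal.coeIdeal_span_singleton]
    rfl
  refine ⟨toPrincipalIdeal (𝓞 F) F y, I * Ideal.span {d}, mul_ne_zero hI hd, ?_⟩
  rw [idealMap_toPrincipalIdeal, ← hy, map_mul, ← mul_assoc, ha, hdx, integralIdeal_mul]

lemma range_idealMap_le : (idealMap f).range ≤ fixedPoints (idealMap σ) := by
  rintro _ ⟨a, rfl⟩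
  exact mem_fixedPoints.2 (h.idealMap_idealMap_base a)

theorem relIndex_range_idealMap_dvd {t : ℕ} (ht : (ramifiedPrimes σ).encard ≤ t) :
    (idealMap f).range.relIndex (fixedPoints (idealMap σ)) ∣ 2 ^ t := by
  classical
  obtain ⟨hfin, n, hn, hnt⟩ := Set.encard_le_coe_iff.1 ht
  have := hfin.fintype
  set S : Finset (IdealGroup K) :=
    Finset.univ.image fun P : ramifiedPrimes σ ↦ integralIdeal P.1 P.2.2.1
  have hcard : S.card ≤ t := by
    refine Finset.card_image_le.trans (le_trans (le_of_eq ?_) hnt)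
    rw [Finset.card_univ, ← Nat.card_eq_fintype_card, Nat.card_coe_set_eq, Set.ncard, hn,
      ENat.toNat_natCast]
  refine (relIndex_dvd_pow_card_of_le_sup_closure S ?_ h.range_idealMap_le fun a ha ↦ ?_).trans
    (pow_dvd_pow 2 hcard)
  · simp only [S, Finset.mem_image, Finset.mem_univ, true_and, forall_exists_index,
      forall_apply_eq_imp_iff]
    rintro ⟨P, hP⟩
    obtain ⟨b, hb⟩ := h.exists_mul_idealMap_eq_idealMap (integralIdeal P hP.2.1)
    refine ⟨b, ?_⟩
    rw [← hb, idealMap_integralIdeal, pow_two]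
    congr 2
    exact h.map_eq_of_mem_ramifiedPrimes hP
  · obtain ⟨b, I, hI, hab⟩ := h.exists_mul_idealMap_eq_integralIdeal a
    have hIσ : I.map (mapRingHom σ) = I := integralIdeal_injective
      (hI := map_mapRingHom_ne_bot σ hI) (hI' := hI) (by
        rw [← idealMap_integralIdeal σ I hI, ← hab, map_mul, mem_fixedPoints.1 ha,
          h.idealMap_idealMap_base])
    rw [eq_div_of_mul_eq' hab]
    refine div_mem (h.integralIdeal_mem_of_map_eq le_sup_left (fun P hP ↦ ?_) I hI hIσ)
      (Subgroup.mem_sup_left ⟨b, rfl⟩)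
    exact Subgroup.mem_sup_right (Subgroup.subset_closure
      (Finset.mem_coe.2 (Finset.mem_image.2 ⟨⟨P, hP⟩, Finset.mem_univ _, rfl⟩)))

end QuadraticConj

end QuadraticExtension

/-! ### Units of totally real fields -/

section Units

lemma map_range_powMonoidHom_of_surjective {G H : Type*} [CommGroup G] [CommGroup H] (n : ℕ)
    {φ : G →* H} (hφ : Function.Surjective φ) :
    (powMonoidHom n : G →* G).range.map φ = (powMonoidHom n : H →* H).range := by
  rw [MonoidHom.map_range, show φ.comp (powMonoidHom n) = (powMonoidHom n).comp φ by ext; simp,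
    MonoidHom.range_comp, MonoidHom.range_eq_top.2 hφ, ← MonoidHom.range_eq_map]

lemma index_range_powMonoidHom_two_modTorsion (M : Type*) [Field M] [NumberField M] :
    (powMonoidHom 2 (α := (𝓞 M)ˣ ⧸ Units.torsion M)).range.index = 2 ^ Units.rank M := by
  rw [← Units.finrank_modTorsion]
  exact AddSubgroup.index_range_nsmul (Additive ((𝓞 M)ˣ ⧸ Units.torsion M)) 2

variable (M : Type*) [Field M] [NumberField M] [IsTotallyReal M]

lemma ker_powMonoidHom_two_units :
    (powMonoidHom 2 : (𝓞 M)ˣ →* (𝓞 M)ˣ).ker = Units.torsion M := by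
  ext x
  rw [MonoidHom.mem_ker, powMonoidHom_apply, Units.torsion, CommGroup.mem_torsion]
  refine ⟨fun hx ↦ isOfFinOrder_iff_pow_eq_one.2 ⟨2, two_pos, hx⟩, fun hx ↦ ?_⟩
  have hle : orderOf x ≤ 2 := by
    by_contra! hlt
    rw [← orderOf_units, ← orderOf_injective (algebraMap (𝓞 M) M).toMonoidHom
      RingOfIntegers.coe_injective] at hlt
    have hreal := InfinitePlace.IsPrimitiveRoot.nrRealPlaces_eq_zero_of_two_lt hlt
      (IsPrimitiveRoot.orderOf _)
    have hrank := IsTotallyReal.finrank M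
    have hpos : 0 < Module.finrank ℚ M := Module.finrank_pos
    lia
  have hpos := hx.orderOf_pos
  rw [← orderOf_dvd_iff_pow_eq_one]
  interval_cases orderOf x <;> decide

lemma eq_one_or_eq_neg_one_of_mem_torsion {x : (𝓞 M)ˣ} (hx : x ∈ Units.torsion M) :
    x = 1 ∨ x = -1 := by
  rw [← ker_powMonoidHom_two_units, MonoidHom.mem_ker, powMonoidHom_apply, pow_two] at hx
  exact Units.inv_eq_self_iff x |>.1 (inv_eq_of_mul_eq_one_right hx)

lemma torsionOrder_eq_two : Units.torsionOrder M = 2 := by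
  have hle : Units.torsionOrder M ≤ 2 := by
    refine (Nat.card_mono (Set.toFinite {1, -1}) fun x hx ↦ ?_ :
      Nat.card (Units.torsion M : Set (𝓞 M)ˣ) ≤ Nat.card ({1, -1} : Set (𝓞 M)ˣ)).trans
      ((Nat.card_coe_set_eq _).trans_le (Set.ncard_insert_le _ _ |>.trans_eq (by simp)))
    exact eq_one_or_eq_neg_one_of_mem_torsion M hx
  exact hle.antisymm (Nat.le_of_dvd Nat.card_pos (Units.even_torsionOrder M).two_dvd)

lemma disjoint_range_powMonoidHom_two_torsion :
    Disjoint (powMonoidHom 2 : (𝓞 M)ˣ →* (𝓞 M)ˣ).range (Units.torsion M) := by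
  rw [Subgroup.disjoint_def]
  rintro _ ⟨x, rfl⟩ hx
  have hxt : x ∈ Units.torsion M := by
    rw [Units.torsion, CommGroup.mem_torsion] at hx ⊢
    exact hx.of_pow two_ne_zero
  rwa [← ker_powMonoidHom_two_units] at hxt

lemma rank_add_one : Units.rank M + 1 = Module.finrank ℚ M := by
  have hpos : 0 < Fintype.card (InfinitePlace M) := Fintype.card_pos
  have hcard := InfinitePlace.card_eq_nrRealPlaces_add_nrComplexPlaces (K := M)
  rw [IsTotallyReal.nrComplexPlaces_eq_zero, ← IsTotallyReal.finrank] at hcard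
  rw [Units.rank]
  lia

theorem index_range_powMonoidHom_two_units :
    (powMonoidHom 2 : (𝓞 M)ˣ →* (𝓞 M)ˣ).range.index = 2 ^ Module.finrank ℚ M := by
  set S := (powMonoidHom 2 : (𝓞 M)ˣ →* (𝓞 M)ˣ).range
  have htorsion : S.relIndex (S ⊔ Units.torsion M) = 2 := by
    rw [sup_comm, Subgroup.relIndex_sup_right, ← Subgroup.inf_relIndex_right,
      (disjoint_range_powMonoidHom_two_torsion M).eq_bot, Subgroup.relIndex_bot_left]
    exact torsionOrder_eq_two M
  have hfree : (S ⊔ Units.torsion M).index = 2 ^ Units.rank M := by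
    have hmap : S.map (QuotientGroup.mk' (Units.torsion M)) =
        (powMonoidHom 2 (α := (𝓞 M)ˣ ⧸ Units.torsion M)).range :=
      map_range_powMonoidHom_of_surjective (G := (𝓞 M)ˣ) (H := (𝓞 M)ˣ ⧸ Units.torsion M) 2
        (QuotientGroup.mk'_surjective (Units.torsion M))
    rw [← index_range_powMonoidHom_two_modTorsion, ← hmap, Subgroup.index_map,
      QuotientGroup.ker_mk', QuotientGroup.range_mk', Subgroup.index_top, mul_one]
  rw [← Subgroup.relIndex_mul_index (le_sup_left : S ≤ S ⊔ Units.torsion M), htorsion, hfree,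
    ← rank_add_one, pow_succ']

end Units

/-! ### Chevalley's ambiguous class number formula -/

section IntegralUnits

variable {F K : Type*} [Field F] [Field K]

/-- The inclusion of the units of `𝓞 K` into `Kˣ`. -/
def unitsInclusion (K : Type*) [Field K] : (𝓞 K)ˣ →* Kˣ :=
  Units.map (algebraMap (𝓞 K) K : 𝓞 K →* K)

@[simp] lemma coe_unitsInclusion (u : (𝓞 K)ˣ) : (unitsInclusion K u : K) = (u : 𝓞 K) := rfl

lemma unitsInclusion_injective : Function.Injective (unitsInclusion K) :=
  Units.map_injective RingOfIntegers.coe_injective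

/-- The homomorphism of groups of integral units induced by a homomorphism of fields. -/
def integralUnitsMap (f : F →+* K) : (𝓞 F)ˣ →* (𝓞 K)ˣ :=
  Units.map (mapRingHom f : 𝓞 F →* 𝓞 K)

lemma integralUnitsMap_injective (f : F →+* K) : Function.Injective (integralUnitsMap f) :=
  Units.map_injective (mapRingHom_injective f)

lemma unitsMap_unitsInclusion (f : F →+* K) (u : (𝓞 F)ˣ) :
    Units.map (f : F →* K) (unitsInclusion F u) = unitsInclusion K (integralUnitsMap f u) := rfl

lemma range_unitsInclusion [NumberField K] :
    (unitsInclusion K).range = (toPrincipalIdeal (𝓞 K) K).ker := by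
  ext x
  rw [MonoidHom.mem_ker, toPrincipalIdeal_eq_iff, Units.val_one]
  refine ⟨?_, fun hx ↦ ?_⟩
  · rintro ⟨u, rfl⟩
    rw [coe_unitsInclusion, ← FractionalIdeal.coeIdeal_span_singleton,
      Ideal.span_singleton_eq_top.2 u.isUnit, FractionalIdeal.coeIdeal_top]
  · obtain ⟨a, ha⟩ := (FractionalIdeal.mem_one_iff _).1
      (hx ▸ FractionalIdeal.mem_spanSingleton_self (𝓞 K)⁰ (x : K))
    obtain ⟨b, hb⟩ := (FractionalIdeal.mem_spanSingleton _).1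
      (hx ▸ FractionalIdeal.one_mem_one (𝓞 K)⁰ : (1 : K) ∈ FractionalIdeal.spanSingleton _ (x : K))
    have hba : b * a = 1 := RingOfIntegers.coe_injective (by
      rw [map_mul, ha, ← Algebra.smul_def, hb, map_one])
    exact ⟨⟨a, b, by rw [mul_comm, hba], hba⟩, Units.ext ha⟩

lemma relIndex_comap_diffHom_idealMap {K : Type*} [Field K] [NumberField K] (σ : K →+* K) :
    (toPrincipalIdeal (𝓞 K) K).range.relIndex
      ((toPrincipalIdeal (𝓞 K) K).range.comap (diffHom (idealMap σ))) =
      Nat.card (fixedPoints (classMap σ)) := by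
  have hcomm : (diffHom (classMap σ)).comp (idealClass K) =
      (idealClass K).comp (diffHom (idealMap σ)) := diffHom_comp (classMap_idealClass σ)
  rw [← ker_idealClass, Subgroup.relIndex_ker, MonoidHom.comap_ker, ← hcomm,
    ← MonoidHom.comap_ker, Subgroup.map_comap_eq_self_of_surjective idealClass_surjective]
  rfl

end IntegralUnits

namespace QuadraticConj

variable {F K : Type*} [Field F] [Field K] {f : F →+* K} {σ : K →+* K} (h : QuadraticConj f σ)

include h

lemma range_unitsMap :
    (Units.map (f : F →* K)).range = fixedPoints (Units.map (σ : K →* K)) := by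
  ext x
  rw [mem_fixedPoints]
  refine ⟨?_, fun hx ↦ ?_⟩
  · rintro ⟨y, rfl⟩
    exact Units.ext (h.apply_map y)
  · obtain ⟨a, ha⟩ := (h.apply_eq_self_iff x).1 (congrArg Units.val hx)
    exact ⟨Units.mk0 a fun ha0 ↦ x.ne_zero (by rw [← ha, ha0, map_zero]), Units.ext ha⟩

lemma range_integralUnitsMap :
    (integralUnitsMap f).range = fixedPoints (integralUnitsMap σ) := by
  ext x
  rw [mem_fixedPoints]
  refine ⟨?_, fun hx ↦ ?_⟩
  · rintro ⟨y, rfl⟩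
    exact Units.ext (RingOfIntegers.ext (h.apply_map _))
  · have hfix (u : (𝓞 K)ˣ) (hu : integralUnitsMap σ u = u) : ∃ a, mapRingHom f a = u :=
      h.exists_mapRingHom_eq _ (congrArg (fun v : (𝓞 K)ˣ ↦ ((v : 𝓞 K) : K)) hu)
    obtain ⟨a, ha⟩ := hfix x hx
    obtain ⟨b, hb⟩ := hfix x⁻¹ (by rw [map_inv, hx])
    have hab : a * b = 1 := mapRingHom_injective f (by
      rw [map_mul, ha, hb, map_one, Units.mul_inv])
    exact ⟨⟨a, b, hab, by rw [mul_comm, hab]⟩, Units.ext ha⟩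

variable [NumberField F]

lemma relIndex_map_powMonoidHom_two_fixedPoints [IsTotallyReal F] :
    ((fixedPoints (integralUnitsMap σ)).map (powMonoidHom 2)).relIndex
      (fixedPoints (integralUnitsMap σ)) = 2 ^ Module.finrank ℚ F := by
  rw [← h.range_integralUnitsMap, MonoidHom.map_range,
    show (powMonoidHom 2).comp (integralUnitsMap f) =
      (integralUnitsMap f).comp (powMonoidHom 2) by ext; simp,
    MonoidHom.range_comp, relIndex_map_range, MonoidHom.ker_eq_bot _
      (integralUnitsMap_injective f), sup_bot_eq, index_range_powMonoidHom_two_units]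

variable [NumberField K]

theorem two_mul_relIndex_range_normHom [IsTotallyReal F] [IsTotallyReal K] :
    2 * (normHom (integralUnitsMap σ)).range.relIndex (fixedPoints (integralUnitsMap σ)) =
      (diffHom (integralUnitsMap σ)).range.relIndex (normHom (integralUnitsMap σ)).ker := by
  have hker := ker_powMonoidHom_two_units K
  rw [← torsionOrder_eq_two K, Units.torsionOrder, ← hker]
  refine card_ker_powMonoidHom_two_mul_relIndex
    (fun u ↦ Units.ext (h.mapRingHom_mapRingHom u)) (fun u hu ↦ mem_fixedPoints.2 ?_)
    (hker ▸ disjoint_range_powMonoidHom_two_torsion K) ?_ ?_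
  · rw [hker] at hu
    obtain rfl | rfl := eq_one_or_eq_neg_one_of_mem_torsion K hu
    · exact map_one _
    · exact Units.ext (by simp [integralUnitsMap])
  · rw [index_range_powMonoidHom_two_units]
    positivity
  · rw [h.relIndex_map_powMonoidHom_two_fixedPoints, index_range_powMonoidHom_two_units,
      h.finrank_rat, ← pow_mul, mul_comm]

lemma map_toPrincipalIdeal_fixedPoints :
    (fixedPoints (Units.map (σ : K →* K))).map (toPrincipalIdeal (𝓞 K) K) =
      (toPrincipalIdeal (𝓞 F) F).range.map (idealMap f) := by
  rw [← h.range_unitsMap, ← MonoidHom.range_comp, ← MonoidHom.range_comp]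
  exact congrArg MonoidHom.range (MonoidHom.ext fun x ↦ (idealMap_toPrincipalIdeal f x).symm)

lemma relIndex_map_toPrincipalIdeal_fixedPoints :
    ((fixedPoints (Units.map (σ : K →* K))).map (toPrincipalIdeal (𝓞 K) K)).relIndex
      (idealMap f).range = Nat.card (ClassGroup (𝓞 F)) := by
  rw [h.map_toPrincipalIdeal_fixedPoints, relIndex_map_range,
    MonoidHom.ker_eq_bot _ (idealMap_injective f), sup_bot_eq, ← ker_idealClass,
    Subgroup.index_ker, MonoidHom.range_eq_top.2 idealClass_surjective, Subgroup.card_top]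

/-- The divisibility half of Chevalley's formula, the norm index of units being taken in the units
of `F`, viewed in `K` as the fixed elements of `Kˣ` generating the unit ideal. -/
theorem two_mul_card_fixedPoints_mul_relIndex_dvd [IsTotallyReal F] [IsTotallyReal K] {t : ℕ}
    (ht : (ramifiedPrimes σ).encard ≤ t) :
    2 * Nat.card (fixedPoints (classMap σ)) * (normHom (Units.map (σ : K →* K))).range.relIndex
        ((toPrincipalIdeal (𝓞 K) K).ker ⊓ fixedPoints (Units.map (σ : K →* K))) ∣
      Nat.card (ClassGroup (𝓞 F)) * 2 ^ t := by
  have hcomm := unitsMap_unitsInclusion σ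
  have hambiguous := ambiguous_dvd (s := Units.map (σ : K →* K)) (S := idealMap σ)
    (δ := toPrincipalIdeal (𝓞 K) K) (c := 2) (fun x ↦ Units.ext (h.involutive x))
    h.idealMap_idealMap_self (idealMap_toPrincipalIdeal σ)
    (fun x hx ↦ ?hilbert90) h.range_idealMap_le ?principal ?herbrand
  case hilbert90 =>
    obtain ⟨y, hy⟩ := h.exists_eq_div_of_mul_map_eq_one x hx
    exact ⟨y, hy.symm⟩
  case principal =>
    rw [h.map_toPrincipalIdeal_fixedPoints]
    exact Subgroup.map_le_range _ _
  case herbrand =>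
    rw [← range_unitsInclusion]
    exact (congrArg (2 * ·) (relIndex_map_range_inf_ker unitsInclusion_injective
      (normHom_comp hcomm) (diffHom_comp hcomm))).trans
      (h.two_mul_relIndex_range_normHom.trans (relIndex_map_range_inf_ker unitsInclusion_injective
        (diffHom_comp hcomm) (normHom_comp hcomm)).symm)
  rw [relIndex_comap_diffHom_idealMap, h.relIndex_map_toPrincipalIdeal_fixedPoints] at hambiguous
  exact hambiguous.trans (mul_dvd_mul_left _ (h.relIndex_range_idealMap_dvd ht))

end QuadraticConj

/-! ### Consequences for the 2-class group -/

/-- The 2-class group of `K`: the classes of 2-power order. As class groups are finite and abelian,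
this is their only 2-Sylow subgroup. -/
noncomputable abbrev twoClassGroup (K : Type*) [Field K] [NumberField K] :
    Subgroup (ClassGroup (𝓞 K)) :=
  CommGroup.primaryComponent (ClassGroup (𝓞 K)) 2

lemma mem_twoClassGroup_of_sq_eq_one {K : Type*} [Field K] [NumberField K] {c : ClassGroup (𝓞 K)}
    (hc : c ^ 2 = 1) : c ∈ twoClassGroup K := ⟨1, by rwa [pow_one]⟩

lemma card_twoClassGroup (K : Type*) [Field K] [NumberField K] :
    ∃ n, Nat.card (twoClassGroup K) = 2 ^ n :=
  have : Fact (Nat.Prime 2) := ⟨Nat.prime_two⟩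
  IsPGroup.iff_card.1 CommGroup.primaryComponent.isPGroup

/-- `u` is a norm from the quadratic extension `f : F →+* K` with conjugation `σ`. -/
def IsNorm {F K : Type*} [Field F] [Field K] (f : F →+* K) (σ : K →+* K) (u : F) : Prop :=
  ∃ x, x * σ x = f u

lemma pow_mul_card_twoClassGroup_dvd {F K : Type*} [Field F] [NumberField F] [Field K]
    [NumberField K] {σ : K →+* K} {t m : ℕ}
    (htriv : ∀ c ∈ twoClassGroup K, classMap σ c = c)
    (ht : 2 ^ (t + m) * Nat.card (fixedPoints (classMap σ)) ∣
      Nat.card (ClassGroup (𝓞 F)) * 2 ^ t) :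
    2 ^ m * Nat.card (twoClassGroup K) ∣ Nat.card (twoClassGroup F) := by
  have : Fact (Nat.Prime 2) := ⟨Nat.prime_two⟩
  have hfixed : twoClassGroup K ≤ fixedPoints (classMap σ) :=
    fun c hc ↦ mem_fixedPoints.2 (htriv c hc)
  have hdvd : 2 ^ m * Nat.card (fixedPoints (classMap σ)) ∣ Nat.card (ClassGroup (𝓞 F)) := by
    refine Nat.dvd_of_mul_dvd_mul_left (k := 2 ^ t) (by positivity) ?_
    rwa [← mul_assoc, ← pow_add, mul_comm (2 ^ t) (Nat.card _)]
  replace hdvd := (mul_dvd_mul_left (2 ^ m) (Subgroup.card_dvd_of_le hfixed)).trans hdvd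
  obtain ⟨n, hn⟩ := card_twoClassGroup K
  rw [hn, ← pow_add] at hdvd ⊢
  exact pow_dvd_card_primaryComponent hdvd

namespace QuadraticConj

variable {F K : Type*} [Field F] [Field K] {f : F →+* K} {σ : K →+* K} (h : QuadraticConj f σ)

include h

lemma sq_mem_range_normHom (u : Fˣ) :
    Units.map (f : F →* K) u ^ 2 ∈ (normHom (Units.map (σ : K →* K))).range :=
  ⟨Units.map (f : F →* K) u, Units.ext (by simp [h.apply_map, pow_two])⟩

omit h in
lemma unitsMap_notMem_range_normHom {u : Fˣ} (hu : ¬ IsNorm f σ (u : F)) :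
    Units.map (f : F →* K) u ∉ (normHom (Units.map (σ : K →* K))).range := by
  rintro ⟨x, hx⟩
  exact hu ⟨x, congrArg Units.val hx⟩

variable [NumberField K]

lemma unitsMap_unitsInclusion_mem (u : (𝓞 F)ˣ) :
    Units.map (f : F →* K) (unitsInclusion F u) ∈
      (toPrincipalIdeal (𝓞 K) K).ker ⊓ fixedPoints (Units.map (σ : K →* K)) := by
  rw [← range_unitsInclusion, ← h.range_unitsMap]
  exact ⟨⟨_, (unitsMap_unitsInclusion f u).symm⟩, ⟨_, rfl⟩⟩

lemma odd_card_classGroup {t : ℕ} (hF : Odd (Nat.card (ClassGroup (𝓞 F))))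
    (ht : 2 ^ t * Nat.card (fixedPoints (classMap σ)) ∣ Nat.card (ClassGroup (𝓞 F)) * 2 ^ t) :
    Odd (Nat.card (ClassGroup (𝓞 K))) := by
  rw [mul_comm] at ht
  exact odd_card_of_odd_card_fixedPoints h.classMap_classMap_self
    (hF.of_dvd_nat (Nat.dvd_of_mul_dvd_mul_right (by positivity) ht))

variable [NumberField F]

lemma classMap_eq_inv_of_odd (hF : Odd (Nat.card (ClassGroup (𝓞 F)))) {c : ClassGroup (𝓞 K)}
    (hc : c ∈ twoClassGroup K) : classMap σ c = c⁻¹ := by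
  obtain ⟨b, hb⟩ : ∃ b, c * classMap σ c = classMap f b := by
    obtain ⟨a, rfl⟩ := idealClass_surjective c
    obtain ⟨b, hb⟩ := h.exists_mul_idealMap_eq_idealMap a
    exact ⟨idealClass F b, by rw [classMap_idealClass, classMap_idealClass, ← map_mul, hb]⟩
  have hσc : classMap σ c ∈ twoClassGroup K := by
    obtain ⟨n, hn⟩ := hc
    exact ⟨n, by rw [← map_pow, hn, map_one]⟩
  refine eq_inv_of_mul_eq_one_right (eq_one_of_mem_primaryComponent_of_pow_eq_one
    (mul_mem hc hσc) (Nat.coprime_two_left.2 hF) ?_)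
  rw [hb, ← map_pow, pow_card_eq_one', map_one]

lemma sq_eq_one_of_classMap_eq_one {c : ClassGroup (𝓞 F)} (hc : classMap f c = 1) :
    c ^ 2 = 1 := by
  obtain ⟨a, rfl⟩ := idealClass_surjective c
  rw [classMap_idealClass, ← MonoidHom.mem_ker, ker_idealClass] at hc
  obtain ⟨x, hx⟩ := hc
  obtain ⟨y, hy⟩ := h.exists_mul_map_eq_unitsMap x
  have hsq : idealMap f (a ^ 2) = idealMap f (toPrincipalIdeal (𝓞 F) F y) := by
    rw [idealMap_toPrincipalIdeal, ← hy, map_mul, hx, ← idealMap_toPrincipalIdeal, hx,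
      h.idealMap_idealMap_base, map_pow, pow_two]
  rw [← map_pow, ← MonoidHom.mem_ker, ker_idealClass]
  exact ⟨y, (idealMap_injective f hsq).symm⟩

section Ambiguous

variable [IsTotallyReal F] [IsTotallyReal K] {t : ℕ} (ht : (ramifiedPrimes σ).encard ≤ t)

include ht

lemma two_mul_card_fixedPoints_dvd :
    2 * Nat.card (fixedPoints (classMap σ)) ∣ Nat.card (ClassGroup (𝓞 F)) * 2 ^ t :=
  (Dvd.intro _ rfl).trans (h.two_mul_card_fixedPoints_mul_relIndex_dvd ht)

lemma four_mul_card_fixedPoints_dvd {u : (𝓞 F)ˣ} (hu : ¬ IsNorm f σ (u : 𝓞 F)) :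
    4 * Nat.card (fixedPoints (classMap σ)) ∣ Nat.card (ClassGroup (𝓞 F)) * 2 ^ t := by
  refine Dvd.dvd.trans ?_ (h.two_mul_card_fixedPoints_mul_relIndex_dvd ht)
  rw [show 4 * Nat.card (fixedPoints (classMap σ)) =
    2 * Nat.card (fixedPoints (classMap σ)) * 2 by ring]
  exact mul_dvd_mul_left _ (two_dvd_relIndex (h.unitsMap_unitsInclusion_mem u)
    (h.sq_mem_range_normHom _) (unitsMap_notMem_range_normHom hu))

lemma eight_mul_card_fixedPoints_dvd {u v : (𝓞 F)ˣ} (hu : ¬ IsNorm f σ (u : 𝓞 F))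
    (hv : ¬ IsNorm f σ (v : 𝓞 F)) (huv : ¬ IsNorm f σ (u * v : 𝓞 F)) :
    8 * Nat.card (fixedPoints (classMap σ)) ∣ Nat.card (ClassGroup (𝓞 F)) * 2 ^ t := by
  refine Dvd.dvd.trans ?_ (h.two_mul_card_fixedPoints_mul_relIndex_dvd ht)
  rw [show 8 * Nat.card (fixedPoints (classMap σ)) =
    2 * Nat.card (fixedPoints (classMap σ)) * 4 by ring]
  refine mul_dvd_mul_left _ (four_dvd_relIndex (h.unitsMap_unitsInclusion_mem u)
    (h.unitsMap_unitsInclusion_mem v) (h.sq_mem_range_normHom _) (h.sq_mem_range_normHom _)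
    (unitsMap_notMem_range_normHom hu) (unitsMap_notMem_range_normHom hv) ?_)
  rw [← map_mul]
  exact unitsMap_notMem_range_normHom huv

end Ambiguous

lemma isCyclic_twoClassGroup {t : ℕ} (hF : Odd (Nat.card (ClassGroup (𝓞 F))))
    (ht : 2 ^ t * Nat.card (fixedPoints (classMap σ)) ∣
      Nat.card (ClassGroup (𝓞 F)) * 2 ^ (t + 1)) :
    IsCyclic (twoClassGroup K) := by
  have : Fact (Nat.Prime 2) := ⟨Nat.prime_two⟩
  set H : Subgroup (ClassGroup (𝓞 K)) := (powMonoidHom 2 : ClassGroup (𝓞 K) →* _).ker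
  have hfixed : H ≤ fixedPoints (classMap σ) := fun c hc ↦ by
    have hsq : c ^ 2 = 1 := hc
    rw [mem_fixedPoints, h.classMap_eq_inv_of_odd hF (mem_twoClassGroup_of_sq_eq_one hsq)]
    exact inv_eq_of_mul_eq_one_right (by rw [← pow_two, hsq])
  obtain ⟨n, hn⟩ := IsPGroup.iff_card.1
    (CommGroup.primaryComponent.isPGroup.to_le fun c hc ↦ mem_twoClassGroup_of_sq_eq_one hc :
      IsPGroup 2 H)
  have hdvd : 2 ^ n ∣ Nat.card (ClassGroup (𝓞 F)) * 2 := by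
    rw [← hn]
    refine (Subgroup.card_dvd_of_le hfixed).trans
      (Nat.dvd_of_mul_dvd_mul_left (k := 2 ^ t) (by positivity) (ht.trans (dvd_of_eq ?_)))
    ring
  apply isCyclic_primaryComponent
  rw [hn]
  exact Nat.le_of_dvd two_pos
    (((Nat.coprime_two_left.2 hF).pow_left n).dvd_of_dvd_mul_left hdvd)

end QuadraticConj

/-! ### Adjoining the square root of a natural number -/

/-- `K` is the quadratic extension of `F`, embedded by `f`, obtained by adjoining a square root `θ`
of the natural number `n`. -/
structure SqrtExtension {F K : Type*} [Field F] [Field K] (f : F →+* K) (n : ℕ) (θ : K) :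
    Prop where
  sq_eq : θ ^ 2 = n
  sq_ne : ∀ a : F, a ^ 2 ≠ n
  exists_eq_add : ∀ x : K, ∃ a b : F, x = f a + f b * θ

namespace SqrtExtension

variable {F K : Type*} [Field F] [Field K] {f : F →+* K} {n : ℕ} {θ : K}

section Subfield

lemma eq_zero_of_sq_sub_eq_zero (hn : ∀ a : F, a ^ 2 ≠ n) {a b : F} (h : a ^ 2 - n * b ^ 2 = 0) :
    a = 0 ∧ b = 0 := by
  obtain rfl | hb := eq_or_ne b 0
  · exact ⟨by simpa using h, rfl⟩
  · refine absurd ?_ (hn (a / b))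
    field_simp
    linear_combination h

/-- The subfield `{a + b θ}` of `K`. -/
def sqrtSubfield (f : F →+* K) (hθ : θ ^ 2 = n) (hn : ∀ a : F, a ^ 2 ≠ n) : Subfield K where
  carrier := {x | ∃ a b : F, x = f a + f b * θ}
  mul_mem' := by
    rintro _ _ ⟨a, b, rfl⟩ ⟨c, d, rfl⟩
    refine ⟨a * c + n * (b * d), a * d + b * c, ?_⟩
    simp only [map_add, map_mul, map_natCast, ← hθ]
    ring
  one_mem' := ⟨1, 0, by simp⟩
  add_mem' := by
    rintro _ _ ⟨a, b, rfl⟩ ⟨c, d, rfl⟩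
    refine ⟨a + c, b + d, ?_⟩
    simp only [map_add]
    ring
  zero_mem' := ⟨0, 0, by simp⟩
  neg_mem' := by
    rintro _ ⟨a, b, rfl⟩
    refine ⟨-a, -b, ?_⟩
    simp only [map_neg]
    ring
  inv_mem' := by
    rintro _ ⟨a, b, rfl⟩
    by_cases h0 : a ^ 2 - n * b ^ 2 = 0
    · obtain ⟨rfl, rfl⟩ := eq_zero_of_sq_sub_eq_zero hn h0
      exact ⟨0, 0, by simp⟩
    · refine ⟨a * (a ^ 2 - n * b ^ 2)⁻¹, -b * (a ^ 2 - n * b ^ 2)⁻¹, Eq.symm ?_⟩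
      have hinv := congrArg f (mul_inv_cancel₀ h0)
      apply eq_inv_of_mul_eq_one_left
      simp only [map_mul, map_sub, map_pow, map_natCast, map_one, map_neg, ← hθ] at hinv ⊢
      linear_combination hinv

lemma of_subfield_eq_top (hθ : θ ^ 2 = n) (hn : ∀ a : F, a ^ 2 ≠ n)
    (htop : ∀ S : Subfield K, (∀ a, f a ∈ S) → θ ∈ S → S = ⊤) : SqrtExtension f n θ where
  sq_eq := hθ
  sq_ne := hn
  exists_eq_add x := by
    have := htop (sqrtSubfield f hθ hn) (fun a ↦ ⟨a, 0, by simp⟩) ⟨0, 1, by simp⟩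
    exact (this ▸ Subfield.mem_top x : x ∈ sqrtSubfield f hθ hn)

end Subfield

variable (h : SqrtExtension f n θ)

include h

lemma natCast_ne_zero : (n : F) ≠ 0 := fun h0 ↦ h.sq_ne 0 (by rw [h0, zero_pow two_ne_zero])

lemma root_ne_zero : θ ≠ 0 := by
  rintro rfl
  refine h.natCast_ne_zero (f.injective ?_)
  rw [map_natCast, map_zero, ← h.sq_eq, zero_pow two_ne_zero]

lemma coeff_unique {a b c d : F} (e : f a + f b * θ = f c + f d * θ) : a = c ∧ b = d := by
  have hnorm : (a - c) ^ 2 - n * (b - d) ^ 2 = 0 := f.injective (by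
    simp only [map_sub, map_mul, map_pow, map_natCast, map_zero, ← h.sq_eq]
    linear_combination (f a - f c - (f b - f d) * θ) * e)
  obtain ⟨hac, hbd⟩ := eq_zero_of_sq_sub_eq_zero h.sq_ne hnorm
  exact ⟨sub_eq_zero.1 hac, sub_eq_zero.1 hbd⟩

lemma exists_lift {R : Type*} [CommRing R] (g : F →+* R) {r : R} (hr : r ^ 2 = n) :
    ∃ G : K →+* R, (∀ a, G (f a) = g a) ∧ G θ = r := by
  choose A B hAB using h.exists_eq_add
  have coeff_eq (x : K) (a b : F) (e : x = f a + f b * θ) : A x = a ∧ B x = b :=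
    h.coeff_unique ((hAB x).symm.trans e)
  have map_eq (x : K) (a b : F) (e : x = f a + f b * θ) :
      g (A x) + g (B x) * r = g a + g b * r := by
    rw [(coeff_eq x a b e).1, (coeff_eq x a b e).2]
  refine ⟨⟨⟨⟨fun x ↦ g (A x) + g (B x) * r, ?_⟩, fun x y ↦ ?_⟩, ?_, fun x y ↦ ?_⟩, fun a ↦ ?_, ?_⟩
  · exact (map_eq 1 1 0 (by simp)).trans (by simp)
  · refine (map_eq (x * y) (A x * A y + n * (B x * B y)) (A x * B y + B x * A y) ?_).trans ?_
    · conv_lhs => rw [hAB x, hAB y]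
      simp only [map_mul, map_add, map_natCast, ← h.sq_eq]
      ring
    · simp only [map_mul, map_add, map_natCast, ← hr]
      ring
  · exact (map_eq 0 0 0 (by simp)).trans (by simp)
  · refine (map_eq (x + y) (A x + A y) (B x + B y) ?_).trans ?_
    · conv_lhs => rw [hAB x, hAB y]
      simp only [map_add]
      ring
    · simp only [map_add]
      ring
  · exact (map_eq (f a) a 0 (by simp)).trans (by simp)
  · exact (map_eq θ 0 1 (by simp)).trans (by simp)

lemma exists_conj : ∃ σ : K →+* K, (∀ a, σ (f a) = f a) ∧ σ θ = -θ :=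
  h.exists_lift f (by rw [neg_sq, h.sq_eq])

lemma sq_ne_natCast {m : ℕ} (hm : ∀ a : F, a ^ 2 ≠ m) (hmn : ∀ a : F, a ^ 2 ≠ (m * n : ℕ))
    [CharZero F] (x : K) : x ^ 2 ≠ m := by
  intro hx
  obtain ⟨a, b, rfl⟩ := h.exists_eq_add x
  obtain ⟨hre, him⟩ : a ^ 2 + n * b ^ 2 = m ∧ 2 * a * b = 0 := h.coeff_unique (by
    simp only [map_add, map_mul, map_pow, map_natCast, map_zero, map_ofNat, ← hx, ← h.sq_eq]
    ring)
  obtain ha | rfl := mul_eq_zero.1 him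
  · obtain rfl : a = 0 := by simpa using ha
    apply hmn (n * b)
    push_cast
    rw [← hre]
    ring
  · exact hm a (by rw [← hre]; ring)

lemma ringHom_ext {R : Type*} [CommRing R] {φ ψ : K →+* R} (hf : φ.comp f = ψ.comp f)
    (hθ : φ θ = ψ θ) : φ = ψ := RingHom.ext fun x ↦ by
  obtain ⟨a, b, rfl⟩ := h.exists_eq_add x
  rw [map_add, map_add, map_mul, map_mul, hθ]
  exact congrArg₂ (· + · * ψ θ) (RingHom.congr_fun hf a) (RingHom.congr_fun hf b)

variable {σ : K →+* K} (hf : ∀ a, σ (f a) = f a) (hθ : σ θ = -θ)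

include hf hθ

lemma quadraticConj [CharZero F] : QuadraticConj f σ where
  involutive x := by
    obtain ⟨a, b, rfl⟩ := h.exists_eq_add x
    simp [hf, hθ]
  apply_eq_self_iff x := by
    refine ⟨fun hx ↦ ?_, fun ⟨a, ha⟩ ↦ ha ▸ hf a⟩
    obtain ⟨a, b, rfl⟩ := h.exists_eq_add x
    have hconj : f a + f (-b) * θ = f a + f b * θ := by
      rw [← hx]
      simp [hf, hθ]
    exact ⟨a, by simp [neg_eq_self.1 (h.coeff_unique hconj).2]⟩
  exists_apply_ne := ⟨θ, by
    have : CharZero K := charZero_of_injective_ringHom f.injective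
    rw [hθ]
    exact neg_ne_self.2 h.root_ne_zero⟩

lemma exists_mul_conj_eq (x : K) : ∃ a b : F, x * σ x = f (a ^ 2 - n * b ^ 2) := by
  obtain ⟨a, b, rfl⟩ := h.exists_eq_add x
  refine ⟨a, b, ?_⟩
  simp only [map_add, map_mul, map_pow, map_natCast, map_sub, hf, hθ, ← h.sq_eq]
  ring

omit hf hθ in
lemma isTotallyReal [IsTotallyReal F] : IsTotallyReal K := by
  refine ⟨fun v ↦ ?_⟩
  rw [← InfinitePlace.mk_embedding v, InfinitePlace.isReal_mk_iff, ComplexEmbedding.isReal_iff]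
  set φ := v.embedding
  have hφf (a : F) : starRingEnd ℂ (φ (f a)) = φ (f a) := by
    have hreal : ComplexEmbedding.IsReal (φ.comp f) :=
      InfinitePlace.isReal_mk_iff.1 (IsTotallyReal.isReal _)
    exact RingHom.congr_fun (ComplexEmbedding.isReal_iff.1 hreal) a
  have hφθ : starRingEnd ℂ (φ θ) = φ θ := by
    have hsq : φ θ ^ 2 = ((Real.sqrt n : ℝ) : ℂ) ^ 2 := by
      rw [← map_pow, h.sq_eq, map_natCast, ← Complex.ofReal_pow, Real.sq_sqrt n.cast_nonneg,
        Complex.ofReal_natCast]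
    obtain hroot | hroot := sq_eq_sq_iff_eq_or_eq_neg.1 hsq <;> simp [hroot]
  ext x
  obtain ⟨a, b, rfl⟩ := h.exists_eq_add x
  simp only [ComplexEmbedding.conjugate_coe_eq, map_add, map_mul, hφf, hφθ]

end SqrtExtension

/-! ### Counting ramified primes -/

section Counting

variable {K : Type*} [Field K] [NumberField K]

/-- The set of primes of `K` containing both `a` and `b`. -/
def commonPrimes (a b : 𝓞 K) : Set (Ideal (𝓞 K)) := {P | P.IsPrime ∧ a ∈ P ∧ b ∈ P}

lemma exists_absNorm_eq_prime_pow {l : ℕ} (hl : l.Prime) (P : Ideal (𝓞 K)) [hP : P.IsPrime]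
    (hlP : (l : 𝓞 K) ∈ P) : ∃ k ≠ 0, Ideal.absNorm P = l ^ k := by
  have hdvd : Ideal.absNorm P ∣ l ^ Module.finrank ℤ (𝓞 K) := by
    rw [← Ideal.absNorm_span_natCast]
    exact map_dvd _ (Ideal.dvd_span_singleton.2 hlP)
  obtain ⟨k, -, hk⟩ := (Nat.dvd_prime_pow hl).1 hdvd
  refine ⟨k, ?_, hk⟩
  rintro rfl
  exact hP.ne_top (Ideal.absNorm_eq_one_iff.1 hk)

lemma prime_dvd_absNorm {l : ℕ} (hl : l.Prime) (P : Ideal (𝓞 K)) [P.IsPrime]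
    (hlP : (l : 𝓞 K) ∈ P) : l ∣ Ideal.absNorm P := by
  obtain ⟨k, hk, hPk⟩ := exists_absNorm_eq_prime_pow hl P hlP
  exact hPk ▸ dvd_pow_self l hk

lemma sq_prime_dvd_absNorm {l : ℕ} (hl : l.Prime) (hno : IsEmpty (𝓞 K →+* ZMod l))
    (P : Ideal (𝓞 K)) [P.IsPrime] (hlP : (l : 𝓞 K) ∈ P) : l ^ 2 ∣ Ideal.absNorm P := by
  obtain ⟨k, hk, hPk⟩ := exists_absNorm_eq_prime_pow hl P hlP
  obtain rfl | hk1 := eq_or_ne k 1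
  · rw [pow_one, Ideal.absNorm_apply, Submodule.cardQuot_apply] at hPk
    have : Finite (𝓞 K ⧸ P) := Nat.finite_of_card_ne_zero (hPk ▸ hl.ne_zero)
    have := Fintype.ofFinite (𝓞 K ⧸ P)
    rw [Nat.card_eq_fintype_card] at hPk
    exact hno.elim ((ZMod.ringEquivOfPrime _ hl hPk).symm.toRingHom.comp (Ideal.Quotient.mk P))
  · exact hPk ▸ pow_dvd_pow _ (by omega)

lemma finite_commonPrimes {a : 𝓞 K} (ha : a ≠ 0) (b : 𝓞 K) : (commonPrimes a b).Finite := by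
  have hspan : Ideal.span {a} ≠ 0 := by rwa [Ne, Ideal.zero_eq_bot, Ideal.span_singleton_eq_bot]
  have : Finite {P : Ideal (𝓞 K) | P ∣ Ideal.span {a}} :=
    @Finite.of_fintype _ (UniqueFactorizationMonoid.fintypeSubtypeDvd _ hspan)
  exact (Set.toFinite {P : Ideal (𝓞 K) | P ∣ Ideal.span {a}}).subset
    fun P hP ↦ Ideal.dvd_span_singleton.2 hP.2.1

lemma prod_dvd_span_singleton {a : 𝓞 K} (ha : a ≠ 0) (S : Finset (Ideal (𝓞 K)))
    (hS : ∀ P ∈ S, P.IsPrime ∧ a ∈ P) : ∏ P ∈ S, P ∣ Ideal.span {a} := by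
  refine Finset.prod_primes_dvd _ (fun P hP ↦ Ideal.prime_of_isPrime ?_ (hS P hP).1)
    fun P hP ↦ Ideal.dvd_span_singleton.2 (hS P hP).2
  rintro rfl
  exact ha (hS _ hP).2

lemma encard_commonPrimes_le {a : 𝓞 K} {l m w j : ℕ} (hl : l.Prime) (hm : ¬ l ∣ m) (hw0 : w ≠ 0)
    (ha : Ideal.absNorm (Ideal.span {a}) = (l * m) ^ (w * j))
    (hw : ∀ P : Ideal (𝓞 K), P.IsPrime → (l : 𝓞 K) ∈ P → l ^ w ∣ Ideal.absNorm P) :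
    (commonPrimes a (l : 𝓞 K)).encard ≤ j := by
  have ha0 : a ≠ 0 := by
    rintro rfl
    have hlm : l * m ≠ 0 := mul_ne_zero hl.ne_zero fun hm0 ↦ hm (hm0 ▸ dvd_zero l)
    exact pow_ne_zero (w * j) hlm (by simpa using ha.symm)
  have hfin := finite_commonPrimes ha0 (l : 𝓞 K)
  rw [hfin.encard_eq_coe_toFinset_card, Nat.cast_le]
  have hprod := map_dvd Ideal.absNorm (prod_dvd_span_singleton ha0 hfin.toFinset fun P hP ↦
    have hP := hfin.mem_toFinset.1 hP
    ⟨hP.1, hP.2.1⟩)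
  have hpow : l ^ (w * hfin.toFinset.card) ∣ (l * m) ^ (w * j) := by
    rw [← ha, pow_mul, ← Finset.prod_const]
    refine dvd_trans ?_ (map_prod (Ideal.absNorm (S := 𝓞 K)) _ _ ▸ hprod)
    exact Finset.prod_dvd_prod_of_dvd _ _ fun P hP ↦
      have hP := hfin.mem_toFinset.1 hP
      hw P hP.1 hP.2.2
  rw [mul_pow] at hpow
  have hcop : Nat.Coprime (l ^ (w * hfin.toFinset.card)) (m ^ (w * j)) :=
    ((hl.coprime_iff_not_dvd.2 hm).pow_left _).pow_right _
  exact le_of_mul_le_mul_left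
    ((Nat.pow_dvd_pow_iff_le_right hl.one_lt).1 (hcop.dvd_of_dvd_mul_right hpow))
    (Nat.pos_of_ne_zero hw0)

lemma absNorm_span_of_sq_eq {a : 𝓞 K} {n d : ℕ} (ha : a ^ 2 = n)
    (hd : Module.finrank ℚ K = 2 * d) : Ideal.absNorm (Ideal.span {a}) = n ^ d := by
  have hsq : Ideal.absNorm (Ideal.span {a}) ^ 2 = (n ^ d) ^ 2 := by
    rw [← map_pow, Ideal.span_singleton_pow, ha, Ideal.absNorm_span_natCast, RingOfIntegers.rank,
      hd, mul_comm, pow_mul]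
  exact Nat.pow_left_injective two_ne_zero hsq

lemma absNorm_span_mapRingHom {σ : K →+* K} (hσ : Function.Involutive σ) (a : 𝓞 K) :
    Ideal.absNorm (Ideal.span {mapRingHom σ a}) = Ideal.absNorm (Ideal.span {a}) := by
  have hid : (mapRingHom σ).comp (mapRingHom σ) = RingHom.id (𝓞 K) :=
    RingHom.ext fun x ↦ RingOfIntegers.ext (hσ x)
  rw [Ideal.absNorm_span_singleton, Ideal.absNorm_span_singleton]
  exact congrArg _ (Algebra.norm_eq_of_algEquiv
    (RingEquiv.ofRingHom _ _ hid hid).toIntAlgEquiv a)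

lemma absNorm_span_of_mul_conj_eq {σ : K →+* K} (hσ : Function.Involutive σ) {a : 𝓞 K} {n : ℤ}
    {d : ℕ} (ha : a * mapRingHom σ a = n) (hd : Module.finrank ℚ K = 2 * d) :
    Ideal.absNorm (Ideal.span {a}) = n.natAbs ^ d := by
  have hsq : Ideal.absNorm (Ideal.span {a}) ^ 2 = (n.natAbs ^ d) ^ 2 := by
    rw [pow_two]
    nth_rewrite 2 [← absNorm_span_mapRingHom hσ]
    rw [← map_mul, Ideal.span_singleton_mul_span_singleton, ha, Ideal.absNorm_span_singleton,
      ← eq_intCast (algebraMap ℤ (𝓞 K)), Algebra.norm_algebraMap, RingOfIntegers.rank, hd,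
      Int.natAbs_pow, mul_comm, pow_mul]
  exact Nat.pow_left_injective two_ne_zero hsq

end Counting

section SquareRoots

variable {K : Type*} [Field K]

lemma exists_integer_sqrt {θ : K} {n : ℕ} (hθ : θ ^ 2 = n) :
    ∃ t : 𝓞 K, (t : K) = θ ∧ t ^ 2 = n := by
  have hint : IsIntegral ℤ θ := IsIntegral.of_pow two_pos (by
    rw [hθ]
    exact isIntegral_natCast n)
  obtain ⟨t, rfl⟩ : ∃ t : 𝓞 K, algebraMap (𝓞 K) K t = θ := ⟨⟨θ, hint⟩, rfl⟩
  exact ⟨t, rfl, RingOfIntegers.coe_injective (by rwa [map_pow, map_natCast])⟩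

lemma mapRingHom_eq_neg {σ : K →+* K} {t : 𝓞 K} (h : σ t = -t) : mapRingHom σ t = -t :=
  RingOfIntegers.ext (by simpa using h)

lemma isEmpty_ringHom_zmod {t : 𝓞 K} {n l : ℕ} (ht : t ^ 2 = n)
    (hn : ¬ IsSquare (n : ZMod l)) : IsEmpty (𝓞 K →+* ZMod l) :=
  ⟨fun φ ↦ hn ⟨φ t, by rw [← map_natCast φ, ← ht, pow_two, map_mul]⟩⟩

lemma two_mul_mem_of_mem_ramifiedPrimes {σ : K →+* K} {P : Ideal (𝓞 K)}
    (hP : P ∈ ramifiedPrimes σ) {t : 𝓞 K} (ht : mapRingHom σ t = -t) : 2 * t ∈ P := by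
  have := P.neg_mem (hP.2.2 t)
  rw [ht] at this
  convert this using 1
  ring

variable [CharZero K]

lemma exists_two_mul_eq_one_add {t : 𝓞 K} {n : ℕ} (ht : t ^ 2 = n) (hn : n % 4 = 1) :
    ∃ x : 𝓞 K, 2 * x = 1 + t ∧ x ^ 2 = x + (n / 4 : ℕ) := by
  have hsq : ((1 + t : K) / 2) ^ 2 = (1 + t) / 2 + (n / 4 : ℕ) := by
    have htK : (t : K) ^ 2 = 4 * (n / 4 : ℕ) + 1 := by
      have hn4 : 4 * (n / 4) + 1 = n := by omega
      have := congrArg (algebraMap (𝓞 K) K) ht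
      rw [map_pow, map_natCast, ← hn4] at this
      exact_mod_cast this
    linear_combination htK / 4
  have hint : IsIntegral ℤ ((1 + t : K) / 2) := by
    refine ⟨.X ^ 2 - .X - .C ((n / 4 : ℕ) : ℤ), by monicity!, ?_⟩
    simp only [Polynomial.eval₂_sub, Polynomial.eval₂_X_pow, Polynomial.eval₂_X,
      map_natCast, Polynomial.eval₂_natCast, hsq]
    ring
  obtain ⟨x, hx⟩ : ∃ x : 𝓞 K, algebraMap (𝓞 K) K x = (1 + t) / 2 := ⟨⟨_, hint⟩, rfl⟩
  refine ⟨x, RingOfIntegers.coe_injective ?_, RingOfIntegers.coe_injective ?_⟩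
  · rw [map_mul, map_add, map_one, map_ofNat, hx, mul_div_cancel₀ _ two_ne_zero]
  · rw [map_pow, map_add, map_natCast, hx, hsq]

lemma mem_of_mem_ramifiedPrimes {σ : K →+* K} {P : Ideal (𝓞 K)} (hP : P ∈ ramifiedPrimes σ)
    {t : 𝓞 K} (ht : mapRingHom σ t = -t) {n : ℕ} (htn : t ^ 2 = n) (hn : n % 4 = 1) : t ∈ P := by
  obtain ⟨x, hx, -⟩ := exists_two_mul_eq_one_add htn hn
  have hσx : 2 * mapRingHom σ x = 1 - t := by
    have := congrArg (mapRingHom σ) hx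
    rwa [map_mul, map_add, map_one, ht, map_ofNat, ← sub_eq_add_neg] at this
  have hdiff : x - mapRingHom σ x = t :=
    mul_left_cancel₀ (two_ne_zero (α := 𝓞 K)) (by linear_combination hx - hσx)
  rw [← hdiff, ← neg_sub]
  exact P.neg_mem (hP.2.2 x)

lemma isEmpty_ringHom_zmod_two {t : 𝓞 K} {n : ℕ} (ht : t ^ 2 = n) (hn : n % 8 = 5) :
    IsEmpty (𝓞 K →+* ZMod 2) := by
  refine ⟨fun φ ↦ ?_⟩
  obtain ⟨x, -, hx⟩ := exists_two_mul_eq_one_add ht (by omega)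
  have hodd : ((n / 4 : ℕ) : ZMod 2) = 1 := ZMod.natCast_eq_one_iff_odd.2 (by grind)
  have hφx : φ x ^ 2 = φ x + 1 := by rw [← hodd, ← map_natCast φ, ← map_add, ← map_pow, hx]
  revert hφx
  generalize φ x = y
  decide +revert

end SquareRoots

/-! ### Local obstructions to being a norm -/

section Padic

open Polynomial (X C)

variable {l : ℕ} [hl : Fact l.Prime]

lemma toZMod_ne_zero_iff {u : ℤ_[l]} : PadicInt.toZMod u ≠ 0 ↔ ‖u‖ = 1 := by
  rw [Ne, ← RingHom.mem_ker, PadicInt.ker_toZMod, IsLocalRing.mem_maximalIdeal,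
    PadicInt.mem_nonunits, not_lt, (PadicInt.norm_le_one u).ge_iff_eq]

lemma exists_padicInt_coe_eq {x : ℚ_[l]} (hx : ‖x ^ 2‖ ≤ 1) : ∃ y : ℤ_[l], (y : ℚ_[l]) = x :=
  ⟨⟨x, (pow_le_one_iff_of_nonneg (norm_nonneg x) two_ne_zero).1 (norm_pow x 2 ▸ hx)⟩, rfl⟩

lemma norm_sq_ne_norm_mul_sq {n m : ℕ} (hn : n = l * m) (hm : ¬ l ∣ m) {x y : ℚ_[l]}
    (hx : x ≠ 0) : ‖x ^ 2‖ ≠ ‖-(n * y ^ 2 : ℚ_[l])‖ := by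
  have hm1 : ‖(m : ℚ_[l])‖ = 1 :=
    Padic.norm_natCast_eq_one_iff.2 ((Nat.Prime.coprime_iff_not_dvd hl.out).2 hm)
  have hl0 : (l : ℝ) ≠ 0 := Nat.cast_ne_zero.2 hl.out.ne_zero
  intro heq
  rw [norm_neg, hn, Nat.cast_mul, norm_mul, norm_mul, hm1, mul_one, Padic.norm_p, norm_pow,
    norm_pow] at heq
  obtain rfl | hy := eq_or_ne y 0
  · simp [hx] at heq
  rw [Padic.norm_eq_zpow_neg_valuation hx, Padic.norm_eq_zpow_neg_valuation hy, ← zpow_neg_one,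
    ← zpow_natCast, ← zpow_natCast, ← zpow_mul, ← zpow_mul, ← zpow_add₀ hl0] at heq
  have := zpow_right_injective₀ (Nat.cast_pos.2 hl.out.pos)
    (Nat.cast_ne_one.2 hl.out.ne_one : (l : ℝ) ≠ 1) heq
  push_cast at this
  omega

lemma isSquare_toZMod_of_eq_sq_sub {n m : ℕ} (hn : n = l * m) (hm : ¬ l ∣ m) {u : ℤ_[l]}
    {x y : ℚ_[l]} (hu : (u : ℚ_[l]) = x ^ 2 - n * y ^ 2) : IsSquare (PadicInt.toZMod u) := by
  have hx : ‖x ^ 2‖ ≤ 1 := by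
    obtain rfl | hx0 := eq_or_ne x 0
    · simp
    · rw [sub_eq_add_neg] at hu
      have hmax := Padic.add_eq_max_of_ne (norm_sq_ne_norm_mul_sq hn hm (y := y) hx0)
      exact (le_max_left _ _).trans ((hmax.symm.trans (congrArg _ hu.symm)).trans_le u.2)
  obtain ⟨a, rfl⟩ := exists_padicInt_coe_eq hx
  have hdiff : ((u - a ^ 2 : ℤ_[l]) : ℚ_[l]) = -(n * y ^ 2) := by
    push_cast
    rw [hu]
    ring
  refine ⟨PadicInt.toZMod a, ?_⟩
  rw [← sub_eq_zero, ← pow_two, ← map_pow, ← map_sub]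
  by_contra h0
  have h1 := toZMod_ne_zero_iff.1 h0
  rw [PadicInt.norm_def, hdiff] at h1
  exact norm_sq_ne_norm_mul_sq hn hm (x := 1) one_ne_zero (by rw [h1, one_pow, norm_one])

lemma exists_sq_eq_of_isSquare_toZMod (h2 : l ≠ 2) {u : ℤ_[l]}
    (hu : IsSquare (PadicInt.toZMod u)) (hu0 : PadicInt.toZMod u ≠ 0) :
    ∃ r : ℤ_[l], r ^ 2 = u := by
  obtain ⟨b, hb⟩ := hu
  obtain ⟨a, rfl⟩ := ZMod.natCast_zmod_surjective b
  have h20 : (2 : ZMod l) ≠ 0 := by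
    have := mt (Nat.prime_dvd_prime_iff_eq hl.out Nat.prime_two).1 h2
    rwa [← ZMod.natCast_eq_zero_iff, Nat.cast_ofNat] at this
  have ha0 : (a : ZMod l) ≠ 0 := by
    rintro ha
    exact hu0 (by rw [hb, ha, mul_zero])
  have hderiv : ‖(2 * a : ℤ_[l])‖ = 1 := by
    rw [← toZMod_ne_zero_iff, map_mul, map_natCast, map_ofNat]
    exact mul_ne_zero h20 ha0
  have happrox : ‖(a : ℤ_[l]) ^ 2 - u‖ < 1 := by
    refine (PadicInt.norm_le_one _).lt_of_ne fun h ↦ toZMod_ne_zero_iff.2 h ?_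
    rw [map_sub, map_pow, map_natCast, hb, pow_two, sub_self]
  obtain ⟨z, hz, -⟩ := hensels_lemma (F := X ^ 2 - C u) (a := (a : ℤ_[l])) (by
    simpa [Polynomial.derivative_X_pow, one_add_one_eq_two, ← norm_mul, hderiv] using happrox)
  exact ⟨z, sub_eq_zero.1 (by simpa using hz)⟩

lemma exists_sq_eq_natCast (h2 : l ≠ 2) {n : ℕ} (hn : IsSquare (n : ZMod l)) (hn0 : ¬ l ∣ n) :
    ∃ r : ℤ_[l], r ^ 2 = n :=
  exists_sq_eq_of_isSquare_toZMod h2 (by rwa [map_natCast])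
    (by rwa [map_natCast, Ne, ZMod.natCast_eq_zero_iff])

lemma exists_sq_eq_natCast_two {n : ℕ} (hn : n % 8 = 1) : ∃ r : ℤ_[2], r ^ 2 = n := by
  obtain ⟨m, rfl⟩ : ∃ m, n = 8 * m + 1 := ⟨n / 8, by omega⟩
  have h2 : ‖(2 : ℤ_[2])‖ = 1 / 2 := by simpa using PadicInt.norm_p (p := 2)
  have h8 : ‖(8 : ℤ_[2])‖ = 1 / 8 := by
    rw [show (8 : ℤ_[2]) = 2 ^ 3 by norm_num, norm_pow, h2]
    norm_num
  obtain ⟨z, hz, -⟩ := hensels_lemma (F := X ^ 2 - C (8 * m + 1 : ℤ_[2])) (a := (1 : ℤ_[2])) (by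
    have := PadicInt.norm_le_one (m : ℤ_[2])
    suffices 8⁻¹ * ‖(m : ℤ_[2])‖ < (2 ^ 2)⁻¹ by simpa [one_add_one_eq_two, h2, h8] using this
    linarith)
  refine ⟨z, sub_eq_zero.1 ?_⟩
  push_cast
  simpa using hz

lemma sq_add_sq_ne_mul_sq {q : ℕ} (hq : q % 4 = 3) {x y z : ℤ_[2]} (hyz : y = 1 ∨ z = 1) :
    x ^ 2 + z ^ 2 ≠ q * y ^ 2 := by
  intro h
  have hq4 : ((q : ℕ) : ZMod (2 ^ 2)) = 3 := (ZMod.natCast_eq_natCast_iff' q 3 (2 ^ 2)).2 hq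
  have hyz4 := hyz.imp (congrArg (PadicInt.toZModPow 2)) (congrArg (PadicInt.toZModPow 2))
  have h4 := congrArg (PadicInt.toZModPow 2) h
  simp only [map_add, map_mul, map_pow, map_natCast, map_one, hq4] at h4 hyz4
  generalize PadicInt.toZModPow 2 x = a at h4
  generalize PadicInt.toZModPow 2 y = b at h4 hyz4
  generalize PadicInt.toZModPow 2 z = c at h4 hyz4
  revert a b c
  decide

lemma norm_sq_le_one_of_sq_add_sq_eq {q : ℕ} {x y z : ℚ_[2]} (h : x ^ 2 + z ^ 2 = q * y ^ 2)
    (hy : ‖y‖ ≤ 1) (hz : ‖z‖ ≤ 1) : ‖x ^ 2‖ ≤ 1 := by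
  have hx : x ^ 2 = q * y ^ 2 + -z ^ 2 := by rw [← h, add_neg_cancel_right]
  rw [hx]
  refine (Padic.nonarchimedean _ _).trans (max_le ?_ ?_)
  · rw [norm_mul, norm_pow]
    exact mul_le_one₀ (Padic.norm_int_le_one (z := q)) (by positivity)
      (pow_le_one₀ (norm_nonneg _) hy)
  · rw [norm_neg, norm_pow]
    exact pow_le_one₀ (norm_nonneg _) hz

lemma sq_sub_mul_sq_ne_neg_one {q : ℕ} (hq : q % 4 = 3) (x y : ℚ_[2]) :
    x ^ 2 - q * y ^ 2 ≠ -1 := by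
  intro h
  obtain hy | hy := le_or_gt ‖y‖ 1
  · have h' : x ^ 2 + 1 ^ 2 = q * y ^ 2 := by linear_combination h
    obtain ⟨a, rfl⟩ := exists_padicInt_coe_eq
      (norm_sq_le_one_of_sq_add_sq_eq h' hy norm_one.le)
    exact sq_add_sq_ne_mul_sq hq (x := a) (y := ⟨y, hy⟩) (.inr rfl)
      (Subtype.ext (by push_cast; exact h'))
  · have hy0 : y ≠ 0 := norm_pos_iff.1 (one_pos.trans hy)
    have hz : ‖y⁻¹‖ ≤ 1 := norm_inv y ▸ inv_le_one_of_one_le₀ hy.le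
    have h' : (x * y⁻¹) ^ 2 + (y⁻¹) ^ 2 = q * 1 ^ 2 := by
      field_simp
      linear_combination h
    obtain ⟨a, ha⟩ := exists_padicInt_coe_eq
      (norm_sq_le_one_of_sq_add_sq_eq h' norm_one.le hz)
    rw [← ha] at h'
    exact sq_add_sq_ne_mul_sq hq (x := a) (z := ⟨_, hz⟩) (.inl rfl)
      (Subtype.ext (by push_cast; exact h'))

end Padic

lemma not_isSquare_mul_of_isSquare {F : Type*} [Field F] {a b : F} (ha : ¬ IsSquare a)
    (hb : IsSquare b) (hb0 : b ≠ 0) : ¬ IsSquare (a * b) :=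
  fun h ↦ ha (mul_div_cancel_right₀ a hb0 ▸ h.div hb)

section ResidueHom

variable {F K : Type*} [Field F] [Field K] {f : F →+* K} {σ : K →+* K} {l : ℕ} [Fact l.Prime]

lemma norm_map_integer_le_one (g : F →+* ℚ_[l]) (x : 𝓞 F) : ‖g x‖ ≤ 1 := by
  have hx : IsIntegral ℤ (g x) := x.2.map g.toIntAlgHom
  obtain ⟨y, hy⟩ :=
    (IsIntegrallyClosed.isIntegral_iff (R := ℤ_[l])).1 (hx.tower_top (A := ℤ_[l]))
  exact hy ▸ y.2

/-- Reduction modulo `l` of the integers of a field embedded in the `l`-adic numbers. -/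
noncomputable def residueHom (g : F →+* ℚ_[l]) : 𝓞 F →+* ZMod l :=
  PadicInt.toZMod.comp ((g.comp (algebraMap (𝓞 F) F)).codRestrict (PadicInt.subring l)
    (norm_map_integer_le_one g))

lemma residueHom_eq (g : F →+* ℚ_[l]) {x : 𝓞 F} {u : ℤ_[l]} (hu : g x = u) :
    residueHom g x = PadicInt.toZMod u :=
  congrArg PadicInt.toZMod (Subtype.ext hu)

lemma residueHom_mapRingHom {g₀ : F →+* ℚ_[l]} {g : K →+* ℚ_[l]} (hg : ∀ x, g (f x) = g₀ x)
    (x : 𝓞 F) : residueHom g (mapRingHom f x) = residueHom g₀ x :=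
  residueHom_eq g (u := ⟨g₀ x, norm_map_integer_le_one g₀ x⟩) (hg x)

lemma residueHom_eq_neg {g g' : F →+* ℚ_[l]} {x : 𝓞 F} (h : g' x = -g x) :
    residueHom g' x = -residueHom g x := by
  rw [← map_neg]
  exact residueHom_eq g' (u := ⟨g (-x : 𝓞 F), norm_map_integer_le_one g _⟩) (by simp [h])

lemma residueHom_mul_residueHom_of_eq_neg {n : ℕ} {g g' : F →+* ℚ_[l]} {z : 𝓞 F} (hz : z ^ 2 = n)
    (hgz : g' z = -g z) (x y : ℤ) :
    residueHom g (x + y * z) * residueHom g' (x + y * z) = (x ^ 2 - n * y ^ 2 : ℤ) := by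
  have hz' : residueHom g z ^ 2 = n := by rw [← map_pow, hz, map_natCast]
  simp only [map_add, map_mul, map_intCast, residueHom_eq_neg hgz]
  push_cast
  linear_combination -(y : ZMod l) ^ 2 * hz'

namespace SqrtExtension

variable {n m : ℕ} {θ : K} (h : SqrtExtension f n θ)

include h

lemma exists_lift_padic (g₀ : F →+* ℚ_[l]) (h2 : l ≠ 2) (hn : IsSquare (n : ZMod l))
    (hn0 : ¬ l ∣ n) : ∃ g g' : K →+* ℚ_[l],
      (∀ x, g (f x) = g₀ x) ∧ (∀ x, g' (f x) = g₀ x) ∧ g' θ = -g θ := by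
  obtain ⟨r, hr⟩ := exists_sq_eq_natCast h2 hn hn0
  have hr' : (r : ℚ_[l]) ^ 2 = n := by rw [← PadicInt.coe_pow, hr, PadicInt.coe_natCast]
  obtain ⟨g, hg, hgθ⟩ := h.exists_lift g₀ hr'
  obtain ⟨g', hg', hgθ'⟩ := h.exists_lift g₀ (r := -r) (by rw [neg_sq, hr'])
  exact ⟨g, g', hg, hg', by rw [hgθ, hgθ']⟩

variable (hf : ∀ a, σ (f a) = f a) (hθ : σ θ = -θ) (hn : n = l * m) (hm : ¬ l ∣ m)

include hf hθ hn hm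

lemma not_isNorm_of_residueHom (g : F →+* ℚ_[l]) {u : 𝓞 F} (hu : ¬ IsSquare (residueHom g u)) :
    ¬ IsNorm f σ u := by
  rintro ⟨x, hx⟩
  obtain ⟨a, b, hab⟩ := h.exists_mul_conj_eq hf hθ x
  have hgab := congrArg g (f.injective (hx.symm.trans hab))
  rw [map_sub, map_mul, map_pow, map_pow, map_natCast] at hgab
  exact hu (isSquare_toZMod_of_eq_sq_sub (u := ⟨g u, norm_map_integer_le_one g u⟩) hn hm hgab)

lemma not_isNorm_of_residueHom_mul (g g' : F →+* ℚ_[l]) {u : 𝓞 F}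
    (hu : ¬ IsSquare (residueHom g u * residueHom g' u)) : ¬ IsNorm f σ u := by
  by_cases hg : IsSquare (residueHom g u)
  · exact h.not_isNorm_of_residueHom hf hθ hn hm g' fun hg' ↦ hu (hg.mul hg')
  · exact h.not_isNorm_of_residueHom hf hθ hn hm g hg

end SqrtExtension

lemma SqrtExtension.not_isNorm_neg_one {n m : ℕ} {θ : K} (hl4 : l % 4 = 3)
    (h : SqrtExtension f n θ) (hf : ∀ a, σ (f a) = f a) (hθ : σ θ = -θ) (hn : n = l * m)
    (hm : ¬ l ∣ m) (g : F →+* ℚ_[l]) : ¬ IsNorm f σ (((-1 : (𝓞 F)ˣ) : 𝓞 F) : F) := by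
  refine h.not_isNorm_of_residueHom hf hθ hn hm g ?_
  rw [Units.val_neg, Units.val_one, map_neg, map_one, ZMod.exists_sq_eq_neg_one_iff]
  omega

end ResidueHom

/-! ### The negative Pell equation -/

lemma exists_eq_mul_sq_of_isCoprime {X Y n y : ℤ} (hXY : IsCoprime X Y) (hn : n ≠ 0)
    (h : X * Y = n * y ^ 2) :
    ∃ d d' x z : ℤ, d * d' = n ∧ X = d * x ^ 2 ∧ Y = d' * z ^ 2 := by
  obtain ⟨d, d', ⟨a, rfl⟩, ⟨b, rfl⟩, rfl⟩ :=
    exists_dvd_and_dvd_of_dvd_mul (Dvd.intro (y ^ 2) h.symm)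
  have hab : IsCoprime a b := hXY.of_mul_left_right.of_mul_right_right
  have habsq : a * b = y ^ 2 := mul_left_cancel₀ hn (by linear_combination h)
  obtain ⟨x, hx⟩ := Int.sq_of_isCoprime hab habsq
  obtain ⟨z, hz⟩ := Int.sq_of_isCoprime hab.symm ((mul_comm b a).trans habsq)
  rw [← abs_eq (sq_nonneg _)] at hx hz
  obtain ⟨ha, hb⟩ | ⟨ha, hb⟩ :=
    nonneg_and_nonneg_or_nonpos_and_nonpos_of_mul_nonneg (habsq ▸ sq_nonneg y)
  · rw [abs_of_nonneg ha] at hx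
    rw [abs_of_nonneg hb] at hz
    exact ⟨d, d', x, z, rfl, by rw [hx], by rw [hz]⟩
  · rw [abs_of_nonpos ha] at hx
    rw [abs_of_nonpos hb] at hz
    exact ⟨-d, -d', x, z, by ring, by rw [← hx]; ring, by rw [← hz]; ring⟩

lemma exists_eq_mul_sq_of_isCoprime_of_prime {p : ℕ} (hp : p.Prime) {X Y y : ℤ}
    (hXY : IsCoprime X Y) (hX : 0 < X) (hY : 0 < Y) (h : X * Y = p * y ^ 2) :
    ∃ u v : ℤ, X = u ^ 2 ∧ Y = p * v ^ 2 ∨ X = p * u ^ 2 ∧ Y = v ^ 2 := by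
  obtain ⟨d, d', u, v, hd, rfl, rfl⟩ :=
    exists_eq_mul_sq_of_isCoprime hXY (Nat.cast_ne_zero.2 hp.ne_zero) h
  lift d to ℕ using (pos_of_mul_pos_left hX (sq_nonneg u)).le
  lift d' to ℕ using (pos_of_mul_pos_left hY (sq_nonneg v)).le
  norm_cast at hd
  refine ⟨u, v, ?_⟩
  obtain ⟨-, rfl⟩ | ⟨-, rfl⟩ := Nat.prime_mul_iff.1 (hd ▸ hp)
  · exact .inr ⟨by rw [← hd, mul_one], by rw [Nat.cast_one, one_mul]⟩
  · exact .inl ⟨by rw [Nat.cast_one, one_mul], by rw [← hd, one_mul]⟩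

lemma exists_sq_sub_mul_sq_eq {p : ℕ} (hp : p.Prime) (h2 : p ≠ 2) :
    ∃ a b : ℤ, a ^ 2 - p * b ^ 2 = -1 ∨ a ^ 2 - p * b ^ 2 = 2 ∨ a ^ 2 - p * b ^ 2 = -2 := by
  obtain ⟨s, hx1, -, hmin⟩ := Pell.IsFundamental.exists_of_not_isSquare (d := p)
    (Nat.cast_pos.2 hp.pos) (Nat.prime_iff_prime_int.1 hp).irreducible.not_isSquare
  have hs := s.prop
  obtain ⟨k, hk | hk⟩ := Int.even_or_odd' s.x
  · have hcop : IsCoprime (s.x - 1) (s.x + 1) := ⟨k, 1 - k, by rw [hk]; ring⟩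
    obtain ⟨u, v, ⟨hu, hv⟩ | ⟨hu, hv⟩⟩ := exists_eq_mul_sq_of_isCoprime_of_prime hp hcop
      (by linarith) (by linarith) (show _ = p * s.y ^ 2 by linear_combination hs)
    · exact ⟨u, v, .inr (.inr (by linarith))⟩
    · exact ⟨v, u, .inr (.inl (by linarith))⟩
  · have hy : Even s.y := by
      have hodd : Odd (p : ℤ) := by exact_mod_cast hp.odd_of_ne_two h2
      have hpy : (p : ℤ) * s.y ^ 2 = 2 * (2 * k * (k + 1)) := by
        rw [hk] at hs
        linarith
      exact (Int.even_pow' two_ne_zero).1 ((Int.even_mul.1 (hpy ▸ even_two_mul _)).resolve_left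
        (Int.not_even_iff_odd.2 hodd))
    obtain ⟨z, hz⟩ := hy
    have hkz : k * (k + 1) = p * z ^ 2 := by
      rw [hk, hz] at hs
      linarith
    obtain ⟨u, v, ⟨hu, hv⟩ | ⟨hu, hv⟩⟩ := exists_eq_mul_sq_of_isCoprime_of_prime hp
      ⟨-1, 1, by ring⟩ (by linarith) (by linarith) hkz
    · exact ⟨u, v, .inl (by linarith)⟩
    · have hlt : 1 < |v| := by
        by_contra! hle
        nlinarith [abs_nonneg v, sq_abs v]
      have := hmin (b := .mk |v| u (by rw [sq_abs]; linarith)) hlt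
      rw [Pell.Solution₁.x_mk] at this
      nlinarith [sq_abs v]

lemma exists_sq_sub_mul_sq_eq_neg_one {p : ℕ} (hp : p.Prime) (h4 : p % 4 = 1) :
    ∃ a b : ℤ, a ^ 2 - p * b ^ 2 = -1 := by
  obtain ⟨a, b, h⟩ := exists_sq_sub_mul_sq_eq hp (by rintro rfl; contradiction)
  refine ⟨a, b, h.resolve_right fun h ↦ ?_⟩
  have hp1 : ((p : ℕ) : ZMod 4) = 1 := (ZMod.natCast_eq_natCast_iff' p 1 4).2 h4
  have hab := h.imp (congrArg (Int.cast : ℤ → ZMod 4)) (congrArg (Int.cast : ℤ → ZMod 4))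
  push_cast at hab
  rw [hp1] at hab
  generalize (a : ZMod 4) = x at hab
  generalize (b : ZMod 4) = y at hab
  revert x y
  decide

lemma exists_sq_sub_mul_sq_eq_two_mul {p : ℕ} (hp : p.Prime) (h4 : p % 4 = 3) :
    ∃ a b e : ℤ, a ^ 2 - p * b ^ 2 = 2 * e ∧ (e = 1 ∨ e = -1) := by
  obtain ⟨a, b, h | h | h⟩ := exists_sq_sub_mul_sq_eq hp (by rintro rfl; contradiction)
  · exfalso
    have hp3 : ((p : ℕ) : ZMod 4) = 3 := (ZMod.natCast_eq_natCast_iff' p 3 4).2 h4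
    have hab := congrArg (Int.cast : ℤ → ZMod 4) h
    push_cast at hab
    rw [hp3] at hab
    generalize (a : ZMod 4) = x at hab
    generalize (b : ZMod 4) = y at hab
    revert x y
    decide
  · exact ⟨a, b, 1, h, .inl rfl⟩
  · exact ⟨a, b, -1, by linarith, .inr rfl⟩

section PrimeCounts

lemma encard_le_add_of_subset_union {α : Type*} {A B C : Set α} {b c : ℕ} (h : A ⊆ B ∪ C)
    (hB : B.encard ≤ b) (hC : C.encard ≤ c) : A.encard ≤ (b + c : ℕ) :=
  ((Set.encard_le_encard h).trans (Set.encard_union_le B C)).trans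
    (Nat.cast_add (R := ℕ∞) b c ▸ add_le_add hB hC)

variable {K : Type*} [Field K] {t : 𝓞 K}

lemma commonPrimes_natCast_mul (l m : ℕ) : commonPrimes t ((l * m : ℕ) : 𝓞 K) ⊆
    commonPrimes t (l : 𝓞 K) ∪ commonPrimes t (m : 𝓞 K) := by
  rintro P ⟨hP, htP, hlm⟩
  rw [Nat.cast_mul] at hlm
  exact (hP.mem_or_mem hlm).imp (⟨hP, htP, ·⟩) (⟨hP, htP, ·⟩)

lemma natCast_mem_of_sq_eq {n : ℕ} (ht : t ^ 2 = n) {P : Ideal (𝓞 K)} (htP : t ∈ P) :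
    (n : 𝓞 K) ∈ P :=
  ht ▸ P.pow_mem_of_mem htP 2 two_pos

lemma natCast_notMem_of_coprime {l m : ℕ} (h : l.Coprime m) {P : Ideal (𝓞 K)} [hP : P.IsPrime]
    (hl : (l : 𝓞 K) ∈ P) : (m : 𝓞 K) ∉ P := fun hm ↦ by
  obtain ⟨a, b, hab⟩ := Nat.isCoprime_iff_coprime.2 h
  refine hP.ne_top ((Ideal.eq_top_iff_one P).2 ?_)
  have hab : (a : 𝓞 K) * l + b * m = 1 := by exact_mod_cast congrArg (Int.cast : ℤ → 𝓞 K) hab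
  exact hab ▸ P.add_mem (P.mul_mem_left _ hl) (P.mul_mem_left _ hm)

variable [NumberField K]

lemma encard_commonPrimes_sqrt_le {n l m d : ℕ} (ht : t ^ 2 = n)
    (hd : Module.finrank ℚ K = 2 * d) (hl : l.Prime) (hn : n = l * m) (hm : ¬ l ∣ m) :
    (commonPrimes t (l : 𝓞 K)).encard ≤ d :=
  encard_commonPrimes_le (w := 1) hl hm one_ne_zero
    (by rw [absNorm_span_of_sq_eq ht hd, hn, one_mul])
    fun P _ hlP ↦ (pow_one l).symm ▸ prime_dvd_absNorm hl P hlP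

lemma encard_commonPrimes_prime_le {l d : ℕ} (hl : l.Prime) (ht : t ^ 2 = l)
    (hd : Module.finrank ℚ K = 2 * d) : (commonPrimes t (l : 𝓞 K)).encard ≤ d :=
  encard_commonPrimes_sqrt_le ht hd hl (mul_one l).symm hl.not_dvd_one

variable {σ : K →+* K}

lemma ramifiedPrimes_subset_commonPrimes (hσt : σ t = -t) {n : ℕ} (ht : t ^ 2 = n)
    (hn : n % 4 = 1) : ramifiedPrimes σ ⊆ commonPrimes t (n : 𝓞 K) := fun _ hP ↦
  have htP := mem_of_mem_ramifiedPrimes hP (mapRingHom_eq_neg hσt) ht hn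
  ⟨hP.1, htP, natCast_mem_of_sq_eq ht htP⟩

lemma encard_primes_over_two_le {q w j : ℕ} (ht : t ^ 2 = q) (hq : q % 4 = 3)
    (hσ : Function.Involutive σ) (hσt : σ t = -t) (hd : Module.finrank ℚ K = 2 * (w * j))
    (hw0 : w ≠ 0)
    (hw : ∀ P : Ideal (𝓞 K), P.IsPrime → ((2 : ℕ) : 𝓞 K) ∈ P → 2 ^ w ∣ Ideal.absNorm P) :
    {P : Ideal (𝓞 K) | P.IsPrime ∧ ((2 : ℕ) : 𝓞 K) ∈ P}.encard ≤ j := by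
  have hnorm : Ideal.absNorm (Ideal.span {1 + t}) = (2 * ((q - 1) / 2)) ^ (w * j) := by
    rw [show 2 * ((q - 1) / 2) = (1 - q : ℤ).natAbs by omega]
    refine absNorm_span_of_mul_conj_eq hσ ?_ hd
    rw [map_add, map_one, mapRingHom_eq_neg hσt]
    push_cast
    linear_combination -ht
  have hsq : (1 + t) ^ 2 = ((2 : ℕ) : 𝓞 K) * (t + ((q + 1) / 2 : ℕ)) := by
    have hq2 := congrArg (Nat.cast : ℕ → 𝓞 K) (show 2 * ((q + 1) / 2) = q + 1 by omega)
    push_cast at hq2 ⊢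
    linear_combination ht - hq2
  have hsub : {P : Ideal (𝓞 K) | P.IsPrime ∧ ((2 : ℕ) : 𝓞 K) ∈ P} ⊆
      commonPrimes (1 + t) ((2 : ℕ) : 𝓞 K) := fun P ⟨hP, h2P⟩ ↦
    ⟨hP, hP.mem_of_pow_mem 2 (hsq ▸ P.mul_mem_right _ h2P), h2P⟩
  exact (Set.encard_le_encard hsub).trans
    (encard_commonPrimes_le Nat.prime_two (by omega) hw0 hnorm hw)

lemma encard_ramifiedPrimes_le {q w j : ℕ} (hq : q.Prime) (ht : t ^ 2 = q) (hq4 : q % 4 = 3)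
    (hσ : Function.Involutive σ) (hσt : σ t = -t) (hd : Module.finrank ℚ K = 2 * (w * j))
    (hw0 : w ≠ 0)
    (hw : ∀ P : Ideal (𝓞 K), P.IsPrime → ((2 : ℕ) : 𝓞 K) ∈ P → 2 ^ w ∣ Ideal.absNorm P) :
    (ramifiedPrimes σ).encard ≤ (j + w * j : ℕ) := by
  refine encard_le_add_of_subset_union (fun P hP ↦ ?_)
    (encard_primes_over_two_le ht hq4 hσ hσt hd hw0 hw) (encard_commonPrimes_prime_le hq ht hd)
  exact (hP.1.mem_or_mem (two_mul_mem_of_mem_ramifiedPrimes hP (mapRingHom_eq_neg hσt))).imp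
    (fun h2P ↦ ⟨hP.1, by exact_mod_cast h2P⟩) fun htP ↦ ⟨hP.1, htP, natCast_mem_of_sq_eq ht htP⟩

end PrimeCounts

section

variable {F K : Type*} [Field F] [Field K] {f : F →+* K} {n : ℕ} {θ : K}

lemma SqrtExtension.exists_integral_conj [CharZero F] [CharZero K] (h : SqrtExtension f n θ) :
    ∃ (σ : K →+* K) (t : 𝓞 K), QuadraticConj f σ ∧ (t : K) = θ ∧ t ^ 2 = n ∧ σ t = -t := by
  obtain ⟨σ, hf, hθ⟩ := h.exists_conj
  obtain ⟨t, rfl, ht⟩ := exists_integer_sqrt h.sq_eq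
  exact ⟨σ, t, h.quadraticConj hf hθ, rfl, ht, hθ⟩

lemma SqrtExtension.finrank_rat [NumberField F] [NumberField K] (h : SqrtExtension f n θ) :
    Module.finrank ℚ K = 2 * Module.finrank ℚ F := by
  obtain ⟨σ, -, hσ, -⟩ := h.exists_integral_conj
  exact hσ.finrank_rat

end

lemma card_classGroup_rat : Nat.card (ClassGroup (𝓞 ℚ)) = 1 := by
  have : IsPrincipalIdealRing (𝓞 ℚ) := .of_surjective
    (Rat.ringOfIntegersEquiv.symm : ℤ →+* 𝓞 ℚ) Rat.ringOfIntegersEquiv.symm.surjective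
  rw [Nat.card_eq_fintype_card]
  convert card_classGroup_eq_one (R := 𝓞 ℚ)

lemma odd_card_classGroup_rat : Odd (Nat.card (ClassGroup (𝓞 ℚ))) :=
  card_classGroup_rat ▸ odd_one

/-! ### Class groups of the subfields -/

lemma not_dvd_of_prime_of_ne {p q : ℕ} (hp : p.Prime) (hq : q.Prime) (hpq : p ≠ q) : ¬ p ∣ q :=
  mt (Nat.prime_dvd_prime_iff_eq hp hq).1 hpq

section QuadraticFields

variable {K : Type*} [Field K] [NumberField K] {θ : K}

lemma finrank_sqrt {n : ℕ} (h : SqrtExtension (algebraMap ℚ K) n θ) :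
    Module.finrank ℚ K = 2 * 1 := by
  rw [h.finrank_rat, Module.finrank_self]

lemma odd_card_classGroup_sqrt_of_one_mod_four {p : ℕ} (hp : p.Prime) (hp4 : p % 4 = 1)
    (h : SqrtExtension (algebraMap ℚ K) p θ) : Odd (Nat.card (ClassGroup (𝓞 K))) := by
  have := h.isTotallyReal
  obtain ⟨σ, t, hσ, rfl, ht, hσt⟩ := h.exists_integral_conj
  refine hσ.odd_card_classGroup (t := 1) odd_card_classGroup_rat
    (hσ.two_mul_card_fixedPoints_dvd ?_)
  exact (Set.encard_le_encard (ramifiedPrimes_subset_commonPrimes hσt ht hp4)).trans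
    (encard_commonPrimes_prime_le hp ht (finrank_sqrt h))

lemma odd_card_classGroup_sqrt_of_three_mod_four {q : ℕ} (hq : q.Prime) (hq4 : q % 4 = 3)
    (h : SqrtExtension (algebraMap ℚ K) q θ) : Odd (Nat.card (ClassGroup (𝓞 K))) := by
  have := h.isTotallyReal
  have : Fact q.Prime := ⟨hq⟩
  obtain ⟨σ, t, hσ, rfl, ht, hσt⟩ := h.exists_integral_conj
  refine hσ.odd_card_classGroup (t := 2) odd_card_classGroup_rat
    (hσ.four_mul_card_fixedPoints_dvd ?_ (u := -1) (h.not_isNorm_neg_one hq4 hσ.apply_map hσt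
      (mul_one q).symm hq.not_dvd_one (algebraMap ℚ _)))
  exact encard_ramifiedPrimes_le (w := 1) (j := 1) hq ht hq4 hσ.involutive hσt (finrank_sqrt h)
    one_ne_zero fun P _ h2P ↦ (pow_one 2).symm ▸ prime_dvd_absNorm Nat.prime_two P h2P

lemma odd_card_classGroup_sqrt_mul {q s : ℕ} (hq : q.Prime) (hs : s.Prime) (hqs : q ≠ s)
    (hq4 : q % 4 = 3) (hs4 : s % 4 = 3) (h : SqrtExtension (algebraMap ℚ K) (q * s) θ) :
    Odd (Nat.card (ClassGroup (𝓞 K))) := by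
  have := h.isTotallyReal
  have : Fact q.Prime := ⟨hq⟩
  obtain ⟨σ, t, hσ, rfl, ht, hσt⟩ := h.exists_integral_conj
  have hq_s := not_dvd_of_prime_of_ne hq hs hqs
  refine hσ.odd_card_classGroup (t := 2) odd_card_classGroup_rat
    (hσ.four_mul_card_fixedPoints_dvd ?_ (u := -1) (h.not_isNorm_neg_one hq4 hσ.apply_map hσt
      rfl hq_s (algebraMap ℚ _)))
  refine encard_le_add_of_subset_union
    ((ramifiedPrimes_subset_commonPrimes hσt ht (by rw [Nat.mul_mod, hq4, hs4])).trans
      (commonPrimes_natCast_mul q s))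
    (encard_commonPrimes_sqrt_le ht (finrank_sqrt h) hq rfl hq_s)
    (encard_commonPrimes_sqrt_le ht (finrank_sqrt h) hs (mul_comm q s)
      (not_dvd_of_prime_of_ne hs hq hqs.symm))

lemma isCyclic_twoClassGroup_sqrt_mul_mul {p q s : ℕ} (hp : p.Prime) (hq : q.Prime)
    (hs : s.Prime) (hpq : p ≠ q) (hps : p ≠ s) (hqs : q ≠ s) (hp4 : p % 4 = 1) (hq4 : q % 4 = 3)
    (hs4 : s % 4 = 3) (h : SqrtExtension (algebraMap ℚ K) (p * q * s) θ) :
    IsCyclic (twoClassGroup K) := by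
  have := h.isTotallyReal
  have : Fact q.Prime := ⟨hq⟩
  obtain ⟨σ, t, hσ, rfl, ht, hσt⟩ := h.exists_integral_conj
  have hd := finrank_sqrt h
  have hp_qs := hp.not_dvd_mul (not_dvd_of_prime_of_ne hp hq hpq) (not_dvd_of_prime_of_ne hp hs hps)
  have hq_ps := hq.not_dvd_mul (not_dvd_of_prime_of_ne hq hp hpq.symm)
    (not_dvd_of_prime_of_ne hq hs hqs)
  have hs_pq := hs.not_dvd_mul (not_dvd_of_prime_of_ne hs hp hps.symm)
    (not_dvd_of_prime_of_ne hs hq hqs.symm)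
  have hn4 : p * q * s % 4 = 1 := by rw [Nat.mul_mod, Nat.mul_mod p q, hp4, hq4, hs4]
  refine hσ.isCyclic_twoClassGroup (t := 2) odd_card_classGroup_rat
    (hσ.four_mul_card_fixedPoints_dvd (t := 1 + 1 + 1) ?_ (u := -1) (h.not_isNorm_neg_one hq4
      hσ.apply_map hσt (by ring) hq_ps (algebraMap ℚ _)))
  have hsub : ramifiedPrimes σ ⊆ (commonPrimes t (p : 𝓞 K) ∪ commonPrimes t (q : 𝓞 K)) ∪
      commonPrimes t (s : 𝓞 K) :=
    (ramifiedPrimes_subset_commonPrimes hσt ht hn4).trans <|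
      (commonPrimes_natCast_mul (p * q) s).trans <|
        Set.union_subset_union_left _ (commonPrimes_natCast_mul p q)
  exact encard_le_add_of_subset_union hsub (encard_le_add_of_subset_union subset_rfl
    (encard_commonPrimes_sqrt_le ht hd hp (mul_assoc p q s) hp_qs)
    (encard_commonPrimes_sqrt_le ht hd hq (by ring) hq_ps))
    (encard_commonPrimes_sqrt_le ht hd hs (mul_comm _ _) hs_pq)

end QuadraticFields

section BiquadraticFields

lemma exists_unit_eq_add_mul_of_sq_sub_mul_sq_eq_neg_one {R : Type*} [CommRing R] {z : R}
    {n : ℕ} (hz : z ^ 2 = n) {x y : ℤ} (hxy : x ^ 2 - n * y ^ 2 = -1) :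
    ∃ u : Rˣ, (u : R) = x + y * z := by
  have hxyR : (x : R) ^ 2 - n * y ^ 2 = -1 := by exact_mod_cast congrArg (Int.cast : ℤ → R) hxy
  exact ⟨Units.mkOfMulEqOne (x + y * z) (-(x - y * z))
    (by linear_combination -hxyR + y ^ 2 * hz), rfl⟩

variable {F K : Type*} [Field F] [Field K] [NumberField F] [NumberField K] {f : F →+* K}
  {σ : K →+* K} {a : F} {b : K}

lemma odd_card_classGroup_sqrt_sqrt_of_five_mod_eight {p q : ℕ} (hp : p.Prime) (hq : q.Prime)
    (hpq : p ≠ q) (hp8 : p % 8 = 5) (hq4 : q % 4 = 3) (hsq : IsSquare (p : ZMod q))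
    (hF : SqrtExtension (algebraMap ℚ F) p a) (h : SqrtExtension f q b) :
    Odd (Nat.card (ClassGroup (𝓞 K))) := by
  have := hF.isTotallyReal
  have := h.isTotallyReal
  have : Fact q.Prime := ⟨hq⟩
  obtain ⟨σ, t, hσ, rfl, ht, hσt⟩ := h.exists_integral_conj
  obtain ⟨z, rfl, hz⟩ := exists_integer_sqrt hF.sq_eq
  obtain ⟨g, g', -, -, hgg'⟩ := hF.exists_lift_padic (algebraMap ℚ ℚ_[q]) (by omega) hsq
    (not_dvd_of_prime_of_ne hq hp hpq.symm)
  obtain ⟨x, y, hxy⟩ := exists_sq_sub_mul_sq_eq_neg_one hp (by omega)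
  obtain ⟨ε, hε⟩ := exists_unit_eq_add_mul_of_sq_sub_mul_sq_eq_neg_one hz hxy
  have hnorm : residueHom g ε * residueHom g' ε = -1 := by
    rw [hε, residueHom_mul_residueHom_of_eq_neg hz hgg', hxy, Int.cast_neg, Int.cast_one]
  have hnonsq : ¬ IsSquare (-1 : ZMod q) := by
    rw [ZMod.exists_sq_eq_neg_one_iff]
    omega
  have hnot {u : 𝓞 F} (hu : residueHom g u * residueHom g' u = -1) : ¬ IsNorm f σ u :=
    h.not_isNorm_of_residueHom_mul hσ.apply_map hσt (mul_one q).symm hq.not_dvd_one g g'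
      (hu ▸ hnonsq)
  refine hσ.odd_card_classGroup (t := 3)
    (odd_card_classGroup_sqrt_of_one_mod_four hp (by omega) hF)
    (hσ.eight_mul_card_fixedPoints_dvd (t := 1 + 2 * 1) ?_ (u := -1) (v := ε)
      (h.not_isNorm_neg_one hq4 hσ.apply_map hσt (mul_one q).symm hq.not_dvd_one g) (hnot hnorm) ?_)
  · have hz' : mapRingHom f z ^ 2 = (p : 𝓞 K) := by rw [← map_pow, hz, map_natCast]
    exact encard_ramifiedPrimes_le hq ht hq4 hσ.involutive hσt
      (by rw [h.finrank_rat, finrank_sqrt hF]) two_ne_zero fun P _ h2P ↦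
        sq_prime_dvd_absNorm Nat.prime_two (isEmpty_ringHom_zmod_two hz' hp8) P h2P
  · exact hnot (by simpa using hnorm)

lemma ramifiedPrimes_subset_commonPrimes_of_three_mod_four {q s : ℕ} (hq4 : q % 4 = 3)
    (hs4 : s % 4 = 3) {z t : 𝓞 K} (hz : z ^ 2 = q) (ht : t ^ 2 = s) (hσz : σ z = z)
    (hσt : σ t = -t) : ramifiedPrimes σ ⊆ commonPrimes t (s : 𝓞 K) := by
  intro P hP
  have := hP.1
  have hσz' : mapRingHom σ z = z := RingOfIntegers.ext hσz
  have hzt : (z * t) ^ 2 = (q * s : ℕ) := by rw [mul_pow, hz, ht, Nat.cast_mul]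
  have hztP : z * t ∈ P := mem_of_mem_ramifiedPrimes hP
    (by rw [map_mul, hσz', mapRingHom_eq_neg hσt, mul_neg]) hzt (by rw [Nat.mul_mod, hq4, hs4])
  have h2P : (2 : 𝓞 K) ∉ P := fun h2 ↦ natCast_notMem_of_coprime (l := 2) (m := q * s)
    (by rw [Nat.coprime_two_left, Nat.odd_mul, Nat.odd_iff, Nat.odd_iff]; omega)
    (by exact_mod_cast h2) (natCast_mem_of_sq_eq hzt hztP)
  have htP : t ∈ P := (hP.1.mem_or_mem
    (two_mul_mem_of_mem_ramifiedPrimes hP (mapRingHom_eq_neg hσt))).resolve_left h2P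
  exact ⟨hP.1, htP, natCast_mem_of_sq_eq ht htP⟩

lemma odd_card_classGroup_sqrt_sqrt_of_three_mod_four {q s : ℕ} (hq : q.Prime) (hs : s.Prime)
    (hqs : q ≠ s) (hq4 : q % 4 = 3) (hs4 : s % 4 = 3)
    (hF : SqrtExtension (algebraMap ℚ F) q a) (h : SqrtExtension f s b) :
    Odd (Nat.card (ClassGroup (𝓞 K))) := by
  have := hF.isTotallyReal
  have := h.isTotallyReal
  have : Fact s.Prime := ⟨hs⟩
  obtain ⟨σ, t, hσ, rfl, ht, hσt⟩ := h.exists_integral_conj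
  obtain ⟨z, rfl, hz⟩ := exists_integer_sqrt hF.sq_eq
  have hd : Module.finrank ℚ K = 2 * 2 := by rw [h.finrank_rat, finrank_sqrt hF]
  have hodd := odd_card_classGroup_sqrt_of_three_mod_four hq hq4 hF
  have hz' : mapRingHom f z ^ 2 = (q : 𝓞 K) := by rw [← map_pow, hz, map_natCast]
  have hsub := Set.encard_le_encard (ramifiedPrimes_subset_commonPrimes_of_three_mod_four hq4 hs4
    hz' ht (hσ.apply_map z) hσt)
  by_cases hsq : IsSquare (q : ZMod s)
  · obtain ⟨g, -⟩ := hF.exists_lift_padic (algebraMap ℚ ℚ_[s]) (by omega) hsq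
      (not_dvd_of_prime_of_ne hs hq hqs.symm)
    exact hσ.odd_card_classGroup (t := 2) hodd (hσ.four_mul_card_fixedPoints_dvd
      (hsub.trans (encard_commonPrimes_prime_le hs ht hd)) (h.not_isNorm_neg_one hs4
        hσ.apply_map hσt (mul_one s).symm hs.not_dvd_one g))
  · refine hσ.odd_card_classGroup (t := 1) hodd (hσ.two_mul_card_fixedPoints_dvd (hsub.trans ?_))
    exact encard_commonPrimes_le (m := 1) (w := 2) hs hs.not_dvd_one two_ne_zero
      (by rw [absNorm_span_of_sq_eq ht hd, mul_one, mul_one]) fun P _ hsP ↦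
        sq_prime_dvd_absNorm hs (isEmpty_ringHom_zmod hz' hsq) P hsP

end BiquadraticFields

lemma exists_unit_sq_eq_two_mul {R : Type*} [CommRing R] {z : R} {n : ℕ} (hz : z ^ 2 = n)
    {x y e : ℤ} (hxy : x ^ 2 - n * y ^ 2 = 2 * e) (he : e = 1 ∨ e = -1) :
    ∃ u : Rˣ, (x + y * z) ^ 2 = 2 * (u : R) := by
  have hxyR : (x : R) ^ 2 - n * y ^ 2 = 2 * e := by
    exact_mod_cast congrArg (Int.cast : ℤ → R) hxy
  have heR : (e : R) ^ 2 = 1 := by obtain rfl | rfl := he <;> simp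
  refine ⟨Units.mkOfMulEqOne (x ^ 2 - e + x * y * z) (x ^ 2 - e - x * y * z) ?_, ?_⟩
  · linear_combination (-(x : R) ^ 2 * y ^ 2) * hz + (x : R) ^ 2 * hxyR + heR
  · rw [Units.val_mkOfMulEqOne]
    linear_combination (y : R) ^ 2 * hz - hxyR

lemma exists_unit_mul_eq_two_mul {K : Type*} [Field K] [CharZero K] {α β : 𝓞 K} {u v : (𝓞 K)ˣ}
    (hα : α ^ 2 = 2 * u) (hβ : β ^ 2 = 2 * v) : ∃ w : (𝓞 K)ˣ, α * β = 2 * w := by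
  have hsq : ((α * β : K) / 2) ^ 2 = (u * v : 𝓞 K) := by
    have hα' : (α : K) ^ 2 = 2 * (u : 𝓞 K) := congrArg (algebraMap (𝓞 K) K) hα
    have hβ' : (β : K) ^ 2 = 2 * (v : 𝓞 K) := congrArg (algebraMap (𝓞 K) K) hβ
    rw [div_pow, mul_pow, hα', hβ']
    push_cast
    ring
  have hint : IsIntegral ℤ ((α * β : K) / 2) :=
    .of_pow two_pos (hsq ▸ RingOfIntegers.isIntegral_coe _)
  let w : 𝓞 K := ⟨_, hint⟩
  have hw : w ^ 2 = (u * v : (𝓞 K)ˣ) := RingOfIntegers.ext hsq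
  refine ⟨(isUnit_pow_iff two_ne_zero).1 (hw ▸ (u * v).isUnit) |>.unit, RingOfIntegers.ext ?_⟩
  exact (mul_div_cancel₀ _ two_ne_zero).symm

lemma not_isSquare_map_of_sq_eq_two_mul {R F : Type*} [CommRing R] [Field F] (ψ : R →+* F)
    (h2 : ¬ IsSquare (2 : F)) {α : R} {u : Rˣ} (hα : α ^ 2 = 2 * u) : ¬ IsSquare (ψ u) := by
  intro hu
  refine not_isSquare_mul_of_isSquare h2 hu (u.isUnit.map ψ).ne_zero ⟨ψ α, ?_⟩
  rw [← map_ofNat ψ 2, ← map_mul, ← hα, map_pow, pow_two]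

section

variable {R F : Type*} [CommRing R] [Field F] {ψ ψ' : R →+* F} (h2 : (2 : F) ≠ 0) {α β : R}
  {u w : Rˣ} (hα : α ^ 2 = 2 * u) (hψα : ψ' α = ψ α)

include h2 hα hψα

lemma map_eq_map_of_sq_eq_two_mul : ψ' u = ψ u := by
  have hψ := congrArg ψ hα
  have hψ' := congrArg ψ' hα
  simp only [map_pow, map_mul, map_ofNat, hψα] at hψ hψ'
  exact mul_left_cancel₀ h2 (hψ'.symm.trans hψ)

lemma map_mul_map_eq_of_mul_eq_two_mul {e : F} (hβ : ψ β * ψ' β = 2 * e)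
    (hw : α * β = 2 * (w : R)) : ψ w * ψ' w = ψ u * e := by
  have hψ := congrArg ψ hα
  have hψw := congrArg ψ hw
  have hψw' := congrArg ψ' hw
  simp only [map_pow, map_mul, map_ofNat, hψα] at hψ hψw hψw'
  apply mul_left_cancel₀ (mul_ne_zero h2 h2)
  linear_combination (-ψ' β * ψ α) * hψw - 2 * ψ w * hψw' + ψ β * ψ' β * hψ + 2 * ψ u * hβ

end

section

variable {A B : Type*} [Field A] [Field B] [NumberField B] {f₁ : A →+* B} {a : A} {b : B}

lemma exists_units_not_isSquare_residueHom [CharZero A] {p q s : ℕ} [Fact p.Prime]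
    (hq : q.Prime) (hs : s.Prime) (hpq : p ≠ q) (hps : p ≠ s) (hp8 : p % 8 = 5)
    (hq4 : q % 4 = 3) (hs4 : s % 4 = 3) (hsq : IsSquare (q : ZMod p)) (hss : IsSquare (s : ZMod p))
    (hA : SqrtExtension (algebraMap ℚ A) q a) (hB : SqrtExtension f₁ s b) :
    ∃ (g g' : B →+* ℚ_[p]) (u w : (𝓞 B)ˣ), residueHom g' u = residueHom g u ∧
      ¬ IsSquare (residueHom g u) ∧ ¬ IsSquare (residueHom g w * residueHom g' w) := by
  have hp : p.Prime := Fact.out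
  have hp2 : p ≠ 2 := by omega
  obtain ⟨y, rfl, hy⟩ := exists_integer_sqrt hA.sq_eq
  obtain ⟨z, rfl, hz⟩ := exists_integer_sqrt hB.sq_eq
  obtain ⟨g₀, -⟩ := hA.exists_lift_padic (algebraMap ℚ ℚ_[p]) hp2 hsq
    (not_dvd_of_prime_of_ne hp hq hpq)
  obtain ⟨g, g', hg, hg', hgz⟩ := hB.exists_lift_padic g₀ hp2 hss
    (not_dvd_of_prime_of_ne hp hs hps)
  obtain ⟨x₁, y₁, e₁, hxy₁, he₁⟩ := exists_sq_sub_mul_sq_eq_two_mul hq hq4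
  obtain ⟨x₂, y₂, e₂, hxy₂, he₂⟩ := exists_sq_sub_mul_sq_eq_two_mul hs hs4
  have hy' : mapRingHom f₁ y ^ 2 = (q : 𝓞 B) := by rw [← map_pow, hy, map_natCast]
  obtain ⟨u, hu⟩ := exists_unit_sq_eq_two_mul hy' hxy₁ he₁
  obtain ⟨v, hv⟩ := exists_unit_sq_eq_two_mul hz hxy₂ he₂
  obtain ⟨w, hw⟩ := exists_unit_mul_eq_two_mul hu hv
  have h2 : ¬ IsSquare (2 : ZMod p) := by
    rw [ZMod.exists_sq_eq_two_iff hp2]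
    omega
  have h20 : (2 : ZMod p) ≠ 0 := fun h0 ↦ h2 (h0 ▸ IsSquare.zero)
  have hneg : IsSquare (-1 : ZMod p) := by
    rw [ZMod.exists_sq_eq_neg_one_iff]
    omega
  have hun : ¬ IsSquare (residueHom g u) := not_isSquare_map_of_sq_eq_two_mul _ h2 hu
  have hα : residueHom g' (x₁ + y₁ * mapRingHom f₁ y) =
      residueHom g (x₁ + y₁ * mapRingHom f₁ y) := by
    simp only [map_add, map_mul, map_intCast, residueHom_mapRingHom hg, residueHom_mapRingHom hg']
  have hβ : residueHom g (x₂ + y₂ * z) * residueHom g' (x₂ + y₂ * z) = 2 * (e₂ : ZMod p) := by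
    rw [residueHom_mul_residueHom_of_eq_neg hz hgz, hxy₂, Int.cast_mul, Int.cast_ofNat]
  refine ⟨g, g', u, w, map_eq_map_of_sq_eq_two_mul h20 hu hα, hun, ?_⟩
  rw [map_mul_map_eq_of_mul_eq_two_mul h20 hu hα hβ hw]
  exact not_isSquare_mul_of_isSquare hun (by obtain rfl | rfl := he₂ <;> simp [hneg])
    (by obtain rfl | rfl := he₂ <;> simp)

variable [NumberField A] {K : Type*} [Field K] [NumberField K] {f₂ : B →+* K} {c : K}

lemma isCyclic_twoClassGroup_sqrt_sqrt_sqrt {p q s : ℕ} (hp : p.Prime) (hq : q.Prime)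
    (hs : s.Prime) (hpq : p ≠ q) (hps : p ≠ s) (hqs : q ≠ s) (hp8 : p % 8 = 5) (hq4 : q % 4 = 3)
    (hs4 : s % 4 = 3) (hsq : IsSquare (q : ZMod p)) (hss : IsSquare (s : ZMod p))
    (hA : SqrtExtension (algebraMap ℚ A) q a) (hB : SqrtExtension f₁ s b)
    (h : SqrtExtension f₂ p c) : IsCyclic (twoClassGroup K) := by
  have := hA.isTotallyReal
  have := hB.isTotallyReal
  have := h.isTotallyReal
  have : Fact p.Prime := ⟨hp⟩
  obtain ⟨σ, t, hσ, rfl, ht, hσt⟩ := h.exists_integral_conj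
  have hd : Module.finrank ℚ K = 2 * 4 := by rw [h.finrank_rat, hB.finrank_rat, finrank_sqrt hA]
  obtain ⟨g, g', u, w, hgu, hu, hw⟩ :=
    exists_units_not_isSquare_residueHom hq hs hpq hps hp8 hq4 hs4 hsq hss hA hB
  have huw : residueHom g (u * w) * residueHom g' (u * w) =
      residueHom g w * residueHom g' w * residueHom g u ^ 2 := by
    rw [map_mul, map_mul, hgu]
    ring
  refine hσ.isCyclic_twoClassGroup (t := 3)
    (odd_card_classGroup_sqrt_sqrt_of_three_mod_four hq hs hqs hq4 hs4 hA hB)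
    (hσ.eight_mul_card_fixedPoints_dvd ?_
      (h.not_isNorm_of_residueHom hσ.apply_map hσt (mul_one p).symm hp.not_dvd_one g hu)
      (h.not_isNorm_of_residueHom_mul hσ.apply_map hσt (mul_one p).symm hp.not_dvd_one g g' hw)
      (h.not_isNorm_of_residueHom_mul hσ.apply_map hσt (mul_one p).symm hp.not_dvd_one g g' ?_))
  · exact (Set.encard_le_encard (ramifiedPrimes_subset_commonPrimes hσt ht (by omega))).trans
      (encard_commonPrimes_prime_le hp ht hd)
  · rw [huw]
    exact not_isSquare_mul_of_isSquare hw (.sq _) (pow_ne_zero 2 (u.isUnit.map _).ne_zero)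

end

/-! ### Comparison of 2-class groups in the tower -/

lemma classMap_comp_eq_self {F₁ F₂ K : Type*} [Field F₁] [Field F₂] [Field K] [NumberField F₁]
    [NumberField F₂] [NumberField K] {f₁ : F₁ →+* K} {f₂ : F₂ →+* K} {ρ₁ ρ₂ : K →+* K}
    (h₁ : QuadraticConj f₁ ρ₁) (h₂ : QuadraticConj f₂ ρ₂)
    (ho₁ : Odd (Nat.card (ClassGroup (𝓞 F₁)))) (ho₂ : Odd (Nat.card (ClassGroup (𝓞 F₂))))
    {c : ClassGroup (𝓞 K)} (hc : c ∈ twoClassGroup K) : classMap (ρ₁.comp ρ₂) c = c := by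
  rw [← classMap_classMap, h₂.classMap_eq_inv_of_odd ho₂ hc, map_inv,
    h₁.classMap_eq_inv_of_odd ho₁ hc, inv_inv]

lemma ramifiedPrimes_eq_empty {K : Type*} [Field K] [NumberField K] {σ : K →+* K}
    {t r : 𝓞 K} {m n : ℕ} (hmn : m.Coprime n) (ht : t ^ 2 = m) (hm : m % 4 = 1) (hσt : σ t = -t)
    (hr : r ^ 2 = n) (hn : n % 4 = 1) (hσr : σ r = -r) : ramifiedPrimes σ = ∅ := by
  refine Set.eq_empty_of_forall_notMem fun P hP ↦ ?_
  have := hP.1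
  exact natCast_notMem_of_coprime hmn (ramifiedPrimes_subset_commonPrimes hσt ht hm hP).2.2
    (ramifiedPrimes_subset_commonPrimes hσr hr hn hP).2.2

lemma ramifiedPrimes_subset_primes_over_two {K : Type*} [Field K] {σ : K →+* K} {t r : 𝓞 K}
    {m n : ℕ} (hmn : m.Coprime n) (ht : t ^ 2 = m) (hσt : σ t = -t) (hr : r ^ 2 = n)
    (hσr : σ r = -r) :
    ramifiedPrimes σ ⊆ {P : Ideal (𝓞 K) | P.IsPrime ∧ ((2 : ℕ) : 𝓞 K) ∈ P} := by
  intro P hP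
  have := hP.1
  refine ⟨hP.1, by_contra fun h2 ↦ ?_⟩
  rw [Nat.cast_ofNat] at h2
  have htP := (hP.1.mem_or_mem
    (two_mul_mem_of_mem_ramifiedPrimes hP (mapRingHom_eq_neg hσt))).resolve_left h2
  have hrP := (hP.1.mem_or_mem
    (two_mul_mem_of_mem_ramifiedPrimes hP (mapRingHom_eq_neg hσr))).resolve_left h2
  exact natCast_notMem_of_coprime hmn (natCast_mem_of_sq_eq ht htP) (natCast_mem_of_sq_eq hr hrP)

section

variable {D L K : Type*} [Field D] [Field L] [Field K] {f : L →+* K} {σ : K →+* K}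
  {i : D →+* L} {β : L →+* L} {p q : ℕ} {b : K} {a : L}

lemma SqrtExtension.exists_mul_conj_eq_of_isNorm [CharZero L] (h : SqrtExtension f q b)
    (hf : ∀ x, σ (f x) = f x) (hb : σ b = -b) (hβ : QuadraticConj i β) {w : L}
    (hw : IsNorm f σ w) : ∃ X Y : D, w * β w = i (X ^ 2 - q * Y ^ 2) := by
  obtain ⟨x, hx⟩ := hw
  obtain ⟨u, v, huv⟩ := h.exists_mul_conj_eq hf hb x
  obtain rfl : w = u ^ 2 - q * v ^ 2 := f.injective (hx.symm.trans huv)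
  obtain ⟨X, hX⟩ := (hβ.apply_eq_self_iff (u * β u + q * (v * β v))).1 (by
    simp only [map_add, map_mul, map_natCast, hβ.apply_apply]; ring)
  obtain ⟨Y, hY⟩ := (hβ.apply_eq_self_iff (u * β v + β u * v)).1 (by
    simp only [map_add, map_mul, hβ.apply_apply]; ring)
  refine ⟨X, Y, ?_⟩
  simp only [map_sub, map_mul, map_pow, map_natCast, hX, hY]
  ring

lemma SqrtExtension.exists_ringHom_padic_two [CharZero D] {n : ℕ} {d : D}
    (h : SqrtExtension (algebraMap ℚ D) n d) (hn : n % 8 = 1) : Nonempty (D →+* ℚ_[2]) := by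
  obtain ⟨r, hr⟩ := exists_sq_eq_natCast_two hn
  obtain ⟨γ, -⟩ := h.exists_lift (algebraMap ℚ ℚ_[2]) (r := r)
    (by rw [← PadicInt.coe_pow, hr, PadicInt.coe_natCast])
  exact ⟨γ⟩

lemma SqrtExtension.exists_unit_not_isNorm [NumberField D] [NumberField L] {n : ℕ} {d : D}
    (hD : SqrtExtension (algebraMap ℚ D) n d) (hn : n % 8 = 1) (hL : SqrtExtension i p a)
    (h : SqrtExtension f q b) (hf : ∀ x, σ (f x) = f x) (hb : σ b = -b)
    (hp : p.Prime) (hp4 : p % 4 = 1) (hq4 : q % 4 = 3) :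
    ∃ u : (𝓞 L)ˣ, ¬ IsNorm f σ (u : 𝓞 L) := by
  obtain ⟨γ⟩ := hD.exists_ringHom_padic_two hn
  obtain ⟨β, z, hβ, rfl, hz, hβz⟩ := hL.exists_integral_conj
  obtain ⟨x, y, hxy⟩ := exists_sq_sub_mul_sq_eq_neg_one hp hp4
  obtain ⟨ε, hε⟩ := exists_unit_eq_add_mul_of_sq_sub_mul_sq_eq_neg_one hz hxy
  refine ⟨ε, fun hε_norm ↦ ?_⟩
  obtain ⟨X, Y, hXY⟩ := h.exists_mul_conj_eq_of_isNorm hf hb hβ hε_norm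
  have hnorm : ((ε : 𝓞 L) : L) * β (ε : 𝓞 L) = -1 := by
    have hxyL : (x : L) ^ 2 - p * y ^ 2 = -1 := by
      exact_mod_cast congrArg (Int.cast : ℤ → L) hxy
    have hεL : ((ε : 𝓞 L) : L) = x + y * z := by rw [hε]; simp
    rw [hεL, map_add, map_mul, map_intCast, map_intCast, hβz]
    linear_combination hxyL - (y : L) ^ 2 * hL.sq_eq
  have hXY' : X ^ 2 - q * Y ^ 2 = -1 := i.injective (by rw [← hXY, hnorm, map_neg, map_one])
  refine sq_sub_mul_sq_ne_neg_one hq4 (γ X) (γ Y) ?_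
  rw [← map_pow, ← map_pow, ← map_natCast γ q, ← map_mul, ← map_sub, hXY', map_neg, map_one]

end

section

variable {E F F₁ F₂ K : Type*} [Field E] [Field F] [Field F₁] [Field F₂] [Field K] [CharZero F]
  [CharZero F₁] [CharZero F₂] {j : E →+* F₁} {f : F →+* K} {f₁ : F₁ →+* K} {f₂ : F₂ →+* K}
  {m n : ℕ} {a₁ : F₁} {b₂ : F₂} {c : F} {a b : K}

lemma exists_quadraticConj_eq_comp (hj : SqrtExtension j m a₁) (h : SqrtExtension f m a)
    (h₁ : SqrtExtension f₁ n b) (h₂ : SqrtExtension f₂ m a) (ha : f₁ a₁ = a) (hb : f₂ b₂ = b)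
    (hab : f c = a * b) (hE : ∀ x, ∃ y, f y = f₁ (j x)) (hE₂ : ∀ x, ∃ y, f₂ y = f₁ (j x)) :
    ∃ σ ρ₁ ρ₂ : K →+* K, QuadraticConj f σ ∧ QuadraticConj f₁ ρ₁ ∧ QuadraticConj f₂ ρ₂ ∧
      σ = ρ₁.comp ρ₂ ∧ σ a = -a ∧ σ b = -b := by
  obtain ⟨σ, hσf, hσa⟩ := h.exists_conj
  obtain ⟨ρ₁, hρ₁f, hρ₁b⟩ := h₁.exists_conj
  obtain ⟨ρ₂, hρ₂f, hρ₂a⟩ := h₂.exists_conj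
  have hσb : σ b = -b := by
    have hσab := hσf c
    rw [hab, map_mul, hσa] at hσab
    exact mul_left_cancel₀ h.root_ne_zero (by linear_combination -hσab)
  have hρ₁a : ρ₁ a = a := by rw [← ha, hρ₁f]
  have hρ₂b : ρ₂ b = b := by rw [← hb, hρ₂f]
  have hcomp : σ.comp f₁ = (ρ₁.comp ρ₂).comp f₁ := by
    refine hj.ringHom_ext (RingHom.ext fun x ↦ ?_) ?_
    · obtain ⟨y, hy⟩ := hE x
      obtain ⟨y₂, hy₂⟩ := hE₂ x
      calc σ (f₁ (j x)) = f₁ (j x) := by rw [← hy, hσf]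
        _ = ρ₁ (f₁ (j x)) := (hρ₁f _).symm
        _ = ρ₁ (ρ₂ (f₁ (j x))) := by rw [← hy₂, hρ₂f]
    · simp [ha, hσa, hρ₁a, hρ₂a]
  have hσ : σ = ρ₁.comp ρ₂ := h₁.ringHom_ext hcomp (by simp [hσb, hρ₁b, hρ₂b])
  exact ⟨σ, ρ₁, ρ₂, h.quadraticConj hσf hσa, h₁.quadraticConj hρ₁f hρ₁b,
    h₂.quadraticConj hρ₂f hρ₂a, hσ, hσa, hσb⟩

end

section

variable {F₁ F₂ F K : Type*} [Field F₁] [Field F₂] [Field F] [Field K] [NumberField F₁]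
  [NumberField F₂] [NumberField F] [NumberField K] {f₁ : F₁ →+* K} {f₂ : F₂ →+* K} {f : F →+* K}
  {σ ρ₁ ρ₂ : K →+* K}

lemma two_mul_card_twoClassGroup_dvd [IsTotallyReal F] [IsTotallyReal K] (h : QuadraticConj f σ)
    (h₁ : QuadraticConj f₁ ρ₁) (h₂ : QuadraticConj f₂ ρ₂)
    (ho₁ : Odd (Nat.card (ClassGroup (𝓞 F₁)))) (ho₂ : Odd (Nat.card (ClassGroup (𝓞 F₂))))
    (hσ : σ = ρ₁.comp ρ₂) (hram : ramifiedPrimes σ = ∅) :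
    2 * Nat.card (twoClassGroup K) ∣ Nat.card (twoClassGroup F) :=
  pow_mul_card_twoClassGroup_dvd (t := 0) (m := 1)
    (fun _ hc ↦ hσ ▸ classMap_comp_eq_self h₁ h₂ ho₁ ho₂ hc)
    (h.two_mul_card_fixedPoints_dvd (by simp [hram]))

lemma card_twoClassGroup_dvd [IsTotallyReal F] [IsTotallyReal K] (h : QuadraticConj f σ)
    (h₁ : QuadraticConj f₁ ρ₁) (h₂ : QuadraticConj f₂ ρ₂)
    (ho₁ : Odd (Nat.card (ClassGroup (𝓞 F₁)))) (ho₂ : Odd (Nat.card (ClassGroup (𝓞 F₂))))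
    (hσ : σ = ρ₁.comp ρ₂) (hram : (ramifiedPrimes σ).encard ≤ (2 : ℕ)) {u : (𝓞 F)ˣ}
    (hu : ¬ IsNorm f σ (u : 𝓞 F)) :
    Nat.card (twoClassGroup K) ∣ Nat.card (twoClassGroup F) := by
  have hdvd := pow_mul_card_twoClassGroup_dvd (t := 2) (m := 0)
    (fun _ hc ↦ hσ ▸ classMap_comp_eq_self h₁ h₂ ho₁ ho₂ hc)
    (h.four_mul_card_fixedPoints_dvd hram hu)
  rwa [pow_zero, one_mul] at hdvd

end

lemma encard_ramifiedPrimes_le_two {K : Type*} [Field K] [NumberField K] {σ : K →+* K}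
    {t r z : 𝓞 K} {q s p : ℕ} (hqs : q.Coprime s) (hq4 : q % 4 = 3) (hp8 : p % 8 = 5)
    (hσ : Function.Involutive σ) (ht : t ^ 2 = q) (hσt : σ t = -t) (hr : r ^ 2 = s)
    (hσr : σ r = -r) (hz : z ^ 2 = p) (hd : Module.finrank ℚ K = 8) :
    (ramifiedPrimes σ).encard ≤ (2 : ℕ) :=
  (Set.encard_le_encard (ramifiedPrimes_subset_primes_over_two hqs ht hσt hr hσr)).trans
    (encard_primes_over_two_le (w := 2) ht hq4 hσ hσt hd two_ne_zero fun P _ h2P ↦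
      sq_prime_dvd_absNorm Nat.prime_two (isEmpty_ringHom_zmod_two hz hp8) P h2P)

/-! ### Units of `ℚ(√n)` that are local squares -/

section

variable {F : Type*} [Field F] {n : ℤ} (hF : ∀ d : ℤ, d ∣ n → IsSquare (d : F))

include hF

lemma isSquare_intCast_of_isCoprime (hn : n ≠ 0) {X Y y : ℤ} (hXY : IsCoprime X Y)
    (h : X * Y = n * y ^ 2) : IsSquare (X : F) := by
  obtain ⟨d, d', x, -, rfl, rfl, -⟩ := exists_eq_mul_sq_of_isCoprime hXY hn h
  rw [Int.cast_mul, Int.cast_pow]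
  exact (hF d (dvd_mul_right d d')).mul (IsSquare.sq _)

lemma isSquare_add_two_of_mul_sub_two_eq (hn : n % 4 = 1) {T r : ℤ}
    (h : (T + 2) * (T - 2) = n * r ^ 2) : IsSquare ((T + 2 : ℤ) : F) := by
  have hn0 : n ≠ 0 := by rintro rfl; simp at hn
  obtain ⟨j, rfl⟩ : ∃ j, n = 4 * j + 1 := ⟨n / 4, by omega⟩
  obtain ⟨t, rfl | rfl⟩ := Int.even_or_odd' T
  · obtain ⟨y, rfl | rfl⟩ := Int.even_or_odd' r
    · have hty : t ^ 2 - y ^ 2 = 4 * (j * y ^ 2) + 1 := by linarith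
      obtain ⟨m, rfl | rfl⟩ := Int.even_or_odd' t
      · obtain ⟨z, rfl | rfl⟩ := Int.even_or_odd' y <;> ring_nf at hty <;> omega
      obtain ⟨z, rfl | rfl⟩ := Int.even_or_odd' y
      · have hm : (m + 1) * m = (4 * j + 1) * z ^ 2 := by linarith
        have hsq := isSquare_intCast_of_isCoprime hF hn0 ⟨1, -1, by ring⟩ hm
        rw [show 2 * (2 * m + 1) + 2 = 2 ^ 2 * (m + 1) by ring, Int.cast_mul, Int.cast_pow]
        exact (IsSquare.sq _).mul hsq
      · ring_nf at hty
        omega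
    · have hodd : 4 * ((t + 1) * (t - 1) - j * (2 * y + 1) ^ 2 - y ^ 2 - y) = 1 := by
        linear_combination h
      omega
  · exact isSquare_intCast_of_isCoprime hF hn0
      ⟨2 * t + 3 - (t ^ 2 + 3 * t + 2), t ^ 2 + 3 * t + 2, by ring⟩ h

end

lemma QuadraticConj.exists_intCast_eq {B : Type*} [Field B] [NumberField B] {σ : B →+* B}
    (h : QuadraticConj (algebraMap ℚ B) σ) {x : 𝓞 B} (hx : mapRingHom σ x = x) :
    ∃ m : ℤ, x = m := by
  obtain ⟨a, rfl⟩ := h.exists_mapRingHom_eq x (congrArg (algebraMap (𝓞 B) B) hx)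
  refine ⟨Rat.ringOfIntegersEquiv a, ?_⟩
  rw [← map_intCast (mapRingHom (algebraMap ℚ B))]
  congr 1
  exact Rat.ringOfIntegersEquiv.injective (by simp)

section

variable {B F : Type*} [Field B] [NumberField B] [Field F] {n : ℕ} {σ : B →+* B} {t : 𝓞 B}
  (h : QuadraticConj (algebraMap ℚ B) σ)

include h

lemma QuadraticConj.mul_mapRingHom_eq_one (hneg : ¬ IsNorm (algebraMap ℚ B) σ (-1))
    (u : (𝓞 B)ˣ) : (u : 𝓞 B) * mapRingHom σ u = 1 := by
  obtain ⟨N, hN⟩ := h.exists_intCast_eq (x := u * mapRingHom σ u)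
    (by rw [map_mul, h.mapRingHom_mapRingHom, mul_comm])
  have hNunit : IsUnit N := by
    refine isUnit_of_map_unit (algebraMap ℤ (𝓞 B)) N ?_
    rw [eq_intCast, ← hN]
    exact u.isUnit.mul (u.isUnit.map _)
  obtain rfl | rfl := Int.isUnit_iff.1 hNunit
  · rw [hN, Int.cast_one]
  · refine absurd ⟨((u : 𝓞 B) : B), ?_⟩ hneg
    have hN' := congrArg (algebraMap (𝓞 B) B) hN
    rw [map_mul, map_intCast] at hN'
    rw [map_neg, map_one, ← Int.cast_one, ← Int.cast_neg]
    exact hN'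

lemma QuadraticConj.exists_trace_sq_eq (hneg : ¬ IsNorm (algebraMap ℚ B) σ (-1))
    (hn : Squarefree n) (ht : t ^ 2 = n) (hσt : σ t = -t) (u : (𝓞 B)ˣ) :
    ∃ T r : ℤ, (u : 𝓞 B) + mapRingHom σ u = T ∧ (T + 2) * (T - 2) = n * r ^ 2 := by
  have hnorm := h.mul_mapRingHom_eq_one hneg u
  obtain ⟨T, hT⟩ := h.exists_intCast_eq (x := u + mapRingHom σ u)
    (by rw [map_add, h.mapRingHom_mapRingHom, add_comm])
  obtain ⟨R, hR⟩ := h.exists_intCast_eq (x := (u - mapRingHom σ u) * t)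
    (by rw [map_mul, map_sub, h.mapRingHom_mapRingHom, mapRingHom_eq_neg hσt]; ring)
  have hRT : R ^ 2 = n * (T ^ 2 - 4) := by
    have hRT' : (R : 𝓞 B) ^ 2 = n * (T ^ 2 - 4) := by
      rw [← hR, ← hT, mul_pow, ht]
      linear_combination (-4 * (n : 𝓞 B)) * hnorm
    exact_mod_cast hRT'
  obtain ⟨r, rfl⟩ : (n : ℤ) ∣ R :=
    ((Int.squarefree_natCast.2 hn).dvd_pow_iff_dvd two_ne_zero).1 ⟨_, hRT⟩
  refine ⟨T, r, hT, mul_left_cancel₀ (Nat.cast_ne_zero.2 hn.ne_zero) ?_⟩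
  linear_combination -hRT

lemma QuadraticConj.isSquare_map_unit (hneg : ¬ IsNorm (algebraMap ℚ B) σ (-1))
    (hn : Squarefree n) (hn4 : n % 4 = 1) (ht : t ^ 2 = n) (hσt : σ t = -t)
    (hF : ∀ d : ℤ, d ∣ n → IsSquare (d : F)) (φ : 𝓞 B →+* F) (u : (𝓞 B)ˣ) :
    IsSquare (φ u) := by
  have hnorm := h.mul_mapRingHom_eq_one hneg u
  obtain ⟨T, r, hT, hTr⟩ := h.exists_trace_sq_eq hneg hn ht hσt u
  have hsq : IsSquare (φ (T + 2)) := by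
    rw [map_add, map_intCast, map_ofNat]
    exact_mod_cast isSquare_add_two_of_mul_sub_two_eq hF (by omega) hTr
  have key : (u : 𝓞 B) * (T + 2) = (1 + u) ^ 2 := by
    rw [← hT]
    linear_combination hnorm
  obtain hT0 | hT0 := eq_or_ne (φ (T + 2)) 0
  · have hu : φ u = -1 := by
      have hu0 := congrArg φ key
      rw [map_mul, hT0, mul_zero, map_pow, eq_comm, sq_eq_zero_iff, map_add, map_one] at hu0
      exact (neg_eq_of_add_eq_zero_right hu0).symm
    rw [hu]
    exact_mod_cast hF (-1) (neg_dvd.2 (one_dvd _))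
  · rw [← mul_div_cancel_right₀ (φ u) hT0, ← map_mul, key, map_pow]
    exact (IsSquare.sq _).div hsq

end

section

variable {p : ℕ} [Fact p.Prime]

lemma isSquare_natCast_padic (h2 : p ≠ 2) {n : ℕ} (hn : IsSquare (n : ZMod p)) (hn0 : ¬ p ∣ n) :
    IsSquare (n : ℚ_[p]) := by
  obtain ⟨r, hr⟩ := exists_sq_eq_natCast h2 hn hn0
  exact ⟨r, by rw [← PadicInt.coe_natCast, ← hr, PadicInt.coe_pow, pow_two]⟩

lemma isSquare_neg_one_padic (hp4 : p % 4 = 1) : IsSquare (-1 : ℚ_[p]) := by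
  obtain ⟨r, hr⟩ : ∃ r : ℤ_[p], r ^ 2 = -1 := by
    refine exists_sq_eq_of_isSquare_toZMod (by omega) ?_ (by simp)
    rw [map_neg, map_one, ZMod.exists_sq_eq_neg_one_iff]
    omega
  exact ⟨r, by rw [← pow_two, ← PadicInt.coe_pow, hr, PadicInt.coe_neg, PadicInt.coe_one]⟩

lemma isSquare_intCast_padic_of_dvd {q s : ℕ} (hq : q.Prime) (hs : s.Prime) (hpq : ¬ p ∣ q)
    (hps : ¬ p ∣ s) (hp4 : p % 4 = 1) (hsq : IsSquare (q : ZMod p)) (hss : IsSquare (s : ZMod p))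
    {d : ℤ} (hd : d ∣ (q * s : ℕ)) : IsSquare (d : ℚ_[p]) := by
  have hnat {m : ℕ} (hm : m ∣ q * s) : IsSquare (m : ℚ_[p]) := by
    obtain ⟨a, b, ha, hb, rfl⟩ := exists_dvd_and_dvd_of_dvd_mul hm
    rw [Nat.cast_mul]
    refine IsSquare.mul ?_ ?_
    · obtain rfl | rfl := (Nat.dvd_prime hq).1 ha
      · simp
      · exact isSquare_natCast_padic (by omega) hsq hpq
    · obtain rfl | rfl := (Nat.dvd_prime hs).1 hb
      · simp
      · exact isSquare_natCast_padic (by omega) hss hps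
  obtain ⟨m, rfl | rfl⟩ := d.eq_nat_or_neg
  · exact_mod_cast hnat (by exact_mod_cast hd)
  · rw [Int.cast_neg, Int.cast_natCast, ← neg_one_mul]
    exact (isSquare_neg_one_padic hp4).mul (hnat (by exact_mod_cast (neg_dvd.1 hd)))

end

/-! ### An ideal class that is not extended from `ℚ(√(pqs))` -/

section Split

variable {R : Type*} [CommRing R] {I : Ideal R}

lemma sup_span_mul_sup_span_eq {x y : R} (hxy : x * y ∈ I)
    (hc : IsCoprime (I ⊔ Ideal.span {x}) (I ⊔ Ideal.span {y})) :
    (I ⊔ Ideal.span {x}) * (I ⊔ Ideal.span {y}) = I := by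
  apply le_antisymm
  · rw [Ideal.sup_mul, Ideal.mul_sup, Ideal.mul_sup, Ideal.span_singleton_mul_span_singleton]
    exact sup_le (sup_le Ideal.mul_le_left Ideal.mul_le_left)
      (sup_le Ideal.mul_le_right (I.span_singleton_le_iff_mem.2 hxy))
  · rw [Ideal.mul_eq_inf_of_coprime hc.sup_eq]
    exact le_inf le_sup_left le_sup_left

lemma sup_span_mul_map_eq {σ : R →+* R} {x : R} {l n c : ℕ} (hl : (l : R) ∈ I)
    (hσ : I.map σ = I) (hx : x ^ 2 = n) (hσx : σ x = -x) (hc : l.Coprime (2 * c))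
    (hn : (l : ℤ) ∣ n - c ^ 2) :
    (I ⊔ Ideal.span {x - c}) * (I ⊔ Ideal.span {x - c}).map σ = I := by
  rw [Ideal.map_sup, hσ, Ideal.map_span, Set.image_singleton, map_sub, map_natCast, hσx]
  apply sup_span_mul_sup_span_eq
  · obtain ⟨z, hz⟩ := hn
    have hz' : (n - c ^ 2 : R) = l * z := by exact_mod_cast congrArg ((↑) : ℤ → R) hz
    rw [show (x - c) * (-x - c) = -z * l by linear_combination -hx - hz']
    exact I.mul_mem_left _ hl
  · obtain ⟨a, b, hab⟩ := Nat.isCoprime_iff_coprime.2 hc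
    have hab' : (a * l + b * (2 * c) : R) = 1 := by exact_mod_cast congrArg ((↑) : ℤ → R) hab
    rw [Ideal.isCoprime_iff_exists]
    refine ⟨a * l - b * (x - c), ?_, -b * (-x - c), ?_, by linear_combination hab'⟩
    · exact sub_mem (Ideal.mem_sup_left (I.mul_mem_left _ hl))
        (Ideal.mem_sup_right (Ideal.mul_mem_left _ _ (Ideal.mem_span_singleton_self _)))
    · exact Ideal.mem_sup_right (Ideal.mul_mem_left _ _ (Ideal.mem_span_singleton_self _))

end Split

section NormOfIdeals

variable {B L K k : Type*} [Field B] [Field L] [Field K] [Field k]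
  [NumberField B] [NumberField L] [NumberField K] [NumberField k]
  {i : B →+* L} {f : L →+* K} {g : k →+* L} {ρ : L →+* L} {τ : K →+* K} {κ : k →+* k}

lemma toPrincipalIdeal_eq_integralIdeal {x : 𝓞 K} {y : Kˣ} (hy : (y : K) = x)
    (hx : Ideal.span {x} ≠ ⊥) : toPrincipalIdeal (𝓞 K) K y = integralIdeal (Ideal.span {x}) hx := by
  apply Units.ext
  rw [coe_toPrincipalIdeal, coe_integralIdeal, hy, FractionalIdeal.coeIdeal_span_singleton]

lemma exists_idealGroup_mul_idealMap_eq {l m n c d : ℕ} {t : 𝓞 L} {r : 𝓞 K} (hl : l ≠ 0)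
    (hc : l.Coprime (2 * c)) (hd : l.Coprime (2 * d)) (hn : (l : ℤ) ∣ n - c ^ 2)
    (hm : (l : ℤ) ∣ m - d ^ 2) (ht : t ^ 2 = n) (hr : r ^ 2 = m) (hρt : ρ t = -t)
    (hτf : τ.comp f = f) (hτr : τ r = -r) :
    ∃ (b : IdealGroup L) (I : IdealGroup K),
      b * idealMap ρ b = toPrincipalIdeal (𝓞 L) L (Units.mk0 (l : L) (Nat.cast_ne_zero.2 hl)) ∧
        I * idealMap τ I = idealMap f b := by
  set I₀ := Ideal.span {(l : 𝓞 L)} with hI₀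
  set b := I₀ ⊔ Ideal.span {t - c}
  set I := b.map (mapRingHom f) ⊔ Ideal.span {r - d}
  have hI₀bot : I₀ ≠ ⊥ := by
    rw [hI₀, Ne, Ideal.span_singleton_eq_bot]
    exact_mod_cast hl
  have hb : b ≠ ⊥ := ne_bot_of_le_ne_bot hI₀bot le_sup_left
  have hI : I ≠ ⊥ := ne_bot_of_le_ne_bot (map_mapRingHom_ne_bot f hb) le_sup_left
  have hlb : (l : 𝓞 L) ∈ b := Ideal.mem_sup_left (Ideal.mem_span_singleton_self _)
  have hbρ : b * b.map (mapRingHom ρ) = I₀ :=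
    sup_span_mul_map_eq (Ideal.mem_span_singleton_self _) (by
      rw [hI₀, Ideal.map_span, Set.image_singleton, map_natCast]) ht (mapRingHom_eq_neg hρt) hc hn
  have hIτ : I * I.map (mapRingHom τ) = b.map (mapRingHom f) := by
    refine sup_span_mul_map_eq ?_ ?_ hr (mapRingHom_eq_neg hτr) hd hm
    · simpa only [map_natCast] using Ideal.mem_map_of_mem (mapRingHom f) hlb
    · rw [Ideal.map_map]
      congr 1
      exact RingHom.ext fun x ↦ RingOfIntegers.ext (RingHom.congr_fun hτf x)
  refine ⟨integralIdeal b hb, integralIdeal I hI, ?_, ?_⟩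
  · rw [toPrincipalIdeal_eq_integralIdeal (x := (l : 𝓞 L)) (by simp) hI₀bot,
      idealMap_integralIdeal, ← integralIdeal_mul]
    congr 1
  · simp only [idealMap_integralIdeal, ← integralIdeal_mul]
    congr 1

lemma QuadraticConj.exists_mul_idealMap_eq_toPrincipalIdeal
    (h : QuadraticConj (algebraMap ℚ k) κ) (a : IdealGroup k) : ∃ r : ℚˣ,
      a * idealMap κ a =
        toPrincipalIdeal (𝓞 k) k (Units.map (algebraMap ℚ k : ℚ →* k) r) := by
  obtain ⟨b, hb⟩ := h.exists_mul_idealMap_eq_idealMap a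
  obtain ⟨r, rfl⟩ : b ∈ (toPrincipalIdeal (𝓞 ℚ) ℚ).range := by
    have : Subsingleton (ClassGroup (𝓞 ℚ)) :=
      (Nat.card_eq_one_iff_unique.1 card_classGroup_rat).1
    rw [← ker_idealClass]
    exact Subsingleton.elim _ _
  exact ⟨r, by rw [hb, idealMap_toPrincipalIdeal]⟩

lemma QuadraticConj.exists_eq_sq_mul_toPrincipalIdeal (h : QuadraticConj f τ) {b : IdealGroup L}
    {I : IdealGroup K} (hI : I * idealMap τ I = idealMap f b) {a : IdealGroup k}
    (hIa : idealClass K I = classMap (f.comp g) (idealClass k a)) :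
    ∃ y : Lˣ, b = idealMap g a ^ 2 * toPrincipalIdeal (𝓞 L) L y := by
  obtain ⟨x, hx⟩ : I / idealMap f (idealMap g a) ∈ (toPrincipalIdeal (𝓞 K) K).range := by
    rw [← ker_idealClass, MonoidHom.mem_ker, map_div, hIa, idealMap_idealMap, classMap_idealClass,
      div_self']
  obtain ⟨y, hy⟩ := h.exists_mul_map_eq_unitsMap x
  refine ⟨y, idealMap_injective f ?_⟩
  rw [eq_div_iff_mul_eq'] at hx
  rw [← hI, ← hx, map_mul, map_mul, h.idealMap_idealMap_base, idealMap_toPrincipalIdeal,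
    mul_mul_mul_comm, ← map_mul (toPrincipalIdeal (𝓞 K) K), hy, map_pow,
    idealMap_toPrincipalIdeal, pow_two, mul_comm]

lemma QuadraticConj.exists_toPrincipalIdeal_eq_sq_mul (h : QuadraticConj (algebraMap ℚ k) κ)
    (hρg : ρ.comp g = g.comp κ) {a : IdealGroup k} {b : IdealGroup L} {x y : Lˣ}
    (hb : b = idealMap g a ^ 2 * toPrincipalIdeal (𝓞 L) L y)
    (hbx : b * idealMap ρ b = toPrincipalIdeal (𝓞 L) L x) :
    ∃ r : ℚˣ, toPrincipalIdeal (𝓞 L) L x = toPrincipalIdeal (𝓞 L) L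
      (Units.map (algebraMap ℚ L : ℚ →* L) r ^ 2 * (y * Units.map (ρ : L →* L) y)) := by
  obtain ⟨r, hr⟩ := h.exists_mul_idealMap_eq_toPrincipalIdeal a
  refine ⟨r, ?_⟩
  have hr' : idealMap g a * idealMap ρ (idealMap g a) =
      toPrincipalIdeal (𝓞 L) L (Units.map (algebraMap ℚ L : ℚ →* L) r) := by
    rw [idealMap_idealMap, hρg, ← idealMap_idealMap, ← map_mul, hr, idealMap_toPrincipalIdeal]
    congr 1
    exact Units.ext (by simp)
  rw [← hbx, hb, map_mul, map_pow, mul_mul_mul_comm, ← mul_pow, hr', idealMap_toPrincipalIdeal]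
  simp only [map_mul, map_pow]

lemma exists_unitsInclusion_mul_eq {x y : Bˣ}
    (h : toPrincipalIdeal (𝓞 L) L (Units.map (i : B →* L) x) =
      toPrincipalIdeal (𝓞 L) L (Units.map (i : B →* L) y)) :
    ∃ u : (𝓞 B)ˣ, unitsInclusion B u * y = x := by
  simp only [← idealMap_toPrincipalIdeal] at h
  obtain ⟨u, hu⟩ : x / y ∈ (unitsInclusion B).range := by
    rw [range_unitsInclusion, MonoidHom.mem_ker, map_div, idealMap_injective i h, div_self']
  exact ⟨u, by rw [hu, div_mul_cancel]⟩

end NormOfIdeals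

lemma isSquare_of_pow_eq_sq_mul {p : ℕ} [Fact p.Prime] {l m : ℕ} (hm : Odd m) {w x y : ℚ_[p]}
    (h : (l : ℚ_[p]) ^ m = w ^ 2 * (x ^ 2 - p * y ^ 2)) : IsSquare (l : ZMod p) := by
  obtain ⟨j, rfl⟩ := hm
  obtain hl | hl := eq_or_ne (l : ZMod p) 0
  · simp [hl]
  have hsq : IsSquare ((l : ZMod p) ^ (2 * j + 1)) := by
    rw [← map_natCast PadicInt.toZMod, ← map_pow]
    refine isSquare_toZMod_of_eq_sq_sub (mul_one p).symm (Nat.Prime.not_dvd_one Fact.out)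
      (x := w * x) (y := w * y) ?_
    rw [PadicInt.coe_pow, PadicInt.coe_natCast, h]
    ring
  rw [← mul_div_cancel_left₀ (l : ZMod p) (pow_ne_zero (2 * j) hl), ← pow_succ]
  exact hsq.div ⟨l ^ j, by ring⟩

section Tower

variable {B L K k : Type*} [Field B] [Field L] [Field K] [Field k]
  [NumberField B] [NumberField L] [NumberField K] [NumberField k]
  {i : B →+* L} {f : L →+* K} {g : k →+* L} {b : B} {c : L} {e : K} {d : k} {p q s : ℕ}

lemma isSquare_map_unit_sqrt_mul [Fact p.Prime] (hq : q.Prime) (hs : s.Prime) (hqs : q ≠ s)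
    (hpq : ¬ p ∣ q) (hps : ¬ p ∣ s) (hp4 : p % 4 = 1) (hq4 : q % 4 = 3) (hs4 : s % 4 = 3)
    (hsq : IsSquare (q : ZMod p)) (hss : IsSquare (s : ZMod p))
    (h : SqrtExtension (algebraMap ℚ B) (q * s) b) (φ : 𝓞 B →+* ℚ_[p]) (u : (𝓞 B)ˣ) :
    IsSquare (φ u) := by
  have : Fact q.Prime := ⟨hq⟩
  obtain ⟨σ, t, hσ, rfl, ht, hσt⟩ := h.exists_integral_conj
  refine hσ.isSquare_map_unit ?_ ?_ ?_ ht hσt ?_ φ u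
  · simpa using h.not_isNorm_neg_one hq4 hσ.apply_map hσt rfl
      (not_dvd_of_prime_of_ne hq hs hqs) (algebraMap ℚ ℚ_[q])
  · exact (Nat.squarefree_mul ((Nat.coprime_primes hq hs).2 hqs)).2
      ⟨hq.squarefree, hs.squarefree⟩
  · simp [Nat.mul_mod, hq4, hs4]
  · exact fun d ↦ isSquare_intCast_padic_of_dvd hq hs hpq hps hp4 hsq hss

lemma exists_pow_eq_unit_mul_of_idealClass_eq {l n : ℕ} {ρ : L →+* L} {τ : K →+* K}
    {κ : k →+* k} (hl : l ≠ 0) (hL : SqrtExtension i p c) (hρi : ∀ x, ρ (i x) = i x)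
    (hρc : ρ c = -c) (hτ : QuadraticConj f τ) (hκ : QuadraticConj (algebraMap ℚ k) κ)
    (hρg : ρ.comp g = g.comp κ) {a : IdealGroup k} {b : IdealGroup L} {I : IdealGroup K}
    (hb : b * idealMap ρ b = toPrincipalIdeal (𝓞 L) L (Units.mk0 (l : L) (Nat.cast_ne_zero.2 hl)))
    (hI : I * idealMap τ I = idealMap f b)
    (hIa : idealClass K (I ^ n) = classMap (f.comp g) (idealClass k a)) :
    ∃ (u : (𝓞 B)ˣ) (r : ℚ) (x y : B),
      (l : B) ^ n = (u : 𝓞 B) * (algebraMap ℚ B r ^ 2 * (x ^ 2 - p * y ^ 2)) := by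
  obtain ⟨Y, hY⟩ := hτ.exists_eq_sq_mul_toPrincipalIdeal (b := b ^ n) (I := I ^ n)
    (by rw [map_pow, map_pow, ← mul_pow, hI]) hIa
  obtain ⟨r, hr⟩ := hκ.exists_toPrincipalIdeal_eq_sq_mul hρg hY
    (by rw [map_pow, ← mul_pow, hb, ← map_pow])
  obtain ⟨x, y, hxy⟩ := hL.exists_mul_conj_eq hρi hρc (Y : L)
  have hz : x ^ 2 - p * y ^ 2 ≠ 0 := by
    intro h0
    rw [h0, map_zero, mul_eq_zero, map_eq_zero, or_self] at hxy
    exact Y.ne_zero hxy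
  have hlB : (l : B) ≠ 0 := Nat.cast_ne_zero.2 hl
  obtain ⟨u, hu⟩ := exists_unitsInclusion_mul_eq (i := i) (x := Units.mk0 (l : B) hlB ^ n)
    (y := Units.map (algebraMap ℚ B : ℚ →* B) r ^ 2 * Units.mk0 _ hz) <| by
      convert hr using 2
      · exact Units.ext (by simp)
      · exact Units.ext (by simp [← hxy])
  exact ⟨u, r, x, y, (congrArg Units.val hu).symm⟩

theorem exists_idealGroup_idealClass_pow_ne [Fact p.Prime] (hq : q.Prime) (hs : s.Prime)
    (hqs : q ≠ s) (hpq : ¬ p ∣ q) (hps : ¬ p ∣ s) (hp4 : p % 4 = 1) (hq4 : q % 4 = 3)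
    (hs4 : s % 4 = 3) (hsq : IsSquare (q : ZMod p)) (hss : IsSquare (s : ZMod p))
    (hB : SqrtExtension (algebraMap ℚ B) (q * s) b) (hL : SqrtExtension i p c)
    (hK : SqrtExtension f q e) (hk : SqrtExtension (algebraMap ℚ k) (p * q * s) d)
    (hg : g d = c * i b) {l x y : ℕ} (hl : ¬ IsSquare (l : ZMod p)) (hx : l.Coprime (2 * x))
    (hy : l.Coprime (2 * y)) (hlx : (l : ℤ) ∣ q - x ^ 2)
    (hly : (l : ℤ) ∣ (p * q * s : ℕ) - y ^ 2) :
    ∃ I : IdealGroup K, ∀ n, Odd n → ∀ a : IdealGroup k,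
      idealClass K (I ^ n) ≠ classMap (f.comp g) (idealClass k a) := by
  have hl0 : l ≠ 0 := by
    rintro rfl
    simp at hl
  obtain ⟨τ, r, hτ, -, hr, hτr⟩ := hK.exists_integral_conj
  obtain ⟨ρ, hρi, hρc⟩ := hL.exists_conj
  obtain ⟨κ, hκQ, hκd⟩ := hk.exists_conj
  have hρg : ρ.comp g = g.comp κ := by
    refine RingHom.ext fun z ↦ ?_
    obtain ⟨z₁, z₂, rfl⟩ := hk.exists_eq_add z
    simp [hg, hκd, hρi, hρc]
  obtain ⟨t, ht, htsq⟩ := exists_integer_sqrt (K := L) (θ := g d) (n := p * q * s)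
    (by rw [← map_pow, hk.sq_eq, map_natCast])
  have hρt : ρ t = -t := by rw [ht, hg, map_mul, hρi, hρc, neg_mul]
  obtain ⟨b, I, hb, hI⟩ :=
    exists_idealGroup_mul_idealMap_eq hl0 hy hx hly hlx htsq hr hρt hτ.comp_map hτr
  refine ⟨I, fun n hn a hIa ↦ hl ?_⟩
  obtain ⟨u, w, x, y, hxy⟩ := exists_pow_eq_unit_mul_of_idealClass_eq hl0 hL hρi hρc hτ
    (hk.quadraticConj hκQ hκd) hρg hb hI hIa
  obtain ⟨φ, -⟩ := hB.exists_lift_padic (l := p) (algebraMap ℚ ℚ_[p]) (by omega)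
    (by rw [Nat.cast_mul]; exact hsq.mul hss) ((Nat.Prime.dvd_mul Fact.out).not.2 (by tauto))
  obtain ⟨v, hv⟩ := isSquare_map_unit_sqrt_mul hq hs hqs hpq hps hp4 hq4 hs4 hsq hss hB
    (φ.comp (algebraMap (𝓞 B) B)) u
  refine isSquare_of_pow_eq_sq_mul hn (w := v * φ (algebraMap ℚ B w)) (x := φ x) (y := φ y) ?_
  have hφ := congrArg φ hxy
  simp only [map_mul, map_pow, map_sub, map_natCast] at hφ
  rw [hφ, show φ (u : 𝓞 B) = v * v from hv]
  ring

end Tower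

/-! ### The auxiliary prime -/

lemma exists_prime_gt_modEq_and_modEq_and_modEq {m n r a b c : ℕ} (hmn : m.Coprime n)
    (hmr : m.Coprime r) (hnr : n.Coprime r) (hm : m ≠ 0) (hn : n ≠ 0) (hr : r ≠ 0)
    (ha : a.Coprime m) (hb : b.Coprime n) (hc : c.Coprime r) (N : ℕ) :
    ∃ l > N, l.Prime ∧ l ≡ a [MOD m] ∧ l ≡ b [MOD n] ∧ l ≡ c [MOD r] := by
  obtain ⟨u, hum, hun⟩ := Nat.chineseRemainder hmn a b
  obtain ⟨v, hvu, hvr⟩ := Nat.chineseRemainder (hmr.mul_left hnr) u c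
  have hvm := (hvu.of_mul_right n).trans hum
  have hvn := (hvu.of_mul_left m).trans hun
  have hv : v.Coprime (m * n * r) := by
    refine .mul_right (.mul_right ?_ ?_) ?_
    · rwa [Nat.Coprime, hvm.gcd_eq]
    · rwa [Nat.Coprime, hvn.gcd_eq]
    · rwa [Nat.Coprime, hvr.gcd_eq]
  obtain ⟨l, hlN, hl, hlv⟩ := Nat.forall_exists_prime_gt_and_modEq N
    (mul_ne_zero (mul_ne_zero hm hn) hr) hv
  exact ⟨l, hlN, hl, ((hlv.of_mul_right r).of_mul_right n).trans hvm,
    ((hlv.of_mul_right r).of_mul_left m).trans hvn, (hlv.of_mul_left (m * n)).trans hvr⟩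

lemma exists_coprime_not_isSquare {p : ℕ} [Fact p.Prime] (hp2 : p ≠ 2) :
    ∃ a : ℕ, a.Coprime p ∧ ¬ IsSquare (a : ZMod p) := by
  obtain ⟨a, ha⟩ := FiniteField.exists_nonsquare (F := ZMod p) (by rwa [ZMod.ringChar_zmod_n])
  refine ⟨a.val, ?_, by rwa [ZMod.natCast_zmod_val]⟩
  rw [← ZMod.isUnit_iff_coprime, ZMod.natCast_zmod_val, isUnit_iff_ne_zero]
  rintro rfl
  exact ha .zero

lemma isSquare_mul_of_not_isSquare {F : Type*} [Field F] [Finite F] {a b : F} (ha : ¬ IsSquare a)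
    (hb : ¬ IsSquare b) : IsSquare (a * b) := by
  classical
  have := Fintype.ofFinite F
  have hab : a * b ≠ 0 := mul_ne_zero (fun h ↦ ha (h ▸ .zero)) (fun h ↦ hb (h ▸ .zero))
  rw [← quadraticChar_one_iff_isSquare hab, map_mul,
    (quadraticChar_neg_one_iff_not_isSquare (F := F)).2 ha,
    (quadraticChar_neg_one_iff_not_isSquare (F := F)).2 hb, neg_one_mul, neg_neg]

lemma exists_coprime_two_mul_and_dvd_sub_sq {l n : ℕ} [Fact l.Prime] (h2 : l ≠ 2)
    (h : IsSquare (n : ZMod l)) (hn : ¬ l ∣ n) :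
    ∃ x : ℕ, l.Coprime (2 * x) ∧ (l : ℤ) ∣ n - x ^ 2 := by
  have hl : l.Prime := Fact.out
  obtain ⟨z, hz⟩ := h
  have hdvd : (l : ℤ) ∣ n - (z.val : ℤ) ^ 2 := by
    rw [← ZMod.intCast_zmod_eq_zero_iff_dvd, Int.cast_sub, Int.cast_pow, Int.cast_natCast,
      Int.cast_natCast, hz, ZMod.natCast_zmod_val, pow_two, sub_self]
  refine ⟨z.val, .mul_right ((Nat.coprime_primes hl Nat.prime_two).2 h2)
    (hl.coprime_iff_not_dvd.2 fun hz ↦ hn ?_), hdvd⟩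
  have hdvd' := dvd_add hdvd (dvd_pow (Int.natCast_dvd_natCast.2 hz) two_ne_zero)
  rw [sub_add_cancel] at hdvd'
  exact_mod_cast hdvd'

section

variable {p q s : ℕ} [Fact p.Prime] [Fact q.Prime] [Fact s.Prime] (hpq : p ≠ q) (hps : p ≠ s)
  (hqs : q ≠ s) (hp2 : p ≠ 2) (hq2 : q ≠ 2) (hs2 : s ≠ 2)

include hpq hps hqs hp2 hq2 hs2

lemma exists_prime_not_isSquare_isSquare (N : ℕ) : ∃ l > N, l.Prime ∧ l ≠ 2 ∧
    ¬ IsSquare (l : ZMod p) ∧ IsSquare (q : ZMod l) ∧ IsSquare ((p * q * s : ℕ) : ZMod l) := by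
  obtain ⟨a, hap, ha⟩ := exists_coprime_not_isSquare hp2
  obtain ⟨b, hbs, hb⟩ := exists_coprime_not_isSquare hs2
  have hp : p.Prime := Fact.out
  have hq : q.Prime := Fact.out
  have hs : s.Prime := Fact.out
  have coprime_four {x : ℕ} (hx : x.Prime) (h : x ≠ 2) : x.Coprime 4 :=
    ((Nat.coprime_primes hx Nat.prime_two).2 h).pow_right 2
  obtain ⟨l, hlN, hl, hla, hlb, hl1⟩ := exists_prime_gt_modEq_and_modEq_and_modEq
    ((Nat.coprime_primes hp hs).2 hps)
    ((coprime_four hp hp2).mul_right ((Nat.coprime_primes hp hq).2 hpq))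
    ((coprime_four hs hs2).mul_right ((Nat.coprime_primes hs hq).2 hqs.symm))
    hp.ne_zero hs.ne_zero (mul_ne_zero four_ne_zero hq.ne_zero) hap hbs (Nat.coprime_one_left _) N
  rw [← ZMod.natCast_eq_natCast_iff] at hla hlb
  have hl4 : l % 4 = 1 := hl1.of_mul_right q
  have hlq : (l : ZMod q) = 1 := by
    simpa using (ZMod.natCast_eq_natCast_iff _ _ _).2 (hl1.of_mul_left 4)
  rw [← hla] at ha
  rw [← hlb] at hb
  have : Fact l.Prime := ⟨hl⟩
  have hq' : IsSquare (q : ZMod l) :=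
    (ZMod.exists_sq_eq_prime_iff_of_mod_four_eq_one hl4 hq2).2 (hlq ▸ .one)
  have hps' : IsSquare (p * s : ZMod l) :=
    isSquare_mul_of_not_isSquare
      ((ZMod.exists_sq_eq_prime_iff_of_mod_four_eq_one hl4 hp2).not.2 ha)
      ((ZMod.exists_sq_eq_prime_iff_of_mod_four_eq_one hl4 hs2).not.2 hb)
  refine ⟨l, hlN, hl, by omega, ha, hq', ?_⟩
  rw [Nat.cast_mul, Nat.cast_mul, mul_right_comm]
  exact hps'.mul hq'

lemma exists_dvd_sub_sq_and_dvd_sub_sq : ∃ l x y : ℕ, ¬ IsSquare (l : ZMod p) ∧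
    l.Coprime (2 * x) ∧ l.Coprime (2 * y) ∧ (l : ℤ) ∣ q - x ^ 2 ∧
      (l : ℤ) ∣ (p * q * s : ℕ) - y ^ 2 := by
  obtain ⟨l, hlN, hl, hl2, hlp, hq, hpqs⟩ :=
    exists_prime_not_isSquare_isSquare hpq hps hqs hp2 hq2 hs2 (p * q * s)
  have : Fact l.Prime := ⟨hl⟩
  have hdvd : ¬ l ∣ p * q * s := Nat.not_dvd_of_pos_of_lt (Nat.pos_of_ne_zero (mul_ne_zero
    (mul_ne_zero (NeZero.ne p) (NeZero.ne q)) (NeZero.ne s))) hlN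
  obtain ⟨x, hx, hlx⟩ := exists_coprime_two_mul_and_dvd_sub_sq hl2 hq
    fun h ↦ hdvd ((h.mul_left p).mul_right s)
  obtain ⟨y, hy, hly⟩ := exists_coprime_two_mul_and_dvd_sub_sq hl2 hpqs hdvd
  exact ⟨l, x, y, hlp, hx, hy, hlx, hly⟩

end

/-! ### The lower bound for the 2-class group -/

section LowerBound

open CommGroup (primaryComponent)

variable {G H : Type*} [CommGroup G] [CommGroup H] {φ : G →* H} {p n : ℕ}

lemma map_primaryComponent_le (φ : G →* H) :
    (primaryComponent G p).map φ ≤ primaryComponent H p := by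
  rintro _ ⟨x, ⟨n, hn⟩, rfl⟩
  exact ⟨n, by rw [← map_pow, hn, map_one]⟩

lemma map_primaryComponent_ne [Finite H] [Fact p.Prime] {y : H}
    (hy : ∀ m, p.Coprime m → y ^ m ∉ φ.range) :
    (primaryComponent G p).map φ ≠ primaryComponent H p := by
  intro h
  obtain ⟨k, m, hm, hcard⟩ := Nat.exists_eq_pow_mul_and_not_dvd (n := Nat.card H)
    Nat.card_pos.ne' p (Nat.Prime.ne_one Fact.out)
  refine hy m ((Nat.Prime.coprime_iff_not_dvd Fact.out).2 hm) ?_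
  refine Subgroup.map_le_range φ (primaryComponent G p) (h ▸ ⟨k, ?_⟩)
  rw [← pow_mul, mul_comm, ← hcard, pow_card_eq_one']

lemma mul_card_map_primaryComponent_dvd [Finite H] [Fact p.Prime] {y : H}
    (hy : ∀ m, p.Coprime m → y ^ m ∉ φ.range) :
    p * Nat.card ((primaryComponent G p).map φ) ∣ Nat.card (primaryComponent H p) := by
  have hle := map_primaryComponent_le (p := p) φ
  obtain ⟨k, hk⟩ : ∃ k, ((primaryComponent G p).map φ).relIndex (primaryComponent H p) = p ^ k :=
    CommGroup.primaryComponent.isPGroup.index _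
  have hk0 : k ≠ 0 := by
    rintro rfl
    exact map_primaryComponent_ne hy (hle.antisymm (Subgroup.relIndex_eq_one.1 hk))
  rw [← Subgroup.relIndex_bot_left (primaryComponent H p),
    ← Subgroup.relIndex_mul_relIndex _ _ _ bot_le hle, Subgroup.relIndex_bot_left, hk, mul_comm]
  exact mul_dvd_mul_left _ (dvd_pow_self p hk0)

lemma card_ker_dvd_of_forall_pow_eq_one [IsCyclic G] (h : ∀ x, φ x = 1 → x ^ n = 1) :
    Nat.card φ.ker ∣ n := by
  rw [← IsCyclic.exponent_eq_card]
  exact Monoid.exponent_dvd_of_forall_pow_eq_one fun x ↦ Subtype.ext (h x x.2)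

lemma mul_card_primaryComponent_dvd [Finite H] [Fact p.Prime]
    (hc : IsCyclic (primaryComponent G p)) (hn : ∀ x, φ x = 1 → x ^ n = 1) {y : H}
    (hy : ∀ m, p.Coprime m → y ^ m ∉ φ.range) :
    p * Nat.card (primaryComponent G p) ∣ n * Nat.card (primaryComponent H p) := by
  set ψ := φ.comp (primaryComponent G p).subtype with hψ
  have hrange : ψ.range = (primaryComponent G p).map φ := by
    rw [hψ, MonoidHom.range_comp, Subgroup.range_subtype]
  have hker : Nat.card ψ.ker ∣ n :=
    card_ker_dvd_of_forall_pow_eq_one fun x hx ↦ Subtype.ext (hn x hx)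
  rw [← ψ.ker.card_mul_index, Subgroup.index_ker, hrange, mul_left_comm]
  exact mul_dvd_mul hker (mul_card_map_primaryComponent_dvd hy)

lemma card_twoClassGroup_dvd_two_mul {L K k : Type*} [Field L] [Field K] [Field k]
    [NumberField L] [NumberField K] [NumberField k] {f : L →+* K} {g : k →+* L} {κ : L →+* L}
    {τ : K →+* K} (hκ : QuadraticConj g κ) (hτ : QuadraticConj f τ)
    (hc : IsCyclic (twoClassGroup k)) {I : IdealGroup K}
    (hI : ∀ n, Odd n → ∀ a, idealClass K (I ^ n) ≠ classMap (f.comp g) (idealClass k a)) :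
    Nat.card (twoClassGroup k) ∣ 2 * Nat.card (twoClassGroup K) := by
  have : Fact (Nat.Prime 2) := ⟨Nat.prime_two⟩
  have hker (x : ClassGroup (𝓞 k)) (hx : classMap (f.comp g) x = 1) : x ^ 4 = 1 := by
    rw [← classMap_classMap] at hx
    rw [pow_mul x 2 2]
    refine hκ.sq_eq_one_of_classMap_eq_one ?_
    rw [map_pow, hτ.sq_eq_one_of_classMap_eq_one hx]
  refine Nat.dvd_of_mul_dvd_mul_left two_pos ?_
  rw [← mul_assoc]
  refine mul_card_primaryComponent_dvd hc hker (y := idealClass K I) ?_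
  rintro m hm ⟨x, hx⟩
  obtain ⟨a, rfl⟩ := idealClass_surjective x
  exact hI m (Nat.coprime_two_left.1 hm) a (by rw [map_pow, hx])

end LowerBound

/-! ### Multiquadratic subfields of `ℂ` -/

section ComplexSqrt

/-- The nonnegative square root of a natural number, as an element of `ℂ`. -/
noncomputable def complexSqrt (n : ℕ) : ℂ := ((Real.sqrt n : ℝ) : ℂ)

lemma complexSqrt_sq (n : ℕ) : complexSqrt n ^ 2 = n := by
  rw [complexSqrt, ← Complex.ofReal_pow, Real.sq_sqrt n.cast_nonneg, Complex.ofReal_natCast]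

lemma complexSqrt_mul (m n : ℕ) : complexSqrt (m * n) = complexSqrt m * complexSqrt n := by
  rw [complexSqrt, Nat.cast_mul, Real.sqrt_mul m.cast_nonneg, Complex.ofReal_mul]
  rfl

lemma complexSqrt_ne_zero {n : ℕ} (hn : n ≠ 0) : complexSqrt n ≠ 0 := fun h ↦ hn <| by
  have hsq := complexSqrt_sq n
  rw [h, zero_pow two_ne_zero] at hsq
  exact_mod_cast hsq.symm

lemma quadF_le_iff {n : ℕ} {N : IntermediateField ℚ ℂ} : quadF n ≤ N ↔ complexSqrt n ∈ N :=
  IntermediateField.adjoin_simple_le_iff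

lemma quadF_mul_sup {m : ℕ} (hm : m ≠ 0) (n : ℕ) :
    quadF (m * n) ⊔ quadF m = quadF m ⊔ quadF n := by
  have hm' {N : IntermediateField ℚ ℂ} (h : quadF m ≤ N) : complexSqrt m ∈ N := quadF_le_iff.1 h
  refine le_antisymm (sup_le (quadF_le_iff.2 ?_) le_sup_left)
    (sup_le le_sup_right (quadF_le_iff.2 ?_))
  · rw [complexSqrt_mul]
    exact mul_mem (hm' le_sup_left) (quadF_le_iff.1 le_sup_right)
  · rw [← mul_div_cancel_left₀ (complexSqrt n) (complexSqrt_ne_zero hm), ← complexSqrt_mul]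
    exact div_mem (quadF_le_iff.1 le_sup_left) (hm' le_sup_right)

lemma triquad_eq_sup (p q s : ℕ) : triquad p q s = quadF p ⊔ quadF q ⊔ quadF s := by
  rw [triquad, quadF, quadF, quadF, ← IntermediateField.adjoin_union,
    ← IntermediateField.adjoin_union, Set.singleton_union, Set.insert_union, Set.singleton_union]

lemma isIntegral_complexSqrt (n : ℕ) : IsIntegral ℚ (complexSqrt n) :=
  .of_pow two_pos (by rw [complexSqrt_sq]; exact isIntegral_natCast n)

open Polynomial in
lemma finrank_quadF_le (n : ℕ) : Module.finrank ℚ (quadF n) ≤ 2 := by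
  have hdvd : minpoly ℚ (complexSqrt n) ∣ X ^ 2 - C (n : ℚ) :=
    minpoly.dvd ℚ _ (by simp [complexSqrt_sq])
  calc Module.finrank ℚ (quadF n) = (minpoly ℚ (complexSqrt n)).natDegree :=
        IntermediateField.adjoin.finrank (isIntegral_complexSqrt n)
    _ ≤ (X ^ 2 - C (n : ℚ)).natDegree := natDegree_le_of_dvd hdvd (X_pow_sub_C_ne_zero two_pos _)
    _ = 2 := natDegree_X_pow_sub_C

instance numberField_quadF (n : ℕ) : NumberField (quadF n) where
  to_charZero := inferInstance
  to_finiteDimensional := IntermediateField.adjoin.finiteDimensional (isIntegral_complexSqrt n)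

instance numberField_sup (M N : IntermediateField ℚ ℂ) [NumberField M] [NumberField N] :
    NumberField (M ⊔ N : IntermediateField ℚ ℂ) where
  to_charZero := inferInstance
  to_finiteDimensional := IntermediateField.finiteDimensional_sup M N

end ComplexSqrt

section Tower

/-- The inclusion between two intermediate fields, as a ring homomorphism. -/
noncomputable abbrev inclusionHom {M N : IntermediateField ℚ ℂ} (h : M ≤ N) : M →+* N :=
  (IntermediateField.inclusion h).toRingHom

/-- The square root of `n`, as an element of a field containing `ℚ(√n)`. -/
noncomputable def sqrtIn {n : ℕ} {N : IntermediateField ℚ ℂ} (h : quadF n ≤ N) : N :=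
  ⟨complexSqrt n, quadF_le_iff.1 h⟩

variable {M N : IntermediateField ℚ ℂ} {n : ℕ}

lemma inclusionHom_sqrtIn (h : M ≤ N) (hn : quadF n ≤ M) :
    inclusionHom h (sqrtIn hn) = sqrtIn (hn.trans h) := rfl

lemma inclusionHom_sqrtIn_mul {m : ℕ} {M' : IntermediateField ℚ ℂ} (h : M' ≤ N)
    (hmn : quadF (m * n) ≤ M') (hm : quadF m ≤ N) (hn : quadF n ≤ N) :
    inclusionHom h (sqrtIn hmn) = sqrtIn hm * sqrtIn hn := Subtype.ext (complexSqrt_mul m n)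

lemma exists_inclusionHom_eq {M₀ M₂ : IntermediateField ℚ ℂ} (h : M₀ ≤ M) {hM : M ≤ N}
    {h₂ : M₂ ≤ N} {h₀ : M₀ ≤ M₂} (x : M₀) :
    ∃ y, inclusionHom hM y = inclusionHom h₂ (inclusionHom h₀ x) :=
  ⟨inclusionHom h x, rfl⟩

lemma exists_inclusionHom_eq_algebraMap {M' : IntermediateField ℚ ℂ} (h : M ≤ N) (h' : M' ≤ N)
    (r : ℚ) : ∃ y, inclusionHom h y = inclusionHom h' (algebraMap ℚ M' r) :=
  ⟨algebraMap ℚ M r, rfl⟩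

lemma sqrtIn_sq (h : quadF n ≤ N) : sqrtIn h ^ 2 = n := Subtype.ext (complexSqrt_sq n)

lemma subfield_eq_top_of_sup_eq (hM : M ≤ N) (hn : quadF n ≤ N) (h : M ⊔ quadF n = N)
    {S : Subfield N} (hMS : ∀ x, inclusionHom hM x ∈ S) (hnS : sqrtIn hn ∈ S) : S = ⊤ := by
  let S' : IntermediateField ℚ ℂ := (S.map N.val.toRingHom).toIntermediateField fun r ↦
    ⟨algebraMap ℚ N r, hMS (algebraMap ℚ M r), rfl⟩
  have hN : N ≤ S' := h ▸ sup_le (fun x hx ↦ ⟨inclusionHom hM ⟨x, hx⟩, hMS _, rfl⟩)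
    (quadF_le_iff.2 ⟨sqrtIn hn, hnS, rfl⟩)
  refine eq_top_iff.2 fun x _ ↦ ?_
  obtain ⟨y, hy, hyx⟩ := hN x.2
  exact (Subtype.ext hyx : y = x) ▸ hy

lemma sqrtExtension_inclusionHom (hM : M ≤ N) (hn : quadF n ≤ N) (h : M ⊔ quadF n = N)
    (hsq : ∀ a : M, a ^ 2 ≠ n) : SqrtExtension (inclusionHom hM) n (sqrtIn hn) :=
  .of_subfield_eq_top (sqrtIn_sq hn) hsq fun _ ↦ subfield_eq_top_of_sup_eq hM hn h

lemma sqrtExtension_quadF (hsq : ∀ a : ℚ, a ^ 2 ≠ n) :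
    SqrtExtension (algebraMap ℚ (quadF n)) n (sqrtIn le_rfl) := by
  refine .of_subfield_eq_top (sqrtIn_sq le_rfl) hsq fun S hS ↦
    subfield_eq_top_of_sup_eq (M := ⊥) bot_le le_rfl (bot_sup_eq _) ?_
  rintro ⟨_, r, rfl⟩
  exact hS r

lemma sq_ne_of_finrank_lt (h : M ⊔ quadF n = N)
    (hd : Module.finrank ℚ M < Module.finrank ℚ N) (a : M) : a ^ 2 ≠ n := by
  intro ha
  have hsq : complexSqrt n ^ 2 = (a : ℂ) ^ 2 := by
    rw [complexSqrt_sq]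
    exact_mod_cast (congrArg Subtype.val ha).symm
  have hn : complexSqrt n ∈ M := by
    obtain heq | heq := sq_eq_sq_iff_eq_or_eq_neg.1 hsq <;> simp [heq]
  rw [sup_eq_left.2 (quadF_le_iff.2 hn)] at h
  exact hd.ne (by rw [h])

lemma finrank_sup_quadF_le (h : M ⊔ quadF n = N) :
    Module.finrank ℚ N ≤ Module.finrank ℚ M * 2 :=
  h ▸ (IntermediateField.finrank_sup_le M (quadF n)).trans
    (Nat.mul_le_mul_left _ (finrank_quadF_le n))

lemma sqrtExtension_of_finrank_eq_eight {a b c : ℕ} {K : IntermediateField ℚ ℂ}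
    (hN : quadF a ⊔ quadF b = N) (hK : N ⊔ quadF c = K) (h8 : Module.finrank ℚ K = 8) :
    SqrtExtension (algebraMap ℚ (quadF a)) a (sqrtIn le_rfl) ∧
      SqrtExtension (inclusionHom (le_sup_left.trans_eq hN)) b
        (sqrtIn (le_sup_right.trans_eq hN)) ∧
      SqrtExtension (inclusionHom (le_sup_left.trans_eq hK)) c
        (sqrtIn (le_sup_right.trans_eq hK)) := by
  have ha := finrank_quadF_le a
  have hN4 := finrank_sup_quadF_le hN
  have hK8 := finrank_sup_quadF_le hK
  refine ⟨sqrtExtension_quadF fun r hr ↦ ?_,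
    sqrtExtension_inclusionHom _ _ hN (sq_ne_of_finrank_lt hN (by omega)),
    sqrtExtension_inclusionHom _ _ hK (sq_ne_of_finrank_lt hK (by omega))⟩
  refine sq_ne_of_finrank_lt (bot_sup_eq (quadF a)) ?_ (algebraMap ℚ _ r) ?_
  · rw [IntermediateField.finrank_bot]
    omega
  · rw [← map_pow, hr, map_natCast]

end Tower

section Degree

lemma rat_sq_ne_natCast {n : ℕ} (hn : ¬ IsSquare n) (a : ℚ) : a ^ 2 ≠ n := fun h ↦
  hn (Rat.isSquare_natCast_iff.1 ⟨a, by rw [← h, sq]⟩)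

lemma not_isSquare_prime_mul {r m : ℕ} (hr : r.Prime) (hm : ¬ r ∣ m) : ¬ IsSquare (r * m) := by
  rintro ⟨x, hx⟩
  obtain ⟨y, rfl⟩ : r ∣ x := or_self_iff.1 (hr.dvd_mul.1 (hx ▸ dvd_mul_right r m))
  exact hm ⟨y * y, mul_left_cancel₀ hr.ne_zero (by rw [hx]; ring)⟩

lemma finrank_quadF_sup_quadF_sup_quadF {p q s : ℕ} (hp : p.Prime) (hq : q.Prime) (hs : s.Prime)
    (hpq : p ≠ q) (hps : p ≠ s) (hqs : q ≠ s) :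
    Module.finrank ℚ (quadF p ⊔ quadF q ⊔ quadF s : IntermediateField ℚ ℂ) = 8 := by
  have ne {r m n : ℕ} (hr : r.Prime) (hm : ¬ r ∣ m) (hn : r * m = n) (a : ℚ) : a ^ 2 ≠ n :=
    rat_sq_ne_natCast (hn ▸ not_isSquare_prime_mul hr hm) a
  have hp_q := not_dvd_of_prime_of_ne hp hq hpq
  have hp_s := not_dvd_of_prime_of_ne hp hs hps
  have hq_s := not_dvd_of_prime_of_ne hq hs hqs
  have hF := sqrtExtension_quadF (ne hp hp.not_dvd_one (mul_one p))
  have hL := sqrtExtension_inclusionHom le_sup_left le_sup_right rfl <|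
    hF.sq_ne_natCast (ne hq hq.not_dvd_one (mul_one q)) (ne hp hp_q (mul_comm p q))
  have hK := sqrtExtension_inclusionHom le_sup_left le_sup_right rfl <| hL.sq_ne_natCast
    (hF.sq_ne_natCast (ne hs hs.not_dvd_one (mul_one s)) (ne hp hp_s (mul_comm p s)))
    (hF.sq_ne_natCast (ne hq hq_s (mul_comm q s))
      (ne hp (hp.not_dvd_mul hp_s hp_q) (mul_comm p (s * q))))
  rw [hK.finrank_rat, hL.finrank_rat, finrank_sqrt hF]

end Degree

/-! ### The 2-class group of the triquadratic field -/

lemma quadF_mul_mul_sup {p : ℕ} (hp : p ≠ 0) (q s : ℕ) :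
    quadF (p * q * s) ⊔ quadF p = quadF p ⊔ quadF (q * s) := by
  rw [mul_assoc, quadF_mul_sup hp]

lemma quadF_sup_quadF_mul_sup (p s : ℕ) {q : ℕ} (hq : q ≠ 0) :
    quadF p ⊔ quadF (q * s) ⊔ quadF q = quadF p ⊔ quadF q ⊔ quadF s := by
  rw [sup_assoc, quadF_mul_sup hq, sup_assoc]

lemma inclusionHom_sqrtIn_mul_mul {p q s : ℕ} {M N : IntermediateField ℚ ℂ} (h : M ≤ N)
    (hM : quadF (p * q * s) ≤ M) (hp : quadF p ≤ N) (hqs : quadF (q * s) ≤ N) :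
    inclusionHom h (sqrtIn hM) = sqrtIn hp * sqrtIn hqs :=
  Subtype.ext (by
    change complexSqrt (p * q * s) = complexSqrt p * complexSqrt (q * s)
    rw [mul_assoc, complexSqrt_mul])

section PrimeTriple

variable {p q s : ℕ} (hp : p.Prime) (hq : q.Prime) (hs : s.Prime) (hpq : p ≠ q) (hps : p ≠ s)
  (hqs : q ≠ s)

include hp hq hs hpq hps hqs

lemma isCyclic_twoClassGroup_triquadratic (hp8 : p % 8 = 5) (hq4 : q % 4 = 3) (hs4 : s % 4 = 3)
    (hsq : IsSquare (q : ZMod p)) (hss : IsSquare (s : ZMod p)) :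
    IsCyclic (twoClassGroup (quadF p ⊔ quadF q ⊔ quadF s : IntermediateField ℚ ℂ)) := by
  obtain ⟨hA, hB, hK⟩ := sqrtExtension_of_finrank_eq_eight (a := q) (b := s) (c := p) rfl
    (by rw [sup_comm, sup_assoc]) (finrank_quadF_sup_quadF_sup_quadF hp hq hs hpq hps hqs)
  exact isCyclic_twoClassGroup_sqrt_sqrt_sqrt hp hq hs hpq hps hqs hp8 hq4 hs4 hsq hss hA hB hK

lemma two_mul_card_twoClassGroup_biquadratic_dvd (hp4 : p % 4 = 1) (hq4 : q % 4 = 3)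
    (hs4 : s % 4 = 3) :
    2 * Nat.card (twoClassGroup (quadF p ⊔ quadF (q * s) : IntermediateField ℚ ℂ)) ∣
      Nat.card (twoClassGroup (quadF (p * q * s))) := by
  have hd := finrank_quadF_sup_quadF_sup_quadF hp hq hs hpq hps hqs
  have hLK := quadF_sup_quadF_mul_sup p s hq.ne_zero
  obtain ⟨hA, hLA, -⟩ := sqrtExtension_of_finrank_eq_eight rfl hLK hd
  obtain ⟨hB, hLB, -⟩ := sqrtExtension_of_finrank_eq_eight (sup_comm _ _) hLK hd
  obtain ⟨hk, hLk, -⟩ := sqrtExtension_of_finrank_eq_eight (quadF_mul_mul_sup hp.ne_zero q s) hLK hd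
  have := hk.isTotallyReal
  have := hLk.isTotallyReal
  obtain ⟨σ, ρ₁, ρ₂, hσ, hρ₁, hρ₂, hσρ, hσp, hσqs⟩ := exists_quadraticConj_eq_comp hA hLk hLA hLB
    (inclusionHom_sqrtIn _ _) (inclusionHom_sqrtIn _ le_rfl)
    (inclusionHom_sqrtIn_mul_mul _ le_rfl _ _) (exists_inclusionHom_eq_algebraMap _ _)
    (exists_inclusionHom_eq_algebraMap _ _)
  obtain ⟨t, ht_coe, ht⟩ := exists_integer_sqrt hLk.sq_eq
  obtain ⟨r, hr_coe, hr⟩ := exists_integer_sqrt hLA.sq_eq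
  refine two_mul_card_twoClassGroup_dvd hσ hρ₁ hρ₂
    (odd_card_classGroup_sqrt_of_one_mod_four hp hp4 hA)
    (odd_card_classGroup_sqrt_mul hq hs hqs hq4 hs4 hB) hσρ
    (ramifiedPrimes_eq_empty (hp.coprime_iff_not_dvd.2 ?_) ht hp4 (by rw [ht_coe, hσp]) hr
      (by rw [Nat.mul_mod, hq4, hs4]) (by rw [hr_coe, hσqs]))
  exact hp.not_dvd_mul (not_dvd_of_prime_of_ne hp hq hpq) (not_dvd_of_prime_of_ne hp hs hps)

lemma card_twoClassGroup_triquadratic_dvd (hp8 : p % 8 = 5) (hq8 : q % 8 = 3) (hs4 : s % 4 = 3)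
    (hQRq : IsSquare (p : ZMod q)) (hQRs : IsSquare (p : ZMod s)) :
    Nat.card (twoClassGroup (quadF p ⊔ quadF q ⊔ quadF s : IntermediateField ℚ ℂ)) ∣
      Nat.card (twoClassGroup (quadF p ⊔ quadF (q * s) : IntermediateField ℚ ℂ)) := by
  have hp4 : p % 4 = 1 := by omega
  have hq4 : q % 4 = 3 := by omega
  have hd := finrank_quadF_sup_quadF_sup_quadF hp hq hs hpq hps hqs
  have hLK := quadF_sup_quadF_mul_sup p s hq.ne_zero
  obtain ⟨hA, hFq, hKq⟩ := sqrtExtension_of_finrank_eq_eight rfl rfl hd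
  obtain ⟨-, hFs, hKs⟩ := sqrtExtension_of_finrank_eq_eight (b := s) rfl (sup_right_comm _ _ _) hd
  obtain ⟨hB, hLB, hKL⟩ := sqrtExtension_of_finrank_eq_eight (sup_comm _ _) hLK hd
  obtain ⟨hk, hLk, -⟩ := sqrtExtension_of_finrank_eq_eight (quadF_mul_mul_sup hp.ne_zero q s) hLK hd
  have := hk.isTotallyReal
  have := hLk.isTotallyReal
  have := hKL.isTotallyReal
  obtain ⟨σ, ρ₁, ρ₂, hσ, hρ₁, hρ₂, hσρ, hσq, hσs⟩ := exists_quadraticConj_eq_comp hFq hKL hKq hKs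
    (inclusionHom_sqrtIn _ _) (inclusionHom_sqrtIn _ le_sup_right)
    (inclusionHom_sqrtIn_mul _ le_sup_right _ _) (exists_inclusionHom_eq le_sup_left)
    (exists_inclusionHom_eq le_sup_left)
  obtain ⟨t, ht_coe, ht⟩ := exists_integer_sqrt hKL.sq_eq
  obtain ⟨r, hr_coe, hr⟩ := exists_integer_sqrt hKq.sq_eq
  obtain ⟨z, -, hz⟩ := exists_integer_sqrt
    (sqrtIn_sq (le_sup_left.trans le_sup_left : quadF p ≤ quadF p ⊔ quadF q ⊔ quadF s))
  obtain ⟨u, hu⟩ : ∃ u : (𝓞 (quadF p ⊔ quadF (q * s) : IntermediateField ℚ ℂ))ˣ,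
      ¬ IsNorm (inclusionHom (le_sup_left.trans_eq hLK)) σ u := by
    obtain hs8 | hs8 : s % 8 = 3 ∨ s % 8 = 7 := by omega
    · exact hB.exists_unit_not_isNorm (by rw [Nat.mul_mod, hq8, hs8]) hLB hKL hσ.apply_map hσq
        hp hp4 hq4
    · exact hk.exists_unit_not_isNorm (by rw [Nat.mul_mod, Nat.mul_mod p, hp8, hq8, hs8]) hLk hKL
        hσ.apply_map hσq hp hp4 hq4
  exact card_twoClassGroup_dvd hσ hρ₁ hρ₂
    (odd_card_classGroup_sqrt_sqrt_of_five_mod_eight hp hq hpq hp8 hq4 hQRq hA hFq)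
    (odd_card_classGroup_sqrt_sqrt_of_five_mod_eight hp hs hps hp8 hs4 hQRs hA hFs) hσρ
    (encard_ramifiedPrimes_le_two ((Nat.coprime_primes hq hs).2 hqs) hq4 hp8 hσ.involutive ht
      (by rw [ht_coe, hσq]) hr (by rw [hr_coe, hσs]) hz hd) hu

lemma card_twoClassGroup_quadF_dvd (hp4 : p % 4 = 1) (hq4 : q % 4 = 3) (hs4 : s % 4 = 3)
    (hsq : IsSquare (q : ZMod p)) (hss : IsSquare (s : ZMod p)) :
    Nat.card (twoClassGroup (quadF (p * q * s))) ∣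
      2 * Nat.card (twoClassGroup (quadF p ⊔ quadF q ⊔ quadF s : IntermediateField ℚ ℂ)) := by
  have : Fact p.Prime := ⟨hp⟩
  have : Fact q.Prime := ⟨hq⟩
  have : Fact s.Prime := ⟨hs⟩
  have hd := finrank_quadF_sup_quadF_sup_quadF hp hq hs hpq hps hqs
  have hLK := quadF_sup_quadF_mul_sup p s hq.ne_zero
  obtain ⟨hB, hLB, hKL⟩ := sqrtExtension_of_finrank_eq_eight (sup_comm _ _) hLK hd
  obtain ⟨hk, hLk, -⟩ := sqrtExtension_of_finrank_eq_eight (quadF_mul_mul_sup hp.ne_zero q s) hLK hd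
  obtain ⟨κ, -, hκ, -⟩ := hLk.exists_integral_conj
  obtain ⟨τ, -, hτ, -⟩ := hKL.exists_integral_conj
  obtain ⟨l, x, y, hl, hx, hy, hlx, hly⟩ :=
    exists_dvd_sub_sq_and_dvd_sub_sq hpq hps hqs (by omega) (by omega) (by omega)
  obtain ⟨I, hI⟩ := exists_idealGroup_idealClass_pow_ne hq hs hqs
    (not_dvd_of_prime_of_ne hp hq hpq) (not_dvd_of_prime_of_ne hp hs hps) hp4 hq4 hs4 hsq hss
    hB hLB hKL hk (g := inclusionHom (le_sup_left.trans_eq (quadF_mul_mul_sup hp.ne_zero q s)))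
    (inclusionHom_sqrtIn_mul_mul _ le_rfl _ (le_sup_right.trans_eq rfl)) hl hx hy hlx hly
  exact card_twoClassGroup_dvd_two_mul hκ hτ
    (isCyclic_twoClassGroup_sqrt_mul_mul hp hq hs hpq hps hqs hp4 hq4 hs4 hk) hI

theorem isCyclic_twoClassGroup_and_two_mul_card_eq (hp8 : p % 8 = 5) (hq8 : q % 8 = 3)
    (hs4 : s % 4 = 3) (hQRq : IsSquare (p : ZMod q)) (hQRs : IsSquare (p : ZMod s)) :
    IsCyclic (twoClassGroup (quadF p ⊔ quadF q ⊔ quadF s : IntermediateField ℚ ℂ)) ∧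
      2 * Nat.card (twoClassGroup (quadF p ⊔ quadF q ⊔ quadF s : IntermediateField ℚ ℂ)) =
        Nat.card (twoClassGroup (quadF (p * q * s))) := by
  have : Fact p.Prime := ⟨hp⟩
  have : Fact q.Prime := ⟨hq⟩
  have : Fact s.Prime := ⟨hs⟩
  have hp4 : p % 4 = 1 := by omega
  have hq4 : q % 4 = 3 := by omega
  have hsq : IsSquare (q : ZMod p) :=
    (ZMod.exists_sq_eq_prime_iff_of_mod_four_eq_one hp4 (by omega)).2 hQRq
  have hss : IsSquare (s : ZMod p) :=
    (ZMod.exists_sq_eq_prime_iff_of_mod_four_eq_one hp4 (by omega)).2 hQRs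
  refine ⟨isCyclic_twoClassGroup_triquadratic hp hq hs hpq hps hqs hp8 hq4 hs4 hsq hss,
    Nat.dvd_antisymm ?_ (card_twoClassGroup_quadF_dvd hp hq hs hpq hps hqs hp4 hq4 hs4 hsq hss)⟩
  exact (mul_dvd_mul_left 2
    (card_twoClassGroup_triquadratic_dvd hp hq hs hpq hps hqs hp8 hq8 hs4 hQRq hQRs)).trans
    (two_mul_card_twoClassGroup_biquadratic_dvd hp hq hs hpq hps hqs hp4 hq4 hs4)

end PrimeTriple

end TwoClassGroup

theorem two_class_group_of_triquadratic
    (p q s : ℕ) (hp : p.Prime) (hq : q.Prime) (hs : s.Prime)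
    (hpq : p ≠ q) (hps : p ≠ s) (hqs : q ≠ s)
    (hp8 : p % 8 = 5) (hq8 : q % 8 = 3) (hs4 : s % 4 = 3)
    (hQRq : IsSquare (p : ZMod q)) (hQRs : IsSquare (p : ZMod s)) :
    ∀ P : Sylow 2 (ClassGroup (𝓞 (triquad p q s))),
      ∀ Q : Sylow 2 (ClassGroup (𝓞 (quadF (p * q * s)))),
      IsCyclic (P : Subgroup (ClassGroup (𝓞 (triquad p q s)))) ∧
      2 * Nat.card (P : Subgroup (ClassGroup (𝓞 (triquad p q s)))) =
        Nat.card (Q : Subgroup (ClassGroup (𝓞 (quadF (p * q * s))))) := by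
  rw [TwoClassGroup.triquad_eq_sup]
  intro P Q
  rw [TwoClassGroup.sylow_eq_primaryComponent P, TwoClassGroup.sylow_eq_primaryComponent Q]
  exact TwoClassGroup.isCyclic_twoClassGroup_and_two_mul_card_eq hp hq hs hpq hps hqs hp8 hq8 hs4
    hQRq hQRs
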